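/- arXiv:1711.04649 — 2 statements merged into one kernel-verified Lean document; each statement's English description precedes it below -/
import Mathlib

section
/- Let φ be an endomorphism of ℙ¹ defined over a number field K with good reduction outside a finite set of places S containing all archimedean ones. Let R ∈ ℙ¹(K) be a tail point of φ and let n be the period of the periodic part of the orbit of R. Let P ∈ ℙ¹(K) be any periodic point of φ such that P ≠ φ^{mn}(R) for every m ≥ 0. Then δ_𝔭(P, R) = 0 for every prime 𝔭 ∉ S. -/
open NumberField IsDedekindDomain MvPolynomial
open scoped Classical nonZeroDivisors

set_option synthInstance.maxHeartbeats 1000000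
set_option maxHeartbeats 1000000

noncomputable section

/-- The projective line over `K`. -/
abbrev P1 (K : Type*) [Field K] := Projectivization K (Fin 2 → K)

variable {K : Type*} [Field K] [NumberField K]

/-- The additive `v`-adic valuation (order) of `x ∈ K`, with junk value `0` at `x = 0`,
normalized so that it is surjective onto `ℤ`. -/
def ordAt (v : HeightOneSpectrum (𝓞 K)) (x : K) : ℤ :=
  if hx : x = 0 then 0
  else - Multiplicative.toAdd (WithZero.unzero ((v.valuation K).ne_zero_iff.mpr hx))

/-- `min (v(x), v(y))` for a pair of coordinates, not both zero. -/
def minOrd (v : HeightOneSpectrum (𝓞 K)) (x y : K) : ℤ :=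
  if x = 0 then ordAt v y else if y = 0 then ordAt v x else min (ordAt v x) (ordAt v y)

/-- The `v`-adic logarithmic distance between two points of `ℙ¹(K)`:
`δ_v(P,Q) = v(x₁y₂ - x₂y₁) - min(v x₁, v y₁) - min(v x₂, v y₂)`, with value `⊤` when `P = Q`
(it is independent of the choice of homogeneous coordinates, so we compute it on the chosen
representatives). -/
def logDist (v : HeightOneSpectrum (𝓞 K)) (P Q : P1 K) : WithTop ℤ :=
  if P = Q then ⊤
  else ((ordAt v (P.rep 0 * Q.rep 1 - P.rep 1 * Q.rep 0)
        - minOrd v (P.rep 0) (P.rep 1) - minOrd v (Q.rep 0) (Q.rep 1) : ℤ) : WithTop ℤ)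

/-- An endomorphism of `ℙ¹` of degree `d` defined over `K`, given by a pair of homogeneous
forms of degree `d` with no common zero over the algebraic closure, together with the induced
self-map of `ℙ¹(K)`. -/
structure P1Map (K : Type*) [Field K] (d : ℕ) where
  toFun : P1 K → P1 K
  F : MvPolynomial (Fin 2) K
  G : MvPolynomial (Fin 2) K
  homF : F.IsHomogeneous d
  homG : G.IsHomogeneous d
  coprime : ∀ x y : AlgebraicClosure K,
    aeval ![x, y] F = 0 → aeval ![x, y] G = 0 → x = 0 ∧ y = 0
  compat : ∀ (x y : K) (hxy : ![x, y] ≠ 0)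
    (h : ![eval ![x, y] F, eval ![x, y] G] ≠ 0),
    toFun (Projectivization.mk K ![x, y] hxy) =
      Projectivization.mk K ![eval ![x, y] F, eval ![x, y] G] h

variable {d : ℕ}

/-- `φ` has good reduction at the finite place `v`: some representing pair of forms has
coefficients in the valuation ring at `v`, not all in the maximal ideal, and the reductions
of the two forms modulo `v` have no common zero in `ℙ¹` of the algebraic closure of the
residue field. -/
def GoodReductionAt (φ : P1Map K d) (v : HeightOneSpectrum (𝓞 K)) : Prop :=
  ∃ c : K, c ≠ 0 ∧
    ∃ F₀ G₀ : MvPolynomial (Fin 2) (v.valuation (K := K)).valuationSubring,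
      MvPolynomial.map ((v.valuation (K := K)).valuationSubring.subtype) F₀ = C c * φ.F ∧
      MvPolynomial.map ((v.valuation (K := K)).valuationSubring.subtype) G₀ = C c * φ.G ∧
      ((∃ m, F₀.coeff m ∉ IsLocalRing.maximalIdeal (v.valuation (K := K)).valuationSubring) ∨
        (∃ m, G₀.coeff m ∉ IsLocalRing.maximalIdeal (v.valuation (K := K)).valuationSubring)) ∧
      ∀ x y : AlgebraicClosure
          (IsLocalRing.ResidueField (v.valuation (K := K)).valuationSubring),
        eval ![x, y] (MvPolynomial.map
          ((algebraMap (IsLocalRing.ResidueField (v.valuation (K := K)).valuationSubring)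
              (AlgebraicClosure _)).comp
            (IsLocalRing.residue _)) F₀) = 0 →
        eval ![x, y] (MvPolynomial.map
          ((algebraMap (IsLocalRing.ResidueField (v.valuation (K := K)).valuationSubring)
              (AlgebraicClosure _)).comp
            (IsLocalRing.residue _)) G₀) = 0 →
        x = 0 ∧ y = 0

/-- `φ` has good reduction outside `S`, where `S` consists of all archimedean places together
with the finite places in `T`. -/
def GoodReductionOutside (φ : P1Map K d) (T : Finset (HeightOneSpectrum (𝓞 K))) : Prop :=
  ∀ v ∉ T, GoodReductionAt φ v

/-- `P` is a periodic point of `φ`. -/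
def IsPeriodicPoint (φ : P1Map K d) (P : P1 K) : Prop :=
  ∃ n, 0 < n ∧ φ.toFun^[n] P = P

/-- `P` is a preperiodic point of `φ`. -/
def IsPreperiodicPoint (φ : P1Map K d) (P : P1 K) : Prop :=
  ∃ m, IsPeriodicPoint φ (φ.toFun^[m] P)

/-- `P` is a tail point of `φ`: preperiodic but not periodic. -/
def IsTailPoint (φ : P1Map K d) (P : P1 K) : Prop :=
  IsPreperiodicPoint φ P ∧ ¬ IsPeriodicPoint φ P

/-- The set `Tail(φ,K,P)` of `K`-rational tail points of `P`: non-periodic points having `P`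
in their forward orbit. -/
def TailOf (φ : P1Map K d) (P : P1 K) : Set (P1 K) :=
  {Q | ¬ IsPeriodicPoint φ Q ∧ ∃ n, φ.toFun^[n] Q = P}

/-- `P = [a:b]` is a critical point of `φ = [F:G]`: the algebraic condition
`φ([x:y]) = φ([a:b])`, i.e. the form `G(a,b)·F(X,Y) - F(a,b)·G(X,Y)`, vanishes to order
at least `2` at `[a:b]`. -/
def IsCriticalPt (φ : P1Map K d) (P : P1 K) : Prop :=
  ∃ (a b : K) (hab : ![a, b] ≠ 0), P = Projectivization.mk K ![a, b] hab ∧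
    (C b * X 0 - C a * X 1) ^ 2 ∣
      (C (eval ![a, b] φ.G) * φ.F - C (eval ![a, b] φ.F) * φ.G)

/-- `P` belongs to a critical cycle of `φ`: it lies in the orbit of a critical periodic
point. -/
def InCriticalCycle (φ : P1Map K d) (P : P1 K) : Prop :=
  ∃ Q, IsCriticalPt φ Q ∧ IsPeriodicPoint φ Q ∧ ∃ n, φ.toFun^[n] Q = P

/-- The cardinality `|S|` of the set of places `S` consisting of all archimedean places
together with the finite places in `T`. -/
def sCard (K : Type*) [Field K] [NumberField K] (T : Finset (HeightOneSpectrum (𝓞 K))) : ℕ :=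
  T.card + Fintype.card (InfinitePlace K)

/-- `B(s) = 2^{16 s}`. -/
def Bconst (s : ℕ) : ℕ := 2 ^ (16 * s)

/-- `C(n,s) = e^{(6n)^{3n} (n s + 1 - n)}`. -/
def Cconst (n s : ℕ) : ℝ := Real.exp ((6 * n : ℝ) ^ (3 * n) * (n * s + 1 - n))

/-- `CV(d,s) = (3B(s)+13)d + 27B(s) + C(5,s) + 6C(3,s) + 32`. -/
def CVconst (d s : ℕ) : ℝ :=
  (3 * (Bconst s : ℝ) + 13) * d + 27 * (Bconst s : ℝ) + Cconst 5 s + 6 * Cconst 3 s + 32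

/-- `L₁(d,s) = (d-1)(1 + d(1 + B(s)))`. -/
def L1const (d s : ℕ) : ℕ := (d - 1) * (1 + d * (1 + Bconst s))

/-- `L₂(d,s) = max{(2(C(3,s)+2)+1)d + 1, (d-1)(1 + B(s)(B(s) + C(3,s) + 3))}`. -/
def L2const (d s : ℕ) : ℝ :=
  max ((2 * (Cconst 3 s + 2) + 1) * d + 1)
    (((d : ℝ) - 1) * (1 + (Bconst s : ℝ) * ((Bconst s : ℝ) + Cconst 3 s + 3)))

/-- `L₃(d,s) = ((1 + 3B(s))B(s) + 1)(d-1)`. -/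
def L3const (d s : ℕ) : ℕ := ((1 + 3 * Bconst s) * Bconst s + 1) * (d - 1)

/-- `L₄(d,s) = (C(3,s) + 3)(d-1)`. -/
def L4const (d s : ℕ) : ℝ := (Cconst 3 s + 3) * ((d : ℝ) - 1)

end

/-!
Some iterate `ψ` of `φ`, of order a multiple of `n`, fixes both `P` and `Q = ψ(R)`, and
`P ≠ Q ≠ R`. Over the local ring at `𝔭`, take primitive coordinates `p`, `r` of `P`, `R` and a pair
of forms `Ψ` for `ψ`; by good reduction `q = Ψ(r)` are primitive coordinates of `Q`. The form
`X ∧ Ψ(X)`, whose zeros are the fixed points of `ψ`, vanishes at `p` and `q`, so the product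
`(p ∧ X) (q ∧ X)` of their linear forms divides it over the local ring. At `X = r` this says that
`(p ∧ r) (q ∧ r)` divides `r ∧ q ≠ 0`, so `p ∧ r` is a unit.
-/

section Cross

variable {A B : Type*} [CommRing A] [CommRing B]

/-- The determinant of a pair of homogeneous coordinate vectors: the form in the definition of the
logarithmic distance. Applied to `C ∘ p` and the vector `X` of variables it is the linear form
defining the point `p` of the projective line. -/
def cross (x y : Fin 2 → A) : A := x 0 * y 1 - x 1 * y 0

theorem map_cross (g : A →+* B) (x y : Fin 2 → A) : g (cross x y) = cross (g ∘ x) (g ∘ y) := by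
  simp only [cross, map_sub, map_mul, Function.comp_apply]

theorem cross_smul_smul (s t : A) (x y : Fin 2 → A) :
    cross (s • x) (t • y) = s * t * cross x y := by
  simp only [cross, Pi.smul_apply, smul_eq_mul]
  ring

theorem eval_cross (z : Fin 2 → A) (x y : Fin 2 → MvPolynomial (Fin 2) A) :
    eval z (cross x y) = cross (fun i => eval z (x i)) (fun i => eval z (y i)) :=
  map_cross (eval z) x y

theorem eval_cross_C_X (z p : Fin 2 → A) : eval z (cross (C ∘ p) X) = cross p z := by
  simp only [eval_cross, Function.comp_apply, eval_C, eval_X]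

theorem isHomogeneous_cross_X {Φ : Fin 2 → MvPolynomial (Fin 2) A} {D : ℕ}
    (hΦ : ∀ i, (Φ i).IsHomogeneous D) : (cross Φ X).IsHomogeneous (D + 1) :=
  ((hΦ 0).mul (isHomogeneous_X A 1)).sub ((hΦ 1).mul (isHomogeneous_X A 0))

end Cross

section Line

variable {σ A : Type*} [CommRing A]

theorem aeval_smul_of_isHomogeneous {B : Type*} [CommRing B] [Algebra A B]
    {H : MvPolynomial σ A} {n : ℕ} (hH : H.IsHomogeneous n) (t : B) (x : σ → B) :
    aeval (t • x) H = t ^ n * aeval x H := by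
  simp only [aeval_def, eval₂_eq, Finset.mul_sum]
  refine Finset.sum_congr rfl fun d hd => ?_
  have hdeg : ∑ i ∈ d.support, d i = n := (hH.degree_eq_sum_deg_support hd).symm
  simp only [Pi.smul_apply, smul_eq_mul, mul_pow, Finset.prod_mul_distrib,
    Finset.prod_pow_eq_pow_sum, hdeg]
  ring

/-- The restriction of a polynomial to the line through the origin spanned by `q`, as a polynomial
in the parameter of that line. -/
noncomputable def restrictLine (q : σ → A) : MvPolynomial σ A →ₐ[A] Polynomial A :=
  aeval ((Polynomial.X : Polynomial A) • (Polynomial.C ∘ q))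

theorem restrictLine_of_isHomogeneous {H : MvPolynomial σ A} {n : ℕ} (hH : H.IsHomogeneous n)
    (q : σ → A) : restrictLine q H = Polynomial.X ^ n * Polynomial.C (eval q H) := by
  have hC : aeval (Polynomial.C ∘ q) H = Polynomial.C (eval q H) :=
    aeval_algebraMap_apply (Polynomial A) q H
  rw [restrictLine, aeval_smul_of_isHomogeneous hH, hC]

theorem cross_C_X_dvd_of_restrictLine_eq_zero {q : Fin 2 → A} (hq : IsCoprime (q 0) (q 1))
    {H : MvPolynomial (Fin 2) A} (hH : restrictLine q H = 0) : cross (C ∘ q) X ∣ H := by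
  obtain ⟨a, b, hab⟩ := hq
  have hab' : (C a * C (q 0) + C b * C (q 1) : MvPolynomial (Fin 2) A) = 1 := by
    rw [← C_mul, ← C_mul, ← C_add, hab, C_1]
  set I := Ideal.span {cross (C ∘ q) (X : Fin 2 → MvPolynomial (Fin 2) A)}
  -- Modulo the linear form of `q`, the generic point `X` is the multiple `s • q` of `q`.
  set s : MvPolynomial (Fin 2) A ⧸ I := Ideal.Quotient.mk I (C a * X 0 + C b * X 1)
  have hX : ∀ i, Ideal.Quotient.mk I (X i) = s * Ideal.Quotient.mk I (C (q i)) :=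
    Fin.forall_fin_two.2
      ⟨Ideal.Quotient.eq.2 (Ideal.mem_span_singleton.2 ⟨-C b, by
        simp only [cross, Function.comp_apply]
        linear_combination (-X 0) * hab'⟩),
      Ideal.Quotient.eq.2 (Ideal.mem_span_singleton.2 ⟨C a, by
        simp only [cross, Function.comp_apply]
        linear_combination (-X 1) * hab'⟩)⟩
  have hcomp : Ideal.Quotient.mkₐ A I = (Polynomial.aeval s).comp (restrictLine q) := by
    refine algHom_ext fun i => ?_
    simp only [restrictLine, AlgHom.comp_apply, aeval_X, Pi.smul_apply, smul_eq_mul, map_mul,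
      Function.comp_apply, Polynomial.aeval_X, Polynomial.aeval_C]
    exact hX i
  rw [← Ideal.mem_span_singleton, ← Ideal.Quotient.eq_zero_iff_mem]
  calc Ideal.Quotient.mk I H = Polynomial.aeval s (restrictLine q H) := DFunLike.congr_fun hcomp H
    _ = 0 := by rw [hH, map_zero]

theorem cross_mul_cross_dvd_of_isHomogeneous [IsDomain A] {H : MvPolynomial (Fin 2) A} {n : ℕ}
    (hH : H.IsHomogeneous n) {p q : Fin 2 → A} (hp : IsCoprime (p 0) (p 1))
    (hq : IsCoprime (q 0) (q 1)) (hpq : cross p q ≠ 0) (hHp : eval p H = 0)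
    (hHq : eval q H = 0) : cross (C ∘ p) X * cross (C ∘ q) X ∣ H := by
  have hline {x : Fin 2 → A} (hx : eval x H = 0) : restrictLine x H = 0 := by
    rw [restrictLine_of_isHomogeneous hH, hx, Polynomial.C_0, mul_zero]
  obtain ⟨M, rfl⟩ := cross_C_X_dvd_of_restrictLine_eq_zero hp (hline hHp)
  have hlin : restrictLine q (cross (C ∘ p) X) ≠ 0 := by
    rw [restrictLine_of_isHomogeneous
      (isHomogeneous_cross_X (Φ := C ∘ p) fun i => isHomogeneous_C _ (p i)), eval_cross_C_X]
    exact mul_ne_zero (pow_ne_zero _ Polynomial.X_ne_zero) (Polynomial.C_ne_zero.2 hpq)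
  have hM : restrictLine q M = 0 :=
    (mul_eq_zero.1 ((map_mul _ _ _).symm.trans (hline hHq))).resolve_left hlin
  exact mul_dvd_mul_left _ (cross_C_X_dvd_of_restrictLine_eq_zero hq hM)

theorem isUnit_cross_of_fixed [IsDomain A] {Φ : Fin 2 → MvPolynomial (Fin 2) A} {D : ℕ}
    (hΦ : ∀ i, (Φ i).IsHomogeneous D) {p q r : Fin 2 → A} (hp : IsCoprime (p 0) (p 1))
    (hq : IsCoprime (q 0) (q 1)) (hr : (fun i => eval r (Φ i)) = q)
    (hfp : cross (fun i => eval p (Φ i)) p = 0) (hfq : cross (fun i => eval q (Φ i)) q = 0)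
    (hpq : cross p q ≠ 0) (hqr : cross q r ≠ 0) : IsUnit (cross p r) := by
  have heval (z : Fin 2 → A) : eval z (cross Φ X) = cross (fun i => eval z (Φ i)) z := by
    simp only [eval_cross, eval_X]
  obtain ⟨N, hN⟩ := cross_mul_cross_dvd_of_isHomogeneous (isHomogeneous_cross_X hΦ) hp hq hpq
    ((heval p).trans hfp) ((heval q).trans hfq)
  have hNr : cross q r = cross p r * cross q r * eval r N := by
    simpa only [heval, hr, map_mul, eval_cross_C_X] using congrArg (eval r) hN
  refine IsUnit.of_mul_eq_one (eval r N) (mul_left_cancel₀ hqr ?_)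
  linear_combination -hNr

end Line

section Coordinates

variable {A K : Type*} [CommRing A] [Field K]

theorem mk_eq_mk_iff_cross_eq_zero {x y : Fin 2 → K} (hx : x ≠ 0) (hy : y ≠ 0) :
    Projectivization.mk K x hx = Projectivization.mk K y hy ↔ cross x y = 0 := by
  have hdet : -cross x y = (Matrix.of ![y, x]).det := by
    rw [Matrix.det_fin_two]
    simp only [cross, Matrix.of_apply, Matrix.cons_val_zero, Matrix.cons_val_one]
    ring
  rw [Projectivization.mk_eq_mk_iff', ← neg_eq_zero, hdet, ← not_iff_not, ← ne_eq (Matrix.det _),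
    ← isUnit_iff_ne_zero, ← Matrix.isUnit_iff_isUnit_det,
    ← Matrix.linearIndependent_rows_iff_isUnit, not_exists]
  exact (LinearIndependent.pair_iff' hy).symm

variable [Algebra A K]

/-- `x` is a vector of homogeneous coordinates of `P` that lie in `A` and generate the unit
ideal. -/
def HasPrimitiveCoords (x : Fin 2 → A) (P : P1 K) : Prop :=
  IsCoprime (x 0) (x 1) ∧ ∃ hx : algebraMap A K ∘ x ≠ 0, Projectivization.mk K _ hx = P

theorem algebraMap_comp_ne_zero [FaithfulSMul A K] {x : Fin 2 → A}
    (hx : IsCoprime (x 0) (x 1)) : algebraMap A K ∘ x ≠ 0 := by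
  intro h
  have : Nontrivial A := (algebraMap A K).domain_nontrivial
  have hzero (i : Fin 2) : x i = 0 :=
    (FaithfulSMul.algebraMap_eq_zero_iff A K).1 (congrFun h i)
  exact not_isCoprime_zero_zero (hzero 0 ▸ hzero 1 ▸ hx)

theorem HasPrimitiveCoords.eq_iff_cross_eq_zero [FaithfulSMul A K] {x y : Fin 2 → A} {P Q : P1 K}
    (hx : HasPrimitiveCoords x P) (hy : HasPrimitiveCoords y Q) : P = Q ↔ cross x y = 0 := by
  obtain ⟨-, hx, rfl⟩ := hx
  obtain ⟨-, hy, rfl⟩ := hy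
  rw [mk_eq_mk_iff_cross_eq_zero, ← map_cross, FaithfulSMul.algebraMap_eq_zero_iff]

theorem HasPrimitiveCoords.exists_smul_eq_rep {x : Fin 2 → A} {P : P1 K}
    (hx : HasPrimitiveCoords x P) : ∃ t : K, t ≠ 0 ∧ t • (algebraMap A K ∘ x) = P.rep := by
  obtain ⟨-, hx, rfl⟩ := hx
  obtain ⟨t, ht⟩ := Projectivization.exists_smul_eq_mk_rep K _ hx
  exact ⟨t, t.ne_zero, ht⟩

theorem exists_eq_smul_isCoprime [IsDomain A] [IsBezout A] {x : Fin 2 → A} (hx : x ≠ 0) :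
    ∃ g : A, g ≠ 0 ∧ ∃ y : Fin 2 → A, x = g • y ∧ IsCoprime (y 0) (y 1) := by
  obtain ⟨y₀, h₀⟩ := IsBezout.gcd_dvd_left (x 0) (x 1)
  obtain ⟨y₁, h₁⟩ := IsBezout.gcd_dvd_right (x 0) (x 1)
  obtain ⟨a, b, hab⟩ := IsBezout.gcd_eq_sum (x 0) (x 1)
  set g := IsBezout.gcd (x 0) (x 1)
  have hxg : x = g • ![y₀, y₁] := funext (Fin.forall_fin_two.2 ⟨h₀, h₁⟩)
  have hg : g ≠ 0 := by
    intro h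
    exact hx (by rw [hxg, h, zero_smul])
  refine ⟨g, hg, _, hxg, a, b, mul_left_cancel₀ hg ?_⟩
  change g * (a * y₀ + b * y₁) = g * 1
  linear_combination hab - a * h₀ - b * h₁

theorem exists_hasPrimitiveCoords (A : Type*) [CommRing A] [IsBezout A] [Algebra A K]
    [IsFractionRing A K] (P : P1 K) : ∃ x : Fin 2 → A, HasPrimitiveCoords x P := by
  have : IsDomain A := (IsFractionRing.injective A K).isDomain
  induction P using Projectivization.ind with
  | h w hw =>
    obtain ⟨⟨b, hb⟩, hint⟩ := IsLocalization.exist_integer_multiples_of_finite A⁰ w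
    choose z hz using hint
    have hbK : algebraMap A K b ≠ 0 := IsFractionRing.to_map_ne_zero_of_mem_nonZeroDivisors hb
    have hzw : algebraMap A K ∘ z = algebraMap A K b • w := by
      ext i
      rw [Function.comp_apply, hz, Algebra.smul_def, Pi.smul_apply, smul_eq_mul]
    have hz0 : z ≠ 0 := by
      rintro rfl
      refine smul_ne_zero hbK hw (hzw.symm.trans ?_)
      ext i
      exact map_zero _
    obtain ⟨g, hg, y, rfl, hy⟩ := exists_eq_smul_isCoprime hz0
    refine ⟨y, hy, algebraMap_comp_ne_zero hy, ?_⟩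
    have hgK : algebraMap A K g ≠ 0 := (FaithfulSMul.algebraMap_eq_zero_iff A K).not.2 hg
    have hgy : algebraMap A K ∘ (g • y) = algebraMap A K g • (algebraMap A K ∘ y) := by
      ext i
      exact map_mul _ _ _
    rw [Projectivization.mk_eq_mk_iff']
    refine ⟨(algebraMap A K g)⁻¹ * algebraMap A K b, ?_⟩
    rw [mul_smul, ← hzw, hgy, inv_smul_smul₀ hgK]

end Coordinates

theorem exists_isPeriodicPt_mul_iterate {α : Type*} {f : α → α} {m n : ℕ} {P R : α} (hn : 0 < n)
    (hR : Function.IsPeriodicPt f n (f^[m] R)) (hP : P ∈ Function.periodicPts f) :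
    ∃ k > 0, Function.IsPeriodicPt f (k * n) P ∧
      Function.IsPeriodicPt f (k * n) (f^[k * n] R) := by
  obtain ⟨p, hp, hP⟩ := hP
  have hm : m ≤ (m + 1) * p * n := by nlinarith [Nat.mul_pos hp hn]
  refine ⟨(m + 1) * p, by positivity, hP.trans_dvd ⟨(m + 1) * n, by ring⟩, ?_⟩
  have h := (hR.const_mul ((m + 1) * p)).apply_iterate ((m + 1) * p * n - m)
  rwa [← Function.iterate_add_apply, Nat.sub_add_cancel hm] at h

section GoodModel

variable {A K : Type*} [CommRing A] [Field K] [Algebra A K]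

/-- The pair `Φ` of binary forms of degree `D` over `A` is a model with good reduction of the
self-map `f` of the projective line. Instead of asking for a unit resultant, we ask what it is
used for: values of `Φ` at primitive coordinates are primitive. -/
structure IsGoodModel (f : P1 K → P1 K) (Φ : Fin 2 → MvPolynomial (Fin 2) A) (D : ℕ) : Prop where
  isHomogeneous : ∀ i, (Φ i).IsHomogeneous D
  hasPrimitiveCoords : ∀ {x : Fin 2 → A} {P : P1 K}, HasPrimitiveCoords x P →
    HasPrimitiveCoords (fun i => eval x (Φ i)) (f P)

theorem isGoodModel_id : IsGoodModel (A := A) (id : P1 K → P1 K) X 1 where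
  isHomogeneous := isHomogeneous_X A
  hasPrimitiveCoords hx := by
    simp only [eval_X]
    exact hx

theorem IsGoodModel.comp {f g : P1 K → P1 K} {Φ Ψ : Fin 2 → MvPolynomial (Fin 2) A} {D E : ℕ}
    (hf : IsGoodModel f Φ D) (hg : IsGoodModel g Ψ E) :
    IsGoodModel (f ∘ g) (fun i => aeval Ψ (Φ i)) (E * D) where
  isHomogeneous i := (hf.isHomogeneous i).aeval Ψ hg.isHomogeneous
  hasPrimitiveCoords {x P} hx := by
    have heval (i : Fin 2) : eval x (aeval Ψ (Φ i)) = eval (fun j => eval x (Ψ j)) (Φ i) := by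
      simp only [← coe_aeval_eq_eval, RingHom.coe_coe, aeval_eq_bind₁, aeval_bind₁]
    simpa only [heval, Function.comp_apply] using hf.hasPrimitiveCoords (hg.hasPrimitiveCoords hx)

theorem IsGoodModel.exists_iterate {f : P1 K → P1 K} {Φ : Fin 2 → MvPolynomial (Fin 2) A} {D : ℕ}
    (hf : IsGoodModel f Φ D) (N : ℕ) :
    ∃ (Ψ : Fin 2 → MvPolynomial (Fin 2) A) (E : ℕ), IsGoodModel f^[N] Ψ E := by
  induction N with
  | zero => exact ⟨X, 1, isGoodModel_id⟩
  | succ N ih =>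
    obtain ⟨Ψ, E, hΨ⟩ := ih
    exact ⟨_, _, hΨ.comp hf⟩

theorem IsGoodModel.isUnit_cross_of_isFixedPt [FaithfulSMul A K] {f : P1 K → P1 K}
    {Φ : Fin 2 → MvPolynomial (Fin 2) A} {D : ℕ} (hf : IsGoodModel f Φ D) {P R : P1 K}
    (hP : Function.IsFixedPt f P) (hfR : Function.IsFixedPt f (f R)) (hPR : P ≠ f R)
    (hR : ¬ Function.IsFixedPt f R) {x y : Fin 2 → A} (hx : HasPrimitiveCoords x P)
    (hy : HasPrimitiveCoords y R) : IsUnit (cross x y) := by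
  have : IsDomain A := (FaithfulSMul.algebraMap_injective A K).isDomain
  have hfy := hf.hasPrimitiveCoords hy
  exact isUnit_cross_of_fixed hf.isHomogeneous hx.1 hfy.1 rfl
    (((hf.hasPrimitiveCoords hx).eq_iff_cross_eq_zero hx).1 hP)
    (((hf.hasPrimitiveCoords hfy).eq_iff_cross_eq_zero hfy).1 hfR)
    (mt (hx.eq_iff_cross_eq_zero hfy).2 hPR) (mt (hfy.eq_iff_cross_eq_zero hy).2 hR)

theorem logDist_periodic_tail_eq_zero_general [FaithfulSMul A K] {f : P1 K → P1 K}
    {Φ : Fin 2 → MvPolynomial (Fin 2) A} {D : ℕ} (hf : IsGoodModel f Φ D)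
    {R : P1 K} (hR : R ∉ Function.periodicPts f)
    {m n : ℕ} (hn : 0 < n) (hm : Function.IsPeriodicPt f n (f^[m] R))
    {P : P1 K} (hP : P ∈ Function.periodicPts f) (hPR : ∀ k : ℕ, f^[k * n] R ≠ P)
    {x y : Fin 2 → A} (hx : HasPrimitiveCoords x P) (hy : HasPrimitiveCoords y R) :
    IsUnit (cross x y) := by
  obtain ⟨k, hk, hkP, hkR⟩ := exists_isPeriodicPt_mul_iterate hn hm hP
  obtain ⟨Ψ, E, hΨ⟩ := hf.exists_iterate (k * n)
  exact hΨ.isUnit_cross_of_isFixedPt hkP hkR (hPR k).symm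
    (fun h => hR ⟨k * n, Nat.mul_pos hk hn, h⟩) hx hy

end GoodModel

section GoodReduction

theorem isCoprime_eval_of_isLocalHom {A L : Type*} [CommRing A] [Field L] (ρ : A →+* L)
    [IsLocalHom ρ] {F G : MvPolynomial (Fin 2) A}
    (hred : ∀ a b : L, eval ![a, b] (map ρ F) = 0 → eval ![a, b] (map ρ G) = 0 → a = 0 ∧ b = 0)
    {x : Fin 2 → A} (hx : IsCoprime (x 0) (x 1)) : IsCoprime (eval x F) (eval x G) := by
  by_contra hFG
  have hF : ¬ IsUnit (eval x F) := fun h =>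
    hFG (isCoprime_one_left.of_isCoprime_of_dvd_left (isUnit_iff_dvd_one.1 h))
  have hG : ¬ IsUnit (eval x G) := fun h =>
    hFG (isCoprime_one_right.of_isCoprime_of_dvd_right (isUnit_iff_dvd_one.1 h))
  have hρx : ![ρ (x 0), ρ (x 1)] = ρ ∘ x := funext (Fin.forall_fin_two.2 ⟨rfl, rfl⟩)
  have heval {H : MvPolynomial (Fin 2) A} (hH : ¬ IsUnit (eval x H)) :
      eval ![ρ (x 0), ρ (x 1)] (map ρ H) = 0 := by
    rw [hρx, eval_map, ← eval₂_comp]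
    by_contra h
    exact hH (isUnit_of_map_unit ρ _ (isUnit_iff_ne_zero.2 h))
  obtain ⟨h₀, h₁⟩ := hred _ _ (heval hF) (heval hG)
  have hρ := hx.map ρ
  rw [h₀, h₁] at hρ
  exact not_isCoprime_zero_zero hρ

variable {K : Type*} [Field K]

theorem isHomogeneous_of_map_eq_C_mul {A σ : Type*} [CommRing A] {g : A →+* K}
    (hg : Function.Injective g) {F₀ : MvPolynomial σ A} {F : MvPolynomial σ K} {c : K} {n : ℕ}
    (hF : F.IsHomogeneous n) (hF₀ : map g F₀ = C c * F) : F₀.IsHomogeneous n := by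
  refine IsHomogeneous.of_map hg ?_
  rw [hF₀]
  exact hF.C_mul c

theorem map_eval_of_map_eq_C_mul {A σ : Type*} [CommRing A] {g : A →+* K}
    {F₀ : MvPolynomial σ A} {F : MvPolynomial σ K} {c : K}
    (hF₀ : map g F₀ = C c * F) (x : σ → A) : g (eval x F₀) = c * eval (g ∘ x) F := by
  have h := (eval₂_comp g x F₀).symm
  rwa [← eval_map, hF₀, map_mul, eval_C, eq_comm] at h

theorem P1Map.mk_eq_toFun_mk {d : ℕ} (φ : P1Map K d) {w u : Fin 2 → K} (hw : w ≠ 0)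
    (hu : u ≠ 0) {c : K} (h₀ : u 0 = c * eval w φ.F) (h₁ : u 1 = c * eval w φ.G) :
    Projectivization.mk K u hu = φ.toFun (Projectivization.mk K w hw) := by
  obtain ⟨a, b, rfl⟩ : ∃ a b, w = ![a, b] :=
    ⟨w 0, w 1, funext (Fin.forall_fin_two.2 ⟨rfl, rfl⟩)⟩
  have hcu : u = c • ![eval ![a, b] φ.F, eval ![a, b] φ.G] :=
    funext (Fin.forall_fin_two.2 ⟨h₀, h₁⟩)
  have hFG : ![eval ![a, b] φ.F, eval ![a, b] φ.G] ≠ 0 := by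
    intro h
    exact hu (by rw [hcu, h, smul_zero])
  rw [φ.compat a b hw hFG, Projectivization.mk_eq_mk_iff']
  exact ⟨c, hcu.symm⟩

variable [NumberField K] {d : ℕ}

theorem GoodReductionAt.exists_isGoodModel {φ : P1Map K d} {v : HeightOneSpectrum (𝓞 K)}
    (h : GoodReductionAt φ v) :
    ∃ Φ : Fin 2 → MvPolynomial (Fin 2) (v.valuation K).valuationSubring,
      IsGoodModel φ.toFun Φ d := by
  obtain ⟨c, -, F₀, G₀, hF, hG, -, hred⟩ := h
  have hinj : Function.Injective (v.valuation K).valuationSubring.subtype := Subtype.val_injective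
  refine ⟨![F₀, G₀], Fin.forall_fin_two.2 ⟨isHomogeneous_of_map_eq_C_mul hinj φ.homF hF,
    isHomogeneous_of_map_eq_C_mul hinj φ.homG hG⟩, ?_⟩
  rintro x _ ⟨hx, hx0, rfl⟩
  have hcop : IsCoprime (eval x F₀) (eval x G₀) := isCoprime_eval_of_isLocalHom _ hred hx
  exact ⟨hcop, algebraMap_comp_ne_zero hcop, φ.mk_eq_toFun_mk hx0 _
    (map_eval_of_map_eq_C_mul hF x) (map_eval_of_map_eq_C_mul hG x)⟩

end GoodReduction

section LogDist

variable {K : Type*} [Field K] [NumberField K] {v : HeightOneSpectrum (𝓞 K)}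

theorem ordAt_eq_neg_log (x : K) : ordAt v x = -WithZero.log (v.valuation K x) := by
  by_cases hx : x = 0
  · simp only [ordAt, hx, dif_pos, map_zero, WithZero.log_zero, neg_zero]
  · simp only [ordAt, hx, dif_neg, not_false_eq_true, WithZero.toAdd_unzero_eq_log]

theorem ordAt_mul {x y : K} (hx : x ≠ 0) (hy : y ≠ 0) :
    ordAt v (x * y) = ordAt v x + ordAt v y := by
  rw [ordAt_eq_neg_log, ordAt_eq_neg_log, ordAt_eq_neg_log, map_mul,
    WithZero.log_mul ((Valuation.ne_zero_iff _).2 hx) ((Valuation.ne_zero_iff _).2 hy), neg_add]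

theorem ordAt_eq_zero_of_isUnit {a : (v.valuation K).valuationSubring} (ha : IsUnit a) :
    ordAt v (a : K) = 0 := by
  have hva : v.valuation K a = 1 := (Valuation.valuationSubring.integers _).one_of_isUnit ha
  rw [ordAt_eq_neg_log, hva, WithZero.log_one, neg_zero]

theorem minOrd_eq_neg_log_max (x y : K) :
    minOrd v x y = -WithZero.log (max (v.valuation K x) (v.valuation K y)) := by
  by_cases hx : x = 0
  · rw [minOrd, if_pos hx, ordAt_eq_neg_log, hx, map_zero, max_eq_right zero_le]
  by_cases hy : y = 0
  · rw [minOrd, if_neg hx, if_pos hy, ordAt_eq_neg_log, hy, map_zero, max_eq_left zero_le]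
  have hvx := (Valuation.ne_zero_iff (v.valuation K)).2 hx
  have hvy := (Valuation.ne_zero_iff (v.valuation K)).2 hy
  rw [minOrd, if_neg hx, if_neg hy, ordAt_eq_neg_log, ordAt_eq_neg_log, min_neg_neg]
  rcases le_total (v.valuation K x) (v.valuation K y) with h | h
  · rw [max_eq_right h, max_eq_right ((WithZero.log_le_log hvx hvy).2 h)]
  · rw [max_eq_left h, max_eq_left ((WithZero.log_le_log hvy hvx).2 h)]

theorem max_valuation_eq_one_of_isCoprime {F Γ₀ : Type*} [Field F]
    [LinearOrderedCommGroupWithZero Γ₀] {w : Valuation F Γ₀} {x y : w.valuationSubring}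
    (hxy : IsCoprime x y) : max (w x) (w y) = 1 := by
  obtain ⟨a, b, hab⟩ := hxy
  have habF : (a * x + b * y : F) = 1 := congrArg Subtype.val hab
  refine le_antisymm (max_le x.2 y.2) ?_
  calc 1 = w (a * x + b * y) := by rw [habF, map_one]
    _ ≤ max (w (a * x)) (w (b * y)) := w.map_add _ _
    _ = max (w a * w x) (w b * w y) := by rw [map_mul, map_mul]
    _ ≤ max (w x) (w y) := max_le_max (mul_le_of_le_one_left' a.2) (mul_le_of_le_one_left' b.2)

theorem minOrd_smul_of_isCoprime {x : Fin 2 → (v.valuation K).valuationSubring}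
    (hx : IsCoprime (x 0) (x 1)) (t : K) : minOrd v (t * x 0) (t * x 1) = ordAt v t := by
  rw [minOrd_eq_neg_log_max, map_mul, map_mul, ← mul_max,
    max_valuation_eq_one_of_isCoprime hx, mul_one, ordAt_eq_neg_log]

theorem logDist_eq_ordAt_cross {x y : Fin 2 → (v.valuation K).valuationSubring} {P Q : P1 K}
    (hx : HasPrimitiveCoords x P) (hy : HasPrimitiveCoords y Q) (hPQ : P ≠ Q) :
    logDist v P Q = ordAt v (↑(cross x y) : K) := by
  have hxy : (↑(cross x y) : K) ≠ 0 :=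
    fun h => hPQ ((hx.eq_iff_cross_eq_zero hy).2 (Subtype.ext h))
  obtain ⟨s, hs, hsP⟩ := hx.exists_smul_eq_rep
  obtain ⟨t, ht, htQ⟩ := hy.exists_smul_eq_rep
  have hcross : cross P.rep Q.rep = s * t * (↑(cross x y) : K) := by
    rw [← hsP, ← htQ, cross_smul_smul, ← map_cross]
    rfl
  have hord : ordAt v (cross P.rep Q.rep) = ordAt v s + ordAt v t + ordAt v (↑(cross x y) : K) := by
    rw [hcross, ordAt_mul (mul_ne_zero hs ht) hxy, ordAt_mul hs ht]
  have hP : minOrd v (P.rep 0) (P.rep 1) = ordAt v s := by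
    rw [← hsP]
    exact minOrd_smul_of_isCoprime hx.1 s
  have hQ : minOrd v (Q.rep 0) (Q.rep 1) = ordAt v t := by
    rw [← htQ]
    exact minOrd_smul_of_isCoprime hy.1 t
  rw [logDist, if_neg hPQ, ← cross, hord, hP, hQ]
  congr 1
  ring

theorem logDist_eq_zero_of_forall_isUnit_cross {P Q : P1 K}
    (h : ∀ {x y : Fin 2 → (v.valuation K).valuationSubring}, HasPrimitiveCoords x P →
      HasPrimitiveCoords y Q → IsUnit (cross x y)) : logDist v P Q = 0 := by
  obtain ⟨x, hx⟩ := exists_hasPrimitiveCoords (v.valuation K).valuationSubring P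
  obtain ⟨y, hy⟩ := exists_hasPrimitiveCoords (v.valuation K).valuationSubring Q
  have hPQ : P ≠ Q := mt (hx.eq_iff_cross_eq_zero hy).1 (h hx hy).ne_zero
  rw [logDist_eq_ordAt_cross hx hy hPQ, ordAt_eq_zero_of_isUnit (h hx hy)]
  rfl

end LogDist

/-- **Proposition (tail points are coprime to periodic points).** Let `R` be a `K`-rational
tail point of `φ` and `n` the period of the periodic part of the orbit of `R`. If `P` is any
`K`-rational periodic point which is not of the form `φ^{mn}(R)`, then `δ_𝔭(P,R) = 0` for
all `𝔭 ∉ S`. -/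
theorem logDist_periodic_tail_eq_zero
    {K : Type*} [Field K] [NumberField K]
    (T : Finset (HeightOneSpectrum (𝓞 K))) {d : ℕ}
    (φ : P1Map K d) (hgr : GoodReductionOutside φ T)
    (R : P1 K) (hR : IsTailPoint φ R)
    (m : ℕ) (hm : IsPeriodicPoint φ (φ.toFun^[m] R))
    (n : ℕ) (hn : n = Function.minimalPeriod φ.toFun (φ.toFun^[m] R))
    (P : P1 K) (hP : IsPeriodicPoint φ P)
    (hPR : ∀ k : ℕ, φ.toFun^[k * n] R ≠ P) :
    ∀ v ∉ T, logDist v P R = 0 := by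
  intro v hv
  obtain ⟨Φ, hΦ⟩ := (hgr v hv).exists_isGoodModel
  have hnpos : 0 < n := hn ▸ Function.minimalPeriod_pos_of_mem_periodicPts hm
  have hperiod : Function.IsPeriodicPt φ.toFun n (φ.toFun^[m] R) :=
    hn ▸ Function.isPeriodicPt_minimalPeriod _ _
  exact logDist_eq_zero_of_forall_isUnit_cross
    (logDist_periodic_tail_eq_zero_general hΦ hR.2 hnpos hperiod hP hPR)
end

section
/- Let K be a number field and S a finite set of places of K containing all the archimedean ones. Let φ be an endomorphism of ℙ¹ defined over K of degree d ≥ 2 with good reduction outside S, and let P ∈ ℙ¹(K) be a fixed point of φ. Then |Tail(φ,K,P)| ≤ (d−1)(1 + d(1 + B(|S|))), where B(s) = 2^{16s}. -/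
open NumberField IsDedekindDomain MvPolynomial
open scoped Classical nonZeroDivisors

set_option synthInstance.maxHeartbeats 1000000
set_option maxHeartbeats 1000000

/-!
Outside `S` the map `φ` has good reduction, so it does not increase the `v`-adic chordal distance
on `ℙ¹(K)`. If `P` is fixed and the orbit of `R` passes through `Q` on its way to `P`, the
ultrametric inequality then forces `dist R Q = dist R P`. Take `P ← Q₁ ← Q₂` with `Q₁ ≠ P`, and let
`R` run over the points whose orbit reaches `Q₂`: the absolute values outside `S` of the cross-ratio
`λ` of `P, Q₁, Q₂, R` and of `1 - λ` do not depend on `R`. Padé approximants to `(1 - x) ^ k` bound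
the number of such `λ` by `B(|S|)`, in the manner of the theorem of Beukers and Schlickewei on the
unit equation. The tail of `P` is thus a tree with at most `d - 1` branches at `P`, at most `d`
branches at each `Q₁`, and at most `1 + B(|S|)` points above and including each `Q₂`.
-/

open scoped Polynomial

/-! ### Padé approximants to `(1 - x) ^ (2 * N + 1)` -/

lemma integral_pow_mul_one_sub_pow (a b : ℕ) :
    ∫ s in (0 : ℝ)..1, s ^ a * (1 - s) ^ b = a.factorial * b.factorial / (a + b + 1).factorial := by
  have hbeta : Complex.betaIntegral (a + 1) (b + 1) =
      ((∫ s in (0 : ℝ)..1, s ^ a * (1 - s) ^ b : ℝ) : ℂ) := by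
    simp only [Complex.betaIntegral, add_sub_cancel_right, Complex.cpow_natCast]
    rw [← intervalIntegral.integral_ofReal]
    exact intervalIntegral.integral_congr fun s _ => by push_cast; rfl
  have hGamma := Complex.Gamma_mul_Gamma_eq_betaIntegral (s := a + 1) (t := b + 1)
    (by rw [Complex.add_re, Complex.natCast_re, Complex.one_re]; positivity)
    (by rw [Complex.add_re, Complex.natCast_re, Complex.one_re]; positivity)
  rw [hbeta, show (a + 1 + (b + 1) : ℂ) = ((a + b + 1 : ℕ) : ℂ) + 1 by push_cast; ring,
    Complex.Gamma_nat_eq_factorial, Complex.Gamma_nat_eq_factorial,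
    Complex.Gamma_nat_eq_factorial] at hGamma
  rw [eq_div_iff (by positivity), mul_comm]
  exact_mod_cast hGamma.symm

/-- The polynomial `((3N+1)! / N!³) ∫₀¹ sᴺ (1 - s)ᴺ (1 - x s)ᴺ ds`, written out so that its
coefficients are visibly integers. Up to sign it is the cofactor `A` in the Padé relation
`x ^ (2N+1) A(x) ± (1 - x) ^ (2N+1) A(1 - x) = xᴺ A(1/x)`. -/
noncomputable def padePoly (N : ℕ) : ℤ[X] :=
  ∑ m ∈ Finset.range (N + 1), Polynomial.C
    ((-1) ^ m * ((N + m).choose m * (3 * N + 1).choose (N - m) : ℕ) : ℤ) * Polynomial.X ^ m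

lemma padePoly_coeff {N k : ℕ} (hk : k ≤ N) :
    (padePoly N).coeff k = (-1) ^ k * ((N + k).choose k * (3 * N + 1).choose (N - k) : ℕ) := by
  simp only [padePoly, Polynomial.finsetSum_coeff, Polynomial.coeff_C_mul_X_pow,
    Finset.sum_ite_eq, Finset.mem_range, Nat.lt_succ_of_le hk, if_true]

lemma natDegree_padePoly_le (N : ℕ) : (padePoly N).natDegree ≤ N :=
  Polynomial.natDegree_sum_le_of_forall_le _ _ fun _ hm =>
    (Polynomial.natDegree_C_mul_X_pow_le _ _).trans (Finset.mem_range_succ_iff.1 hm)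

lemma natDegree_reflect_padePoly_le (N : ℕ) : ((padePoly N).reflect N).natDegree ≤ N :=
  Polynomial.natDegree_reflect_le.trans (max_le le_rfl (natDegree_padePoly_le N))

lemma cast_choose_mul_choose_eq {N m : ℕ} (hm : m ≤ N) :
    ((N + m).choose m * (3 * N + 1).choose (N - m) : ℝ) =
      (3 * N + 1).factorial / (N.factorial : ℝ) ^ 3 *
        (N.choose m * ((N + m).factorial * N.factorial / (N + m + N + 1).factorial)) := by
  rw [Nat.cast_choose ℝ hm, Nat.cast_choose ℝ (Nat.le_add_left m N),
    Nat.cast_choose ℝ (show N - m ≤ 3 * N + 1 by omega), Nat.add_sub_cancel,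
    show 3 * N + 1 - (N - m) = N + m + N + 1 by omega]
  field_simp

lemma aeval_padePoly (N : ℕ) (x : ℝ) :
    (padePoly N).aeval x = (3 * N + 1).factorial / (N.factorial : ℝ) ^ 3 *
      ∫ s in (0 : ℝ)..1, s ^ N * (1 - s) ^ N * (1 - x * s) ^ N := by
  have hexpand (s : ℝ) : s ^ N * (1 - s) ^ N * (1 - x * s) ^ N =
      ∑ m ∈ Finset.range (N + 1), (-x) ^ m * N.choose m * (s ^ (N + m) * (1 - s) ^ N) := by
    rw [show 1 - x * s = -x * s + 1 by ring, add_pow, Finset.mul_sum]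
    refine Finset.sum_congr rfl fun m _ => ?_
    rw [one_pow, mul_pow, pow_add]
    ring
  simp_rw [hexpand]
  rw [intervalIntegral.integral_finsetSum
    fun m _ => by apply Continuous.intervalIntegrable; fun_prop]
  simp_rw [intervalIntegral.integral_const_mul, integral_pow_mul_one_sub_pow]
  rw [Finset.mul_sum, padePoly, map_sum]
  refine Finset.sum_congr rfl fun m hm => ?_
  have hcoeff := cast_choose_mul_choose_eq (Finset.mem_range_succ_iff.1 hm)
  simp only [map_mul, map_pow, Polynomial.aeval_X, Polynomial.aeval_C, algebraMap_int_eq,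
    Int.coe_castRingHom, neg_pow x]
  push_cast
  linear_combination (-1) ^ m * x ^ m * hcoeff

lemma aeval_reflect_padePoly (N : ℕ) {x : ℝ} (hx : x ≠ 0) :
    ((padePoly N).reflect N).aeval x = (3 * N + 1).factorial / (N.factorial : ℝ) ^ 3 *
      ∫ s in (0 : ℝ)..1, s ^ N * (1 - s) ^ N * (x - s) ^ N := by
  have hinv : Invertible x⁻¹ := invertibleOfNonzero (inv_ne_zero hx)
  have hreflect := Polynomial.eval₂_reflect_mul_pow (algebraMap ℤ ℝ) x⁻¹ N (padePoly N)
    (natDegree_padePoly_le N)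
  rw [invOf_eq_inv, inv_inv, ← Polynomial.aeval_def, ← Polynomial.aeval_def,
    aeval_padePoly, inv_pow, ← div_eq_mul_inv, div_eq_iff (pow_ne_zero N hx)] at hreflect
  rw [hreflect, mul_assoc, ← intervalIntegral.integral_mul_const]
  congr 2 with s
  rw [mul_assoc, ← mul_pow (1 - x⁻¹ * s), show (1 - x⁻¹ * s) * x = x - s by field_simp]

/-- Both terms on the left are, up to a common constant, integrals of
`tᴺ (1 - t)ᴺ (x - t)ᴺ`, over `[0, x]` and `[x, 1]` respectively. -/
theorem pade_identity (N : ℕ) :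
    Polynomial.X ^ (2 * N + 1) * padePoly N +
      (-1) ^ N * (1 - Polynomial.X) ^ (2 * N + 1) * (padePoly N).comp (1 - Polynomial.X) =
      (padePoly N).reflect N := by
  apply Polynomial.map_injective (Int.castRingHom ℝ) Int.cast_injective
  refine Polynomial.eq_of_infinite_eval_eq _ _
    ((Set.finite_singleton (0 : ℝ)).infinite_compl.mono fun x (hx : x ≠ 0) => ?_)
  have eval_map (p : ℤ[X]) : (p.map (Int.castRingHom ℝ)).eval x = p.aeval x :=
    Polynomial.eval_map _ _
  rw [Set.mem_ofPred_eq, eval_map, eval_map]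
  simp only [map_add, map_mul, map_pow, Polynomial.aeval_X, map_neg, map_one, map_sub,
    Polynomial.aeval_comp]
  rw [aeval_padePoly, aeval_padePoly, aeval_reflect_padePoly N hx]
  set f : ℝ → ℝ := fun t => t ^ N * (1 - t) ^ N * (x - t) ^ N with hf
  have integral_zero_x : x ^ (2 * N + 1) *
      ∫ s in (0 : ℝ)..1, s ^ N * (1 - s) ^ N * (1 - x * s) ^ N = ∫ t in (0 : ℝ)..x, f t := by
    have hsubst := intervalIntegral.mul_integral_comp_mul_left (a := 0) (b := 1) (f := f) x
    rw [mul_zero, mul_one] at hsubst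
    rw [← hsubst, ← intervalIntegral.integral_const_mul, ← intervalIntegral.integral_const_mul]
    congr 1 with s
    simp only [hf, show x - x * s = x * (1 - s) by ring, mul_pow]
    ring
  have integral_x_one : (-1) ^ N * (1 - x) ^ (2 * N + 1) *
      ∫ s in (0 : ℝ)..1, s ^ N * (1 - s) ^ N * (1 - (1 - x) * s) ^ N = ∫ t in x..1, f t := by
    have hsubst := intervalIntegral.mul_integral_comp_sub_mul (a := 0) (b := 1) (f := f) (1 - x) 1
    rw [mul_zero, mul_one, sub_zero, sub_sub_cancel] at hsubst
    rw [← hsubst, ← intervalIntegral.integral_const_mul, ← intervalIntegral.integral_const_mul]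
    congr 1 with s
    simp only [hf, show x - (1 - (1 - x) * s) = -1 * (1 - x) * (1 - s) by ring,
      show 1 - (1 - (1 - x) * s) = (1 - x) * s by ring, mul_pow]
    ring
  have hf_int (a b : ℝ) : IntervalIntegrable f MeasureTheory.volume a b := by
    apply Continuous.intervalIntegrable; fun_prop
  rw [← intervalIntegral.integral_add_adjacent_intervals (hf_int 0 x) (hf_int x 1),
    ← integral_zero_x, ← integral_x_one]
  ring

lemma pade_identity_aeval {R : Type*} [CommRing R] (N : ℕ) (x : R) :
    x ^ (2 * N + 1) * (padePoly N).aeval x +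
      (1 - x) ^ (2 * N + 1) * ((-1) ^ N * (padePoly N).aeval (1 - x)) =
      ((padePoly N).reflect N).aeval x := by
  rw [← pade_identity N]
  simp only [map_add, map_mul, map_pow, Polynomial.aeval_X, map_one, map_sub,
    Polynomial.aeval_comp, map_neg]
  ring

lemma padePoly_eval_zero (N : ℕ) : (padePoly N).eval 0 = (3 * N + 1).choose N := by
  rw [← Polynomial.coeff_zero_eq_eval_zero, padePoly_coeff N.zero_le]
  simp

lemma padePoly_eval_one (N : ℕ) : (padePoly N).eval 1 = (2 * N).choose N := by
  have h0 := congrArg (Polynomial.eval 0) (pade_identity N)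
  rw [← Polynomial.coeff_zero_eq_eval_zero ((padePoly N).reflect N), Polynomial.coeff_reflect,
    Polynomial.revAt_zero, padePoly_coeff le_rfl] at h0
  simpa [Polynomial.eval_comp, ← two_mul] using h0

/-- The determinant of the `N`-th and `(N+1)`-st approximants, divided by its trivial factor
`(1 - x) ^ (2N+1)`; see `padeDet_rel`. -/
noncomputable def padeDet (N : ℕ) : ℤ[X] :=
  (1 - Polynomial.X) ^ 2 * padePoly N * (padePoly (N + 1)).comp (1 - Polynomial.X) +
    Polynomial.X ^ 2 * padePoly (N + 1) * (padePoly N).comp (1 - Polynomial.X)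

lemma padeDet_rel (N : ℕ) :
    (1 - Polynomial.X) ^ (2 * N + 1) * padeDet N =
      (-1) ^ (N + 1) * (padePoly N * (padePoly (N + 1)).reflect (N + 1) -
        Polynomial.X ^ 2 * (padePoly (N + 1) * (padePoly N).reflect N)) := by
  have hsign : ((-1 : ℤ[X]) ^ N) ^ 2 = 1 := by rw [← pow_mul, mul_comm, pow_mul]; simp
  rw [← pade_identity N, ← pade_identity (N + 1), padeDet]
  linear_combination (-((1 - Polynomial.X) ^ (2 * N + 1) *
    ((1 - Polynomial.X) ^ 2 * padePoly N * (padePoly (N + 1)).comp (1 - Polynomial.X) +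
    Polynomial.X ^ 2 * padePoly (N + 1) * (padePoly N).comp (1 - Polynomial.X)))) * hsign

lemma natDegree_one_sub_X {R : Type*} [CommRing R] [Nontrivial R] :
    (1 - Polynomial.X : R[X]).natDegree = 1 := by
  rw [← neg_sub, Polynomial.natDegree_neg, ← Polynomial.C_1, Polynomial.natDegree_X_sub_C]

lemma natDegree_padeDet_le (N : ℕ) : (padeDet N).natDegree ≤ 2 := by
  rcases eq_or_ne (padeDet N) 0 with h0 | h0
  · simp [h0]
  have hne : (1 - Polynomial.X : ℤ[X]) ≠ 0 := fun h => by
    simpa [h] using natDegree_one_sub_X (R := ℤ)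
  have hdeg := congrArg Polynomial.natDegree (padeDet_rel N)
  rw [Polynomial.natDegree_mul (pow_ne_zero _ hne) h0, Polynomial.natDegree_pow,
    natDegree_one_sub_X] at hdeg
  have := natDegree_padePoly_le N
  have := natDegree_padePoly_le (N + 1)
  have := natDegree_reflect_padePoly_le N
  have := natDegree_reflect_padePoly_le (N + 1)
  have hrhs : ((-1) ^ (N + 1) * (padePoly N * (padePoly (N + 1)).reflect (N + 1) -
      Polynomial.X ^ 2 * (padePoly (N + 1) * (padePoly N).reflect N)) : ℤ[X]).natDegree
      ≤ 2 * N + 3 := by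
    rw [show (-1 : ℤ[X]) ^ (N + 1) = Polynomial.C ((-1) ^ (N + 1)) by simp]
    refine (Polynomial.natDegree_C_mul_le _ _).trans
      ((Polynomial.natDegree_sub_le _ _).trans (max_le ?_ ?_))
    · exact Polynomial.natDegree_mul_le.trans (by omega)
    · grw [Polynomial.natDegree_mul_le, Polynomial.natDegree_mul_le, Polynomial.natDegree_X_pow]
      omega
  omega

lemma padeDet_coeff_two (N : ℕ) :
    (padeDet N).coeff 2 = (3 * N + 1).choose N * (2 * (N + 1)).choose (N + 1) := by
  have hcoeff := congrArg (Polynomial.coeff · (2 * N + 1 + 2)) (padeDet_rel N)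
  have hlead : ((1 - Polynomial.X : ℤ[X]) ^ (2 * N + 1)).coeff (2 * N + 1) = -1 := by
    have h := Polynomial.coeff_pow_of_natDegree_le (m := 2 * N + 1)
      (natDegree_one_sub_X (R := ℤ)).le
    rw [mul_one] at h
    simp [h, Polynomial.coeff_one, Odd.neg_one_pow (odd_two_mul_add_one N)]
  have hdegA := natDegree_padePoly_le (N + 1)
  have hdegC := natDegree_reflect_padePoly_le N
  have hlow : (padePoly N * (padePoly (N + 1)).reflect (N + 1)).coeff (2 + (N + 1 + N)) = 0 := by
    refine Polynomial.coeff_eq_zero_of_natDegree_lt (Polynomial.natDegree_mul_le.trans_lt ?_)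
    have := natDegree_padePoly_le N
    have := natDegree_reflect_padePoly_le (N + 1)
    omega
  rw [Polynomial.coeff_mul_add_eq_of_natDegree_le
      (Polynomial.natDegree_pow_le.trans (by rw [natDegree_one_sub_X, mul_one]))
      (natDegree_padeDet_le N), hlead,
    show (-1 : ℤ[X]) ^ (N + 1) = Polynomial.C ((-1) ^ (N + 1)) by simp, Polynomial.coeff_C_mul,
    Polynomial.coeff_sub, show 2 * N + 1 + 2 = 2 + (N + 1 + N) by ring, hlow,
    Polynomial.coeff_mul_add_eq_of_natDegree_le (Polynomial.natDegree_X_pow_le 2)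
      (Polynomial.natDegree_mul_le.trans (add_le_add hdegA hdegC)),
    Polynomial.coeff_mul_add_eq_of_natDegree_le hdegA hdegC, padePoly_coeff le_rfl,
    Polynomial.coeff_reflect, Polynomial.revAt_le le_rfl, Nat.sub_self,
    Nat.sub_self, padePoly_coeff N.zero_le, ← two_mul] at hcoeff
  have hsign : ((-1 : ℤ) ^ (N + 1)) ^ 2 = 1 := by rw [← pow_mul, mul_comm, pow_mul]; simp
  simp only [Polynomial.coeff_X_pow_self, Nat.choose_zero_right, Nat.sub_zero,
    pow_zero, one_mul, mul_one, zero_sub] at hcoeff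
  linear_combination -hcoeff + ((3 * N + 1).choose N * (2 * (N + 1)).choose (N + 1) : ℤ) * hsign

lemma padeDet_eq (N : ℕ) :
    padeDet N = Polynomial.C ((3 * N + 1).choose N * (2 * (N + 1)).choose (N + 1) : ℤ) *
      (Polynomial.X ^ 2 - Polynomial.X + 1) := by
  set c : ℤ := (3 * N + 1).choose N * (2 * (N + 1)).choose (N + 1) with hc
  have h2 : (padeDet N).coeff 2 = c := padeDet_coeff_two N
  have hexpand : padeDet N = Polynomial.C ((padeDet N).coeff 2) * Polynomial.X ^ 2 +
      Polynomial.C ((padeDet N).coeff 1) * Polynomial.X + Polynomial.C ((padeDet N).coeff 0) :=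
    Polynomial.eq_quadratic_of_degree_le_two
      (Polynomial.degree_le_of_natDegree_le (natDegree_padeDet_le N))
  have h0 : (padeDet N).eval 0 = c := by
    simp [padeDet, Polynomial.eval_comp, padePoly_eval_zero, padePoly_eval_one, hc]
  have h1 : (padeDet N).eval 1 = c := by
    simp [padeDet, Polynomial.eval_comp, padePoly_eval_zero, padePoly_eval_one, hc, mul_comm]
  rw [hexpand] at h0 h1
  simp only [Polynomial.eval_add, Polynomial.eval_mul, Polynomial.eval_pow, Polynomial.eval_C,
    Polynomial.eval_X, h2] at h0 h1
  have hcoeff0 : (padeDet N).coeff 0 = c := by linarith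
  have hcoeff1 : (padeDet N).coeff 1 = -c := by linarith
  rw [hexpand, h2, hcoeff1, hcoeff0, map_neg]
  ring

theorem pade_independent {F : Type*} [Field F] [CharZero F] (N : ℕ) {x : F}
    (hx : x ^ 2 - x + 1 ≠ 0) :
    (1 - x) ^ 2 * (padePoly N).aeval x * (padePoly (N + 1)).aeval (1 - x) +
      x ^ 2 * (padePoly (N + 1)).aeval x * (padePoly N).aeval (1 - x) ≠ 0 := by
  have h := congrArg (Polynomial.aeval x) (padeDet_eq N)
  simp only [padeDet, map_add, map_mul, map_pow, Polynomial.aeval_X, map_one, map_sub,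
    Polynomial.aeval_comp, map_natCast] at h
  rw [h]
  exact mul_ne_zero (mul_ne_zero
    (mod_cast (Nat.choose_pos (by omega)).ne') (mod_cast (Nat.choose_pos (by omega)).ne')) hx

lemma sum_range_succ_choose_le (N : ℕ) :
    ∑ m ∈ Finset.range (N + 1), (3 * N + 1).choose m ≤ 2 * 8 ^ N :=
  calc ∑ m ∈ Finset.range (N + 1), (3 * N + 1).choose m
      ≤ ∑ m ∈ Finset.range (3 * N + 1 + 1), (3 * N + 1).choose m :=
        Finset.sum_le_sum_of_subset (Finset.range_subset_range.2 (by omega))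
    _ = 2 ^ (3 * N + 1) := Nat.sum_range_choose _
    _ = 2 * 8 ^ N := by rw [pow_succ, pow_mul]; norm_num; ring

lemma sum_abs_padePoly_coeff_le (N : ℕ) :
    ∑ m ∈ Finset.range (N + 1), |((padePoly N).coeff m : ℝ)| ≤ 2 * 32 ^ N := by
  have hcoeff : ∀ m ∈ Finset.range (N + 1),
      |((padePoly N).coeff m : ℝ)| ≤ 4 ^ N * (3 * N + 1).choose (N - m) := by
    intro m hm
    have hm : m ≤ N := Finset.mem_range_succ_iff.1 hm
    have hchoose : (N + m).choose m ≤ 4 ^ N :=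
      calc (N + m).choose m ≤ 2 ^ (N + m) := Nat.choose_le_two_pow _ _
        _ ≤ 2 ^ (2 * N) := Nat.pow_le_pow_right (by norm_num) (by omega)
        _ = 4 ^ N := by rw [pow_mul]; norm_num
    rw [padePoly_coeff hm, ← Int.cast_abs, abs_mul, abs_pow, abs_neg, abs_one, one_pow, one_mul,
      Nat.abs_cast]
    exact_mod_cast Nat.mul_le_mul_right _ hchoose
  have hreflect : ∑ m ∈ Finset.range (N + 1), (3 * N + 1).choose (N - m) ≤ 2 * 8 ^ N := by
    have h := Finset.sum_range_reflect (fun m => (3 * N + 1).choose m) (N + 1)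
    rw [Nat.add_sub_cancel] at h
    exact h.trans_le (sum_range_succ_choose_le N)
  calc ∑ m ∈ Finset.range (N + 1), |((padePoly N).coeff m : ℝ)|
      ≤ ∑ m ∈ Finset.range (N + 1), (4 ^ N * (3 * N + 1).choose (N - m) : ℝ) :=
        Finset.sum_le_sum hcoeff
    _ = 4 ^ N * ((∑ m ∈ Finset.range (N + 1), (3 * N + 1).choose (N - m) : ℕ) : ℝ) := by
        rw [Nat.cast_sum, Finset.mul_sum]
    _ ≤ 4 ^ N * (2 * 8 ^ N) := by gcongr; exact_mod_cast hreflect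
    _ = 2 * 32 ^ N := by rw [mul_left_comm, ← mul_pow]; norm_num

lemma sum_abs_reflect_padePoly_coeff_le (N : ℕ) :
    ∑ m ∈ Finset.range (N + 1), |(((padePoly N).reflect N).coeff m : ℝ)| ≤ 2 * 32 ^ N := by
  refine Eq.trans_le ?_ (sum_abs_padePoly_coeff_le N)
  rw [← Finset.sum_range_reflect (fun m => |((padePoly N).coeff m : ℝ)|)]
  refine Finset.sum_congr rfl fun m hm => ?_
  rw [Polynomial.coeff_reflect, Polynomial.revAt_le (Finset.mem_range_succ_iff.1 hm),
    Nat.add_sub_cancel]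

/-! ### Packing in a finite-dimensional normed space -/

open MeasureTheory Metric Module in
theorem card_le_pow_finrank_of_separated {E : Type*} [NormedAddCommGroup E] [NormedSpace ℝ E]
    [FiniteDimensional ℝ E] {R δ : ℝ} (hR : 0 ≤ R) (hδ : 0 < δ) (s : Finset E)
    (hs : ∀ c ∈ s, ‖c‖ ≤ R) (hsep : ∀ c ∈ s, ∀ d ∈ s, c ≠ d → δ ≤ ‖c - d‖) :
    (s.card : ℝ) ≤ (1 + 2 * R / δ) ^ finrank ℝ E := by
  borelize E
  let μ : Measure E := Measure.addHaar
  have hdisj : Set.Pairwise (s : Set E) (Function.onFun Disjoint fun c => ball c (δ / 2)) := by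
    intro c hc d hd hcd
    refine ball_disjoint_ball ?_
    rw [dist_eq_norm, add_halves]
    exact hsep c hc d hd hcd
  have hsub : ⋃ c ∈ s, ball c (δ / 2) ⊆ ball 0 (R + δ / 2) := by
    refine Set.iUnion₂_subset fun c hc => ball_subset_ball' ?_
    rw [dist_zero_right, add_comm]
    gcongr
    exact hs c hc
  have hvol : (s.card : ENNReal) * ENNReal.ofReal ((δ / 2) ^ finrank ℝ E) * μ (ball 0 1) ≤
      ENNReal.ofReal ((R + δ / 2) ^ finrank ℝ E) * μ (ball 0 1) :=
    calc (s.card : ENNReal) * ENNReal.ofReal ((δ / 2) ^ finrank ℝ E) * μ (ball 0 1)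
        = μ (⋃ c ∈ s, ball c (δ / 2)) := by
          rw [measure_biUnion_finset hdisj fun c _ => measurableSet_ball]
          simp only [μ.addHaar_ball_of_pos _ (half_pos hδ), Finset.sum_const, nsmul_eq_mul,
            mul_assoc]
      _ ≤ μ (ball 0 (R + δ / 2)) := measure_mono hsub
      _ = ENNReal.ofReal ((R + δ / 2) ^ finrank ℝ E) * μ (ball 0 1) :=
          μ.addHaar_ball_of_pos _ (by positivity)
  have hcard := ENNReal.toReal_le_of_le_ofReal (by positivity)
    ((ENNReal.mul_le_mul_iff_left (measure_ball_pos μ _ zero_lt_one).ne'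
      measure_ball_lt_top.ne).1 hvol)
  rw [ENNReal.toReal_mul, ENNReal.toReal_natCast, ENNReal.toReal_ofReal (by positivity),
    show R + δ / 2 = (1 + 2 * R / δ) * (δ / 2) by field_simp; ring, mul_pow] at hcard
  exact le_of_mul_le_mul_right hcard (by positivity)

theorem card_le_pow_of_separated_of_mem_submodule {α E : Type*} [NormedAddCommGroup E]
    [NormedSpace ℝ E] {R δ : ℝ} (hR : 0 ≤ R) (hδ : 0 < δ) (V : Submodule ℝ E)
    [FiniteDimensional ℝ V] {m : ℕ} (hm : Module.finrank ℝ V ≤ m) (s : Finset α) (f : α → E)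
    (hV : ∀ x ∈ s, f x ∈ V) (hs : ∀ x ∈ s, ‖f x‖ ≤ R)
    (hsep : ∀ x ∈ s, ∀ y ∈ s, x ≠ y → δ ≤ ‖f x - f y‖) :
    (s.card : ℝ) ≤ (1 + 2 * R / δ) ^ m := by
  let g : s → V := fun x => ⟨f x, hV x x.2⟩
  have hg (x y : s) (hxy : x ≠ y) : δ ≤ ‖g x - g y‖ :=
    hsep x x.2 y y.2 (Subtype.coe_ne_coe.2 hxy)
  have hinj : Function.Injective g := fun x y hxy => by
    by_contra hne
    have := hg x y hne
    rw [hxy, sub_self, norm_zero] at this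
    exact this.not_gt hδ
  have hcard := card_le_pow_finrank_of_separated hR hδ (Finset.univ.image g)
    (by
      simp only [Finset.mem_image, Finset.mem_univ, true_and]
      rintro _ ⟨x, rfl⟩
      exact hs x x.2)
    (by
      simp only [Finset.mem_image, Finset.mem_univ, true_and]
      rintro _ ⟨x, rfl⟩ _ ⟨y, rfl⟩ hxy
      exact hg x y (ne_of_apply_ne g hxy))
  rw [Finset.card_image_of_injective _ hinj, Finset.card_univ, Fintype.card_coe] at hcard
  exact hcard.trans (pow_le_pow_right₀ (le_add_of_nonneg_right (by positivity)) hm)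

/-! ### The height gauge -/

/-- The gauge `∑ max (a, b, 0)` on families of pairs of real numbers. On the family
`(log |α|ᵥ, log |β|ᵥ)` indexed by the places, its value is the height of `[α : β : 1]`. -/
noncomputable def heightGauge {ι : Type*} [Fintype ι] (w : ι → ℝ × ℝ) : ℝ :=
  ∑ i, max (max (w i).1 (w i).2) 0

section heightGauge
variable {ι : Type*} [Fintype ι]

theorem heightGauge_add_le (v w : ι → ℝ × ℝ) :
    heightGauge (v + w) ≤ heightGauge v + heightGauge w := by
  rw [heightGauge, heightGauge, heightGauge, ← Finset.sum_add_distrib]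
  refine Finset.sum_le_sum fun i _ => max_le (max_le ?_ ?_) ?_
  · exact add_le_add (le_max_of_le_left (le_max_left _ _)) (le_max_of_le_left (le_max_left _ _))
  · exact add_le_add (le_max_of_le_left (le_max_right _ _)) (le_max_of_le_left (le_max_right _ _))
  · exact add_nonneg (le_max_right _ _) (le_max_right _ _)

theorem heightGauge_smul {c : ℝ} (hc : 0 ≤ c) (w : ι → ℝ × ℝ) :
    heightGauge (c • w) = c * heightGauge w := by
  simp only [heightGauge, Finset.mul_sum, mul_max_of_nonneg _ _ hc, Pi.smul_apply, Prod.smul_fst,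
    Prod.smul_snd, smul_eq_mul, mul_zero]

theorem heightGauge_neg_le {w : ι → ℝ × ℝ} (hw : ∑ i, w i = 0) :
    heightGauge (-w) ≤ 2 * heightGauge w := by
  have hfst : ∑ i, (w i).1 = 0 := by rw [← Prod.fst_sum, hw, Prod.fst_zero]
  have hsnd : ∑ i, (w i).2 = 0 := by rw [← Prod.snd_sum, hw, Prod.snd_zero]
  have hle : heightGauge (-w) ≤ 2 * heightGauge w - (∑ i, (w i).1 + ∑ i, (w i).2) := by
    rw [heightGauge, heightGauge, Finset.mul_sum, ← Finset.sum_add_distrib,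
      ← Finset.sum_sub_distrib]
    refine Finset.sum_le_sum fun i _ => ?_
    rw [Pi.neg_apply, Prod.fst_neg, Prod.snd_neg]
    have := le_max_left (max (w i).1 (w i).2) 0
    have := le_max_right (max (w i).1 (w i).2) 0
    have := le_max_left (w i).1 (w i).2
    have := le_max_right (w i).1 (w i).2
    refine max_le (max_le ?_ ?_) ?_ <;> linarith
  rwa [hfst, hsnd, add_zero, sub_zero] at hle

/-- The linear embedding that realizes `w ↦ heightGauge w + heightGauge (-w)` as a norm: on each
pair, `max a b 0 + max (-a) (-b) 0` is the sup norm of `(a, b, a - b)`. -/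
noncomputable def gaugeEmb : (ι → ℝ × ℝ) →ₗ[ℝ] PiLp 1 (fun _ : ι => ℝ × ℝ × ℝ) where
  toFun w := WithLp.toLp 1 fun i => ((w i).1, (w i).2, (w i).1 - (w i).2)
  map_add' v w := by
    ext i <;> simp
    ring
  map_smul' c w := by
    ext i <;> simp
    ring

theorem norm_gaugeEmb (w : ι → ℝ × ℝ) : ‖gaugeEmb w‖ = heightGauge w + heightGauge (-w) := by
  rw [PiLp.norm_eq_of_nat 1 (by simp), heightGauge, heightGauge, ← Finset.sum_add_distrib]
  simp only [pow_one, Nat.cast_one, div_one, Real.rpow_one]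
  refine Finset.sum_congr rfl fun i _ => ?_
  simp only [gaugeEmb, LinearMap.coe_mk, AddHom.coe_mk, Prod.norm_def, Real.norm_eq_abs,
    Pi.neg_apply, Prod.fst_neg, Prod.snd_neg]
  generalize (w i).1 = a
  generalize (w i).2 = b
  simp only [max_def, abs_eq_max_neg]
  split_ifs <;> linarith

/-- The direction of `w`, normalized so that `w` has gauge `1`, as a vector of the normed space
in which directions are packed. -/
noncomputable def gaugeDirection (w : ι → ℝ × ℝ) : PiLp 1 (fun _ : ι => ℝ × ℝ × ℝ) :=
  (heightGauge w)⁻¹ • gaugeEmb w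

theorem norm_gaugeDirection_le {w : ι → ℝ × ℝ} (hw : 0 < heightGauge w) (hsum : ∑ i, w i = 0) :
    ‖gaugeDirection w‖ ≤ 3 := by
  rw [gaugeDirection, norm_smul, norm_gaugeEmb, norm_inv, Real.norm_of_nonneg hw.le,
    inv_mul_le_iff₀ hw]
  linarith [heightGauge_neg_le hsum]

theorem heightGauge_smul_le {w : ι → ℝ × ℝ} (hsum : ∑ i, w i = 0) (c : ℝ) :
    heightGauge (c • w) ≤ max (c * heightGauge w) (2 * (-c * heightGauge w)) := by
  rcases le_total 0 c with hc | hc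
  · exact (heightGauge_smul hc w).trans_le (le_max_left _ _)
  · refine le_max_of_le_right ?_
    rw [← neg_smul_neg, heightGauge_smul (neg_nonneg.2 hc), mul_left_comm]
    exact mul_le_mul_of_nonneg_left (heightGauge_neg_le hsum) (neg_nonneg.2 hc)

theorem heightGauge_sub_smul_lt {x y : ι → ℝ × ℝ} (hx : 0 < heightGauge x)
    (hy : 0 < heightGauge y) (hxsum : ∑ i, x i = 0) (hysum : ∑ i, y i = 0)
    (hclose : ‖gaugeDirection y - gaugeDirection x‖ < 3 / 8) (k : ℝ) :
    heightGauge (y - k • x) < heightGauge y / 4 +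
      max (heightGauge y - k * heightGauge x) (2 * (k * heightGauge x - heightGauge y)) := by
  set X := heightGauge x
  set Y := heightGauge y
  set D := Y⁻¹ • y - X⁻¹ • x with hD
  have hDsmall : heightGauge D < 1 / 4 := by
    have hnorm : gaugeDirection y - gaugeDirection x = gaugeEmb D := by
      rw [hD, map_sub, map_smul, map_smul, gaugeDirection, gaugeDirection]
    have hDsum : ∑ i, (-D) i = 0 := by
      simp [hD, Finset.sum_sub_distrib, ← Finset.smul_sum, hxsum, hysum]
    have hneg := heightGauge_neg_le hDsum
    rw [neg_neg] at hneg
    rw [hnorm, norm_gaugeEmb] at hclose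
    linarith
  have hdecomp : y - k • x = Y • D + (Y / X - k) • x := by
    rw [hD, smul_sub, smul_inv_smul₀ hy.ne', smul_smul, sub_smul, div_eq_mul_inv]
    abel
  calc heightGauge (y - k • x)
      ≤ Y * heightGauge D + max ((Y / X - k) * X) (2 * (-(Y / X - k) * X)) := by
        rw [hdecomp, ← heightGauge_smul hy.le]
        grw [heightGauge_add_le, heightGauge_smul_le hxsum]
    _ = Y * heightGauge D + max (Y - k * X) (2 * (k * X - Y)) := by
        rw [neg_mul, sub_mul, div_mul_cancel₀ _ hx.ne', neg_sub]
    _ < Y / 4 + max (Y - k * X) (2 * (k * X - Y)) := by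
        have := mul_lt_mul_of_pos_left hDsmall hy
        linarith

theorem le_norm_gaugeDirection_sub_of_near {x y : ι → ℝ × ℝ} (hx : 0 < heightGauge x)
    (hxsum : ∑ i, x i = 0) (hysum : ∑ i, y i = 0) (hle : heightGauge x ≤ heightGauge y)
    (hlt : heightGauge y < 8 / 5 * heightGauge x) (hgap : heightGauge x ≤ heightGauge (y - x)) :
    3 / 8 ≤ ‖gaugeDirection y - gaugeDirection x‖ := by
  by_contra! hclose
  have hsub := heightGauge_sub_smul_lt hx (hx.trans_le hle) hxsum hysum hclose 1
  rw [one_smul, one_mul, max_eq_left (by linarith)] at hsub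
  linarith

lemma log_four_add_mul_log_thirtyTwo_le {t : ℝ} (ht : 1 ≤ t) :
    Real.log 4 + t * Real.log 32 ≤ 5.3 * t := by
  have hlog : Real.log 4 = 2 * Real.log 2 ∧ Real.log 32 = 5 * Real.log 2 := by
    constructor
    · rw [show (4 : ℝ) = 2 ^ 2 by norm_num, Real.log_pow, Nat.cast_ofNat]
    · rw [show (32 : ℝ) = 2 ^ 5 by norm_num, Real.log_pow, Nat.cast_ofNat]
  rw [hlog.1, hlog.2]
  nlinarith [Real.log_two_lt_d9]

lemma exists_nat_mul_le_lt {X Y : ℝ} (hX : 0 < X) (hXY : 18 * X ≤ Y) :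
    ∃ N : ℕ, 8 ≤ N ∧ (2 * N + 2 : ℝ) * X ≤ Y ∧ Y < (2 * N + 4) * X := by
  have hq : 18 ≤ Y / X := (le_div_iff₀ hX).2 hXY
  have hfloor : 9 ≤ ⌊Y / X / 2⌋₊ := Nat.le_floor (by push_cast; linarith)
  have hle := Nat.floor_le (by positivity : 0 ≤ Y / X / 2)
  have hlt := Nat.lt_floor_add_one (Y / X / 2)
  obtain ⟨N, hN⟩ := Nat.exists_eq_add_of_le' (show 1 ≤ ⌊Y / X / 2⌋₊ by omega)
  rw [hN] at hfloor hle hlt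
  push_cast at hle hlt
  refine ⟨N, by omega, ?_, ?_⟩
  · rw [← le_div_iff₀ hX]; linarith
  · rw [← div_lt_iff₀ hX]; linarith

/-- With `N` chosen so that `2 N + 1` is about `heightGauge y / heightGauge x`, close directions
make `y - (2 M + 1) • x` too small for the hypothesis `hpade`. -/
theorem le_norm_gaugeDirection_sub_of_far {x y : ι → ℝ × ℝ} {n : ℝ} (hn : 0 < n)
    (hxsum : ∑ i, x i = 0) (hysum : ∑ i, y i = 0) (hx : 53 * n ≤ heightGauge x)
    (hxy : 18 * heightGauge x ≤ heightGauge y)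
    (hpade : ∀ N : ℕ, ∃ M : ℕ, (M = N ∨ M = N + 1) ∧ (M + 1) * heightGauge x ≤
      heightGauge (y - (2 * M + 1 : ℝ) • x) + n * (Real.log 4 + M * Real.log 32)) :
    3 / 8 ≤ ‖gaugeDirection y - gaugeDirection x‖ := by
  by_contra! hclose
  have hx0 : 0 < heightGauge x := by linarith
  have hsub := heightGauge_sub_smul_lt hx0 (by linarith) hxsum hysum hclose
  set X := heightGauge x
  set Y := heightGauge y
  obtain ⟨N, hN8, hNle, hltN⟩ := exists_nat_mul_le_lt hx0 hxy
  obtain ⟨M, hM, hlower⟩ := hpade N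
  have hupper := hsub (2 * M + 1)
  have hloss : n * (Real.log 4 + M * Real.log 32) ≤ M / 10 * X :=
    calc n * (Real.log 4 + M * Real.log 32)
        ≤ n * (5.3 * M) := by
          gcongr
          exact log_four_add_mul_log_thirtyTwo_le (by exact_mod_cast (by omega : 1 ≤ M))
      _ = M / 10 * (53 * n) := by ring
      _ ≤ M / 10 * X := by gcongr
  have hcompare : (M + 1) * X <
      Y / 4 + max (Y - (2 * M + 1) * X) (2 * ((2 * M + 1) * X - Y)) + M / 10 * X := by linarith
  have hNX : 8 * X ≤ N * X := by gcongr; exact_mod_cast hN8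
  rcases hM with rfl | rfl
  · rw [max_eq_left (by linarith)] at hcompare
    linarith
  · push_cast at hcompare
    rcases max_choice (Y - (2 * (N + 1) + 1) * X) (2 * ((2 * (N + 1) + 1) * X - Y)) with h | h <;>
    · rw [h] at hcompare
      linarith

/-! ### Counting with a gap principle -/

/-- The index `j` of the layer `c (8/5) ^ j ≤ t < c (8/5) ^ (j + 1)` containing `t`, where
`c = 19 n / 100`. -/
noncomputable def layer (n t : ℝ) : ℕ := ⌊Real.logb (8 / 5) (t / (19 / 100 * n))⌋₊

lemma layer_bounds {n t : ℝ} (hn : 0 < n) (ht : 19 / 100 * n ≤ t) :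
    19 / 100 * n * (8 / 5) ^ layer n t ≤ t ∧ t < 19 / 100 * n * (8 / 5) ^ (layer n t + 1) := by
  have hc : 0 < 19 / 100 * n := by positivity
  have ht' : 1 ≤ t / (19 / 100 * n) := (one_le_div₀ hc).2 ht
  constructor
  · rw [← le_div_iff₀' hc, ← Real.rpow_natCast,
      ← Real.le_logb_iff_rpow_le (by norm_num) (by linarith)]
    exact Nat.floor_le (Real.logb_nonneg (by norm_num) ht')
  · rw [← div_lt_iff₀' hc, ← Real.rpow_natCast,
      ← Real.logb_lt_iff_lt_rpow (by norm_num) (by linarith), Nat.cast_add_one]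
    exact Nat.lt_floor_add_one _

/-- A colouring of layers by `20` colours: the first `12` layers are all distinguished, and later
ones only modulo `8`. -/
def layerColour (j : ℕ) : Fin 20 := if h : j < 12 then ⟨j, by omega⟩ else ⟨12 + j % 8, by omega⟩

lemma eq_or_far_of_layerColour_eq {i j : ℕ} (hij : i ≤ j) (h : layerColour i = layerColour j) :
    i = j ∨ 12 ≤ i ∧ i + 8 ≤ j := by
  unfold layerColour at h
  split_ifs at h <;> rw [Fin.mk.injEq] at h <;> omega

theorem near_or_far_of_layerColour_eq {n X Y : ℝ} (hn : 0 < n) (hX : 19 / 100 * n ≤ X)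
    (hXY : X ≤ Y) (h : layerColour (layer n X) = layerColour (layer n Y)) :
    Y < 8 / 5 * X ∨ 53 * n ≤ X ∧ 18 * X ≤ Y := by
  obtain ⟨hXle, hltX⟩ := layer_bounds hn hX
  obtain ⟨hYle, hltY⟩ := layer_bounds hn (hX.trans hXY)
  have hmono : layer n X ≤ layer n Y := by
    unfold layer
    gcongr
    · norm_num
    · exact div_pos (by linarith [mul_pos (by norm_num : (0 : ℝ) < 19 / 100) hn]) (by positivity)
  rcases eq_or_far_of_layerColour_eq hmono h with heq | ⟨h12, h8⟩
  · left
    rw [← heq, pow_succ] at hltY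
    linarith
  · right
    constructor
    · calc 53 * n ≤ 19 / 100 * n * (8 / 5) ^ 12 := by norm_num; linarith
        _ ≤ 19 / 100 * n * (8 / 5) ^ layer n X := by gcongr; norm_num
        _ ≤ X := hXle
    · calc 18 * X ≤ X * (8 / 5) ^ 7 := by norm_num; linarith
        _ ≤ 19 / 100 * n * (8 / 5) ^ (layer n X + 1) * (8 / 5) ^ 7 := by gcongr
        _ = 19 / 100 * n * (8 / 5) ^ (layer n X + 8) := by ring
        _ ≤ 19 / 100 * n * (8 / 5) ^ layer n Y := by gcongr; norm_num
        _ ≤ Y := hYle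

theorem card_le_of_gap {κ α : Type*} [Fintype κ] (s : Finset α) (w : α → ι → ℝ × ℝ)
    (V : Submodule ℝ (ι → ℝ × ℝ)) (hV : ∀ x ∈ s, w x ∈ V) {m : ℕ} (hm : Module.finrank ℝ V ≤ m)
    (hsum : ∀ x ∈ s, ∑ i, w x i = 0) (cl : α → κ) {n : ℝ} (hn : 0 < n)
    (hlow : ∀ x ∈ s, 19 / 100 * n ≤ heightGauge (w x))
    (hgap : ∀ x ∈ s, ∀ y ∈ s, x ≠ y → cl x = cl y → heightGauge (w x) ≤ heightGauge (w y - w x))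
    (hpade : ∀ x ∈ s, ∀ y ∈ s, ∀ N : ℕ, ∃ M : ℕ, (M = N ∨ M = N + 1) ∧
      (M + 1) * heightGauge (w x) ≤ heightGauge (w y - (2 * M + 1 : ℝ) • w x) +
        n * (Real.log 4 + M * Real.log 32)) :
    s.card ≤ 17 ^ m * (20 * Fintype.card κ) := by
  have hpos (x) (hx : x ∈ s) : 0 < heightGauge (w x) :=
    lt_of_lt_of_le (by positivity) (hlow x hx)
  let c : α → Fin 20 × κ := fun x => (layerColour (layer n (heightGauge (w x))), cl x)
  have hsep : ∀ x ∈ s, ∀ y ∈ s, x ≠ y → c x = c y → heightGauge (w x) ≤ heightGauge (w y) →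
      3 / 8 ≤ ‖gaugeDirection (w y) - gaugeDirection (w x)‖ := by
    intro x hx y hy hne hc hle
    obtain ⟨hcolour, hcl⟩ := Prod.ext_iff.1 hc
    rcases near_or_far_of_layerColour_eq hn (hlow x hx) hle hcolour with hnear | ⟨h53, h18⟩
    · exact le_norm_gaugeDirection_sub_of_near (hpos x hx) (hsum x hx) (hsum y hy) hle hnear
        (hgap x hx y hy hne hcl)
    · exact le_norm_gaugeDirection_sub_of_far hn (hsum x hx) (hsum y hy) h53 h18
        (hpade x hx y hy)
  have hfibre (b : Fin 20 × κ) : (s.filter fun x => c x = b).card ≤ 17 ^ m := by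
    have hcard := card_le_pow_of_separated_of_mem_submodule (R := 3) (δ := 3 / 8) (by norm_num)
      (by norm_num) (V.map gaugeEmb) ((Submodule.finrank_map_le _ _).trans hm)
      (s.filter fun x => c x = b) (fun x => gaugeDirection (w x)) ?_ ?_ ?_
    · norm_num at hcard
      exact_mod_cast hcard
    · intro x hx
      exact Submodule.smul_mem _ _ (Submodule.mem_map_of_mem (hV x (Finset.mem_filter.1 hx).1))
    · intro x hx
      have hx := (Finset.mem_filter.1 hx).1
      exact norm_gaugeDirection_le (hpos x hx) (hsum x hx)
    · intro x hx y hy hne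
      obtain ⟨hx, hcx⟩ := Finset.mem_filter.1 hx
      obtain ⟨hy, hcy⟩ := Finset.mem_filter.1 hy
      rcases le_total (heightGauge (w x)) (heightGauge (w y)) with hle | hle
      · rw [norm_sub_rev]
        exact hsep x hx y hy hne (hcx.trans hcy.symm) hle
      · exact hsep y hy x hx hne.symm (hcy.trans hcx.symm) hle
  simpa using Finset.card_le_mul_card_image_of_maps_to (f := c) (t := Finset.univ)
    (fun _ _ => Finset.mem_univ _) (17 ^ m) fun b _ => hfibre b

end heightGauge

/-! ### Local estimates at a single absolute value -/

section LocalBounds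
variable {K : Type*} [Field K] {f : AbsoluteValue K ℝ}

lemma abv_intCast_le (f : AbsoluteValue K ℝ) (a : ℤ) : f a ≤ |(a : ℝ)| := by
  rw [← f.apply_natAbs_eq, ← Int.cast_abs, Int.abs_eq_natAbs]
  exact f.apply_nat_le_self a.natAbs

lemma abv_aeval_le (f : AbsoluteValue K ℝ) {p : ℤ[X]} {N : ℕ} (hp : p.natDegree ≤ N) {x : K}
    {M : ℝ} (hM : 1 ≤ M) (hx : f x ≤ M) :
    f (p.aeval x) ≤ (∑ m ∈ Finset.range (N + 1), |(p.coeff m : ℝ)|) * M ^ N := by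
  rw [Polynomial.aeval_eq_sum_range' (Nat.lt_succ_of_le hp), Finset.sum_mul]
  refine (f.sum_le _ _).trans (Finset.sum_le_sum fun m hm => ?_)
  rw [zsmul_eq_mul, map_mul, map_pow]
  have hpow : f x ^ m ≤ M ^ N := (pow_le_pow_left₀ (f.nonneg x) hx m).trans
    (pow_le_pow_right₀ hM (Finset.mem_range_succ_iff.1 hm))
  exact mul_le_mul (abv_intCast_le f _) hpow (pow_nonneg (f.nonneg x) m) (abs_nonneg _)

lemma abv_aeval_le_of_isNonarchimedean (hf : IsNonarchimedean f) {p : ℤ[X]} {N : ℕ}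
    (hp : p.natDegree ≤ N) {x : K} {M : ℝ} (hM : 1 ≤ M) (hx : f x ≤ M) :
    f (p.aeval x) ≤ M ^ N := by
  rw [Polynomial.aeval_eq_sum_range' (Nat.lt_succ_of_le hp)]
  obtain ⟨m, hm, hle⟩ := hf.finset_image_add_of_nonempty
    (fun m => p.coeff m • x ^ m) (Finset.nonempty_range_iff.2 N.succ_ne_zero)
  refine hle.trans ?_
  rw [zsmul_eq_mul, map_mul, map_pow]
  calc f (p.coeff m : K) * f x ^ m ≤ 1 * f x ^ m :=
        mul_le_mul_of_nonneg_right hf.apply_intCast_le_one (pow_nonneg (f.nonneg x) m)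
    _ = f x ^ m := one_mul _
    _ ≤ M ^ m := pow_le_pow_left₀ (f.nonneg x) hx m
    _ ≤ M ^ N := pow_le_pow_right₀ hM (Finset.mem_range_succ_iff.1 hm)

/-- The local factor `max (f a) (f b) 1` of the height of the projective point `[a : b : 1]`. -/
noncomputable def localMax (f : AbsoluteValue K ℝ) (a b : K) : ℝ := max (max (f a) (f b)) 1

lemma one_le_localMax (f : AbsoluteValue K ℝ) (a b : K) : 1 ≤ localMax f a b := le_max_right _ _

lemma localMax_pos (f : AbsoluteValue K ℝ) (a b : K) : 0 < localMax f a b :=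
  one_pos.trans_le (one_le_localMax f a b)

lemma left_le_localMax (f : AbsoluteValue K ℝ) (a b : K) : f a ≤ localMax f a b :=
  le_max_of_le_left (le_max_left _ _)

lemma right_le_localMax (f : AbsoluteValue K ℝ) (a b : K) : f b ≤ localMax f a b :=
  le_max_of_le_left (le_max_right _ _)

lemma localMax_pow_le (f : AbsoluteValue K ℝ) (a b : K) (k : ℕ) :
    localMax f a b ^ k ≤ localMax f (a ^ k) (b ^ k) := by
  rcases max_choice (max (f a) (f b)) 1 with h | h
  · rcases max_choice (f a) (f b) with h' | h'
    · rw [localMax, h, h', ← map_pow]; exact left_le_localMax _ _ _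
    · rw [localMax, h, h', ← map_pow]; exact right_le_localMax _ _ _
  · rw [localMax, h, one_pow]; exact one_le_localMax _ _ _

lemma log_localMax (f : AbsoluteValue K ℝ) {a b : K} (ha : a ≠ 0) (hb : b ≠ 0) :
    Real.log (localMax f a b) = max (max (Real.log (f a)) (Real.log (f b))) 0 := by
  have hmax {u v : ℝ} (hu : 0 < u) (hv : 0 < v) :
      Real.log (max u v) = max (Real.log u) (Real.log v) :=
    Real.strictMonoOn_log.monotoneOn.map_max hu hv
  rw [localMax, hmax (lt_max_of_lt_left (f.pos ha)) one_pos, hmax (f.pos ha) (f.pos hb),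
    Real.log_one]

lemma mul_localMax_le_of_le {l x₁ x₂ : K} {R : ℝ} (h : f l ≤ R) (h₁ : f (l * x₁) ≤ R)
    (h₂ : f (l * x₂) ≤ R) : f l * localMax f x₁ x₂ ≤ R := by
  rw [map_mul] at h₁ h₂
  rw [localMax, mul_max_of_nonneg _ _ (f.nonneg l), mul_max_of_nonneg _ _ (f.nonneg l), mul_one]
  exact max_le (max_le h₁ h₂) h

lemma abv_sub_le_of_isNonarchimedean (hf : IsNonarchimedean f) (a b : K) :
    f (a - b) ≤ 1 * max (f a) (f b) := by
  rw [one_mul, sub_eq_add_neg, ← f.map_neg b]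
  exact hf a (-b)

lemma abv_sub_le (f : AbsoluteValue K ℝ) (a b : K) : f (a - b) ≤ 2 * max (f a) (f b) :=
  calc f (a - b) ≤ f a + f b := f.sub_le_add a b
    _ ≤ max (f a) (f b) + max (f a) (f b) := add_le_add (le_max_left _ _) (le_max_right _ _)
    _ = 2 * max (f a) (f b) := (two_mul _).symm

lemma mul_localMax_le_of_linear_forms {c : ℝ} (hsub : ∀ a b, f (a - b) ≤ c * max (f a) (f b))
    {A B C z₁ z₂ x₁ x₂ l : K} {D : ℝ} (hA : f A ≤ D) (hB : f B ≤ D) (hC : f C ≤ D)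
    (hl : l = A * z₂ - B * z₁) (h₁ : l * x₁ = C * z₂ - B) (h₂ : l * x₂ = A - C * z₁) :
    f l * localMax f x₁ x₂ ≤ c * (D * localMax f z₁ z₂) := by
  have hc : 0 ≤ c := by
    have h := hsub 1 0
    rw [sub_zero, map_one, map_zero, max_eq_left zero_le_one] at h
    linarith
  have hform {a b u v : K} (ha : f a ≤ D) (hb : f b ≤ D) (hu : f u ≤ localMax f z₁ z₂)
      (hv : f v ≤ localMax f z₁ z₂) : f (a * u - b * v) ≤ c * (D * localMax f z₁ z₂) := by
    have hD : 0 ≤ D := (f.nonneg a).trans ha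
    refine (hsub _ _).trans (mul_le_mul_of_nonneg_left (max_le ?_ ?_) hc) <;> rw [map_mul]
    · exact mul_le_mul ha hu (f.nonneg u) hD
    · exact mul_le_mul hb hv (f.nonneg v) hD
  have h1 : f 1 ≤ localMax f z₁ z₂ := by rw [map_one]; exact one_le_localMax _ _ _
  have hz₁ := left_le_localMax f z₁ z₂
  have hz₂ := right_le_localMax f z₁ z₂
  refine mul_localMax_le_of_le ?_ ?_ ?_
  · rw [hl]; exact hform hA hB hz₂ hz₁
  · rw [h₁]; simpa only [mul_one] using hform hC hB hz₂ h1
  · rw [h₂]; simpa only [mul_one] using hform hA hC h1 hz₁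

end LocalBounds

section PadeRemainder
variable {K : Type*} [Field K]

/-- The linear form in `z₁, z₂` given by the `N`-th Padé approximants at `x`. On the line
`z₁ x ^ (2 N + 1) + z₂ (1 - x) ^ (2 N + 1) = 1` it stays small after multiplication by
`x ^ (2 N + 1)` and by `(1 - x) ^ (2 N + 1)`. -/
noncomputable def padeRemainder (N : ℕ) (x z₁ z₂ : K) : K :=
  (padePoly N).aeval x * z₂ - (-1) ^ N * (padePoly N).aeval (1 - x) * z₁

lemma padeRemainder_mem {O : Subring K} (N : ℕ) {x z₁ z₂ : K} (hx : x ∈ O) (hz₁ : z₁ ∈ O)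
    (hz₂ : z₂ ∈ O) : padeRemainder N x z₁ z₂ ∈ O := by
  have haeval {t : K} (ht : t ∈ O) : (padePoly N).aeval t ∈ O := by
    rw [Polynomial.aeval_eq_sum_range]
    exact O.sum_mem fun m _ => O.zsmul_mem (O.pow_mem ht m) _
  exact O.sub_mem (O.mul_mem (haeval hx) hz₂) (O.mul_mem (O.mul_mem
    (O.pow_mem (O.neg_mem O.one_mem) N) (haeval (O.sub_mem O.one_mem hx))) hz₁)

variable {f : AbsoluteValue K ℝ}

lemma padeRemainder_mul_localMax_le {c s : ℝ} (hsub : ∀ a b, f (a - b) ≤ c * max (f a) (f b))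
    {N : ℕ} {x z₁ z₂ : K} (hz : z₁ * x ^ (2 * N + 1) + z₂ * (1 - x) ^ (2 * N + 1) = 1)
    (hx : f ((padePoly N).aeval x) ≤ s) (hx' : f ((padePoly N).aeval (1 - x)) ≤ s)
    (hr : f (((padePoly N).reflect N).aeval x) ≤ s) :
    f (padeRemainder N x z₁ z₂) * localMax f x (1 - x) ^ (2 * N + 1) ≤
      c * (s * localMax f z₁ z₂) := by
  refine (mul_le_mul_of_nonneg_left (localMax_pow_le f x (1 - x) _) (f.nonneg _)).trans
    (mul_localMax_le_of_linear_forms hsub hx (B := (-1) ^ N * (padePoly N).aeval (1 - x)) ?_ hr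
      rfl ?_ ?_)
  · rwa [map_mul, map_pow, f.map_neg, map_one, one_pow, one_mul]
  · rw [padeRemainder, ← pade_identity_aeval]
    linear_combination -((-1) ^ N * (padePoly N).aeval (1 - x)) * hz
  · rw [padeRemainder, ← pade_identity_aeval]
    linear_combination (padePoly N).aeval x * hz

lemma padeRemainder_mul_localMax_le_abv (f : AbsoluteValue K ℝ) {N : ℕ} {x z₁ z₂ : K}
    (hz : z₁ * x ^ (2 * N + 1) + z₂ * (1 - x) ^ (2 * N + 1) = 1) :
    f (padeRemainder N x z₁ z₂) * localMax f x (1 - x) ^ (2 * N + 1) ≤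
      2 * (2 * 32 ^ N * localMax f x (1 - x) ^ N * localMax f z₁ z₂) := by
  have h1 := one_le_localMax f x (1 - x)
  have hbound {p : ℤ[X]} (hp : p.natDegree ≤ N)
      (hcoeff : ∑ m ∈ Finset.range (N + 1), |(p.coeff m : ℝ)| ≤ 2 * 32 ^ N) {t : K}
      (ht : f t ≤ localMax f x (1 - x)) :
      f (p.aeval t) ≤ 2 * 32 ^ N * localMax f x (1 - x) ^ N :=
    (abv_aeval_le f hp h1 ht).trans (mul_le_mul_of_nonneg_right hcoeff (by positivity))
  exact padeRemainder_mul_localMax_le (abv_sub_le f) hz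
    (hbound (natDegree_padePoly_le N) (sum_abs_padePoly_coeff_le N) (left_le_localMax _ _ _))
    (hbound (natDegree_padePoly_le N) (sum_abs_padePoly_coeff_le N) (right_le_localMax _ _ _))
    (hbound (natDegree_reflect_padePoly_le N) (sum_abs_reflect_padePoly_coeff_le N)
      (left_le_localMax _ _ _))

lemma padeRemainder_mul_localMax_le_of_isNonarchimedean (hf : IsNonarchimedean f) {N : ℕ}
    {x z₁ z₂ : K} (hz : z₁ * x ^ (2 * N + 1) + z₂ * (1 - x) ^ (2 * N + 1) = 1) :
    f (padeRemainder N x z₁ z₂) * localMax f x (1 - x) ^ (2 * N + 1) ≤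
      1 * (localMax f x (1 - x) ^ N * localMax f z₁ z₂) := by
  have h1 := one_le_localMax f x (1 - x)
  exact padeRemainder_mul_localMax_le (abv_sub_le_of_isNonarchimedean hf) hz
    (abv_aeval_le_of_isNonarchimedean hf (natDegree_padePoly_le N) h1 (left_le_localMax _ _ _))
    (abv_aeval_le_of_isNonarchimedean hf (natDegree_padePoly_le N) h1 (right_le_localMax _ _ _))
    (abv_aeval_le_of_isNonarchimedean hf (natDegree_reflect_padePoly_le N) h1
      (left_le_localMax _ _ _))

lemma padeRemainder_ne_zero_or [CharZero K] (N : ℕ) {x y : K} (hx : x ≠ 0) (hx' : 1 - x ≠ 0)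
    (hx6 : x ^ 2 - x + 1 ≠ 0) (hy : y ≠ 0) (hy' : 1 - y ≠ 0) :
    ∃ M, (M = N ∨ M = N + 1) ∧
      padeRemainder M x (y / x ^ (2 * M + 1)) ((1 - y) / (1 - x) ^ (2 * M + 1)) ≠ 0 := by
  by_contra! h
  have h₁ := h N (.inl rfl)
  have h₂ := h (N + 1) (.inr rfl)
  apply pade_independent N hx6
  simp only [padeRemainder, show 2 * (N + 1) + 1 = 2 * N + 1 + 2 by ring] at h₁ h₂
  generalize (padePoly N).aeval x = a at *
  generalize (padePoly N).aeval (1 - x) = a' at *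
  generalize (padePoly (N + 1)).aeval x = b at *
  generalize (padePoly (N + 1)).aeval (1 - x) = b' at *
  have hs : (-1 : K) ^ N ≠ 0 := pow_ne_zero _ (neg_ne_zero.2 one_ne_zero)
  rw [pow_add x, pow_succ (-1 : K)] at h₂
  rw [pow_add (1 - x)] at h₂
  have hu : x ^ (2 * N + 1) ≠ 0 := pow_ne_zero _ hx
  have hv : (1 - x) ^ (2 * N + 1) ≠ 0 := pow_ne_zero _ hx'
  generalize x ^ (2 * N + 1) = u at *
  generalize (1 - x) ^ (2 * N + 1) = v at *
  generalize (-1 : K) ^ N = s at *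
  have e₁ : a * (1 - y) * u = s * a' * y * v := by
    rw [sub_eq_zero] at h₁
    field_simp at h₁
    linear_combination h₁
  have e₂ : b * (1 - y) * (u * x ^ 2) = -(s * b' * y * (v * (1 - x) ^ 2)) := by
    rw [sub_eq_zero] at h₂
    field_simp at h₂
    linear_combination h₂
  refine (mul_eq_zero.1 (?_ : (1 - y) * y * u * v * s * _ = 0)).resolve_left (by positivity)
  linear_combination (s * b' * y * v * (1 - x) ^ 2) * e₁ + (s * a' * y * v) * e₂

end PadeRemainder

section AnharmonicForm

lemma mul_mul_one_sub_add_sq_le {a b : ℝ} (ha : 0 ≤ a) (ha1 : a ≤ 1) (hb : 0 ≤ b) (hb1 : b ≤ 1) :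
    a * b * (1 - (a + b) + (a + b) ^ 2 - 3 * (a * b)) ≤ 4 / 27 := by
  have hab : 0 ≤ a * b := mul_nonneg ha hb
  have hab1 : a * b ≤ 1 := mul_le_one₀ ha1 hb hb1
  have hfactor : 1 - (a + b) + (a + b) ^ 2 - 3 * (a * b) ≤ (1 - a * b) ^ 2 := by
    have : 0 ≤ (1 - a) * (1 - b) * (a + b + a * b) :=
      mul_nonneg (mul_nonneg (sub_nonneg.2 ha1) (sub_nonneg.2 hb1)) (by positivity)
    nlinarith
  have hcubic : a * b * (1 - a * b) ^ 2 ≤ 4 / 27 := by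
    have : 0 ≤ (a * b - 1 / 3) ^ 2 * (4 / 3 - a * b) := mul_nonneg (sq_nonneg _) (by linarith)
    nlinarith
  exact (mul_le_mul_of_nonneg_left hfactor hab).trans hcubic

lemma four_div_twentySeven_le_exp_sq : (4 / 27 : ℝ) ≤ Real.exp (-(95 / 100)) ^ 2 := by
  have hexp : Real.exp (19 / 10) ^ 10 ≤ (27 / 4) ^ 10 :=
    calc Real.exp (19 / 10) ^ 10 = Real.exp 1 ^ 19 := by
          rw [← Real.exp_nat_mul, ← Real.exp_nat_mul]; norm_num
      _ ≤ 2.7182818286 ^ 19 := pow_le_pow_left₀ (Real.exp_pos 1).le Real.exp_one_lt_d9.le 19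
      _ ≤ (27 / 4) ^ 10 := by norm_num
  have hle : Real.exp (19 / 10) ≤ 27 / 4 :=
    le_of_pow_le_pow_left₀ (by norm_num) (by norm_num) hexp
  calc (4 / 27 : ℝ) = (27 / 4)⁻¹ := by norm_num
    _ ≤ (Real.exp (19 / 10))⁻¹ := inv_anti₀ (Real.exp_pos _) hle
    _ = Real.exp (-(95 / 100)) ^ 2 := by
      rw [← Real.exp_neg, ← Real.exp_nat_mul]; norm_num

/-- The form `x (1 - x) (x ^ 2 - x + 1)`, of which a local upper bound in terms of `localMax` gives,
by the product formula, a lower bound for the height of `x`. It is invariant up to sign under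
`x ↦ 1 - x`, and under `x ↦ 1 / x` up to sign and a fifth power of `x`. -/
def anharmonicForm {R : Type*} [Ring R] (x : R) : R := x * (1 - x) * (x ^ 2 - x + 1)

lemma norm_anharmonicForm_le_of_norm_le_one {u : ℂ} (h : ‖u‖ ≤ 1) (h' : ‖1 - u‖ ≤ 1) :
    ‖anharmonicForm u‖ ≤ Real.exp (-(95 / 100)) := by
  refine le_of_sq_le_sq (le_trans ?_ four_div_twentySeven_le_exp_sq) (Real.exp_pos _).le
  have hu : ‖u‖ ^ 2 = u.re ^ 2 + u.im ^ 2 := by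
    rw [Complex.sq_norm, Complex.normSq_apply]; ring
  have hu' : ‖1 - u‖ ^ 2 = (1 - u.re) ^ 2 + u.im ^ 2 := by
    rw [Complex.sq_norm, Complex.normSq_apply]; simp; ring
  have hq : ‖u ^ 2 - u + 1‖ ^ 2 = 1 - (‖u‖ ^ 2 + ‖1 - u‖ ^ 2) + (‖u‖ ^ 2 + ‖1 - u‖ ^ 2) ^ 2
      - 3 * (‖u‖ ^ 2 * ‖1 - u‖ ^ 2) := by
    rw [hu, hu', Complex.sq_norm, Complex.normSq_apply]; simp [pow_two]; ring
  rw [anharmonicForm, norm_mul, norm_mul, mul_pow, mul_pow, hq]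
  exact mul_mul_one_sub_add_sq_le (by positivity) (pow_le_one₀ (norm_nonneg _) h) (by positivity)
    (pow_le_one₀ (norm_nonneg _) h')

lemma norm_anharmonicForm_le_of_one_le_norm {x : ℂ} (hx : 1 ≤ ‖x‖) (h : ‖1 - x‖ ≤ ‖x‖) :
    ‖anharmonicForm x‖ ≤ Real.exp (-(95 / 100)) * ‖x‖ ^ 5 := by
  have hpos : 0 < ‖x‖ := one_pos.trans_le hx
  have hx0 : x ≠ 0 := norm_pos_iff.1 hpos
  have hinv : anharmonicForm (1 / x) = -(anharmonicForm x / x ^ 5) := by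
    simp only [anharmonicForm]; field_simp; ring
  rw [← div_le_iff₀ (by positivity), ← norm_pow, ← norm_div, ← norm_neg, ← hinv]
  refine norm_anharmonicForm_le_of_norm_le_one ?_ ?_
  · rwa [norm_div, norm_one, div_le_one hpos]
  · rwa [show 1 - 1 / x = -((1 - x) / x) by field_simp; ring, norm_neg, norm_div, div_le_one hpos]

lemma norm_anharmonicForm_le (x : ℂ) :
    ‖anharmonicForm x‖ ≤ Real.exp (-(95 / 100)) * max (max ‖x‖ ‖1 - x‖) 1 ^ 5 := by
  rcases le_total (max ‖x‖ ‖1 - x‖) 1 with h | h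
  · rw [max_eq_right h, one_pow, mul_one]
    exact norm_anharmonicForm_le_of_norm_le_one (max_le_iff.1 h).1 (max_le_iff.1 h).2
  rw [max_eq_left h]
  rcases le_total ‖1 - x‖ ‖x‖ with h' | h'
  · rw [max_eq_left h'] at h ⊢
    exact norm_anharmonicForm_le_of_one_le_norm h h'
  · rw [max_eq_right h'] at h ⊢
    have hsymm : anharmonicForm x = anharmonicForm (1 - x) := by simp only [anharmonicForm]; ring
    rw [hsymm]
    exact norm_anharmonicForm_le_of_one_le_norm h (by rwa [sub_sub_cancel])

lemma abv_anharmonicForm_le_of_isNonarchimedean {K : Type*} [Field K] {f : AbsoluteValue K ℝ}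
    (hf : IsNonarchimedean f) (x : K) : f (anharmonicForm x) ≤ localMax f x (1 - x) ^ 5 := by
  have h1 := one_le_localMax f x (1 - x)
  have hx := left_le_localMax f x (1 - x)
  have hx' := right_le_localMax f x (1 - x)
  have hpoly : x ^ 2 - x + 1 = 1 - x * (1 - x) := by ring
  rw [anharmonicForm, map_mul, map_mul, hpoly]
  have hq : f (1 - x * (1 - x)) ≤ localMax f x (1 - x) ^ 2 := by
    refine (abv_sub_le_of_isNonarchimedean hf _ _).trans ?_
    rw [one_mul, map_one, map_mul, pow_two]
    exact max_le (one_le_mul_of_one_le_of_one_le h1 h1)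
      (mul_le_mul hx hx' (f.nonneg _) (localMax_pos _ _ _).le)
  calc f x * f (1 - x) * f (1 - x * (1 - x))
      ≤ localMax f x (1 - x) * localMax f x (1 - x) * localMax f x (1 - x) ^ 2 := by
        gcongr
    _ = localMax f x (1 - x) ^ 4 := by ring
    _ ≤ localMax f x (1 - x) ^ 5 := pow_le_pow_right₀ h1 (by norm_num)

end AnharmonicForm

section Sectors

lemma norm_polar_sub_polar_le_max {r s a b : ℝ} (hr : 0 ≤ r) (hs : 0 ≤ s)
    (hab : |a - b| ≤ Real.pi / 3) :
    ‖(r : ℂ) * Complex.exp (a * Complex.I) - s * Complex.exp (b * Complex.I)‖ ≤ max r s := by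
  refine le_of_sq_le_sq ?_ (le_max_of_le_left hr)
  have hcos : 1 / 2 ≤ Real.cos (a - b) := by
    rw [← Real.cos_pi_div_three, ← Real.cos_abs (a - b)]
    exact Real.cos_le_cos_of_nonneg_of_le_pi (abs_nonneg _) (by linarith [Real.pi_pos]) hab
  have hlaw : ‖(r : ℂ) * Complex.exp (a * Complex.I) - s * Complex.exp (b * Complex.I)‖ ^ 2 =
      r ^ 2 + s ^ 2 - 2 * (r * s * Real.cos (a - b)) := by
    rw [Complex.sq_norm, Complex.normSq_apply, Complex.exp_mul_I, Complex.exp_mul_I, Real.cos_sub]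
    simp only [← Complex.ofReal_cos, ← Complex.ofReal_sin, Complex.sub_re, Complex.mul_re,
      Complex.add_re, Complex.ofReal_re, Complex.ofReal_im, Complex.I_re, Complex.I_im,
      Complex.add_im, Complex.mul_im, Complex.sub_im]
    linear_combination r ^ 2 * Real.sin_sq_add_cos_sq a + s ^ 2 * Real.sin_sq_add_cos_sq b
  rw [hlaw]
  have hrs : r * s * (1 / 2) ≤ r * s * Real.cos (a - b) :=
    mul_le_mul_of_nonneg_left hcos (mul_nonneg hr hs)
  rcases max_cases r s with ⟨h, h'⟩ | ⟨h, h'⟩ <;> rw [h] <;> nlinarith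

/-- The index of the sector of angle `π / 6` containing `z`; the thirteenth sector is the negative
real axis, where `arg = π`. -/
noncomputable def argSector (z : ℂ) : Fin 13 := Fin.ofNat 13 ⌊(z.arg + Real.pi) * 6 / Real.pi⌋₊

lemma abs_arg_sub_arg_le_of_argSector_eq {z w : ℂ} (h : argSector z = argSector w) :
    |z.arg - w.arg| ≤ Real.pi / 6 := by
  have hpi := Real.pi_pos
  have hnonneg (z : ℂ) : 0 ≤ (z.arg + Real.pi) * 6 / Real.pi :=
    div_nonneg (by linarith [Complex.neg_pi_lt_arg z]) hpi.le
  have hlt (z : ℂ) : ⌊(z.arg + Real.pi) * 6 / Real.pi⌋₊ < 13 := by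
    rw [Nat.floor_lt (hnonneg z), div_lt_iff₀ hpi]
    push_cast
    linarith [Complex.arg_le_pi z]
  have hfloor : ⌊(z.arg + Real.pi) * 6 / Real.pi⌋₊ = ⌊(w.arg + Real.pi) * 6 / Real.pi⌋₊ := by
    have := congrArg Fin.val h
    simp only [argSector, Fin.val_ofNat] at this
    rwa [Nat.mod_eq_of_lt (hlt z), Nat.mod_eq_of_lt (hlt w)] at this
  have hdist : |(z.arg + Real.pi) * 6 / Real.pi - (w.arg + Real.pi) * 6 / Real.pi| < 1 :=
    Int.abs_sub_lt_one_of_floor_eq_floor (by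
      rw [← Int.natCast_floor_eq_floor (hnonneg z), hfloor,
        Int.natCast_floor_eq_floor (hnonneg w)])
  rw [show (z.arg + Real.pi) * 6 / Real.pi - (w.arg + Real.pi) * 6 / Real.pi =
    (z.arg - w.arg) * (6 / Real.pi) by ring, abs_mul, abs_of_pos (by positivity : 0 < 6 / Real.pi),
    ← lt_div_iff₀ (by positivity), one_div_div] at hdist
  exact hdist.le

lemma div_eq_norm_mul_exp_arg_sub_arg (y x : ℂ) :
    y / x = ((‖y / x‖ : ℝ) : ℂ) * Complex.exp ((y.arg - x.arg : ℝ) * Complex.I) := by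
  conv_lhs => rw [← Complex.norm_mul_exp_arg_mul_I y, ← Complex.norm_mul_exp_arg_mul_I x]
  rw [norm_div]
  push_cast
  rw [sub_mul, Complex.exp_sub, mul_div_mul_comm]

lemma norm_div_sub_one_le_of_argSector_eq {x y : ℂ} (h : argSector x = argSector y) :
    ‖y / x - 1‖ ≤ max ‖y / x‖ 1 := by
  have harg := abs_arg_sub_arg_le_of_argSector_eq h.symm
  have hnorm := norm_polar_sub_polar_le_max (r := ‖y / x‖) (s := 1) (a := y.arg - x.arg) (b := 0)
    (norm_nonneg _) zero_le_one (by rw [sub_zero]; linarith [Real.pi_pos])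
  rw [← div_eq_norm_mul_exp_arg_sub_arg] at hnorm
  simpa using hnorm

lemma norm_div_sub_div_le_of_argSector_eq {x y x' y' : ℂ} (h : argSector x = argSector y)
    (h' : argSector x' = argSector y') : ‖y' / x' - y / x‖ ≤ max ‖y / x‖ ‖y' / x'‖ := by
  have harg := abs_arg_sub_arg_le_of_argSector_eq h.symm
  have harg' := abs_arg_sub_arg_le_of_argSector_eq h'.symm
  have hnorm := norm_polar_sub_polar_le_max (a := y'.arg - x'.arg) (b := y.arg - x.arg)
    (norm_nonneg (y' / x')) (norm_nonneg (y / x)) (by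
      rw [abs_le] at *
      constructor <;> linarith [harg.1, harg.2, harg'.1, harg'.2])
  rwa [← div_eq_norm_mul_exp_arg_sub_arg, ← div_eq_norm_mul_exp_arg_sub_arg, max_comm] at hnorm

end Sectors

/-! ### Exceptional units for a family of places -/

/-- Finitely many weighted absolute values on `K`, some of them archimedean (given by complex
embeddings), and a subring of elements that are integral at all the other places; the product
formula enters through `sum_log_nonneg`. -/
structure Places (K ι : Type*) [Field K] [Fintype ι] where
  abv : ι → AbsoluteValue K ℝ
  weight : ι → ℝ
  weight_nonneg : ∀ i, 0 ≤ weight i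
  IsArch : ι → Prop
  isNonarchimedean : ∀ i, ¬IsArch i → IsNonarchimedean (abv i)
  embedding : ∀ i, IsArch i → K →+* ℂ
  abv_eq_norm : ∀ i (hi : IsArch i) x, abv i x = ‖embedding i hi x‖
  integers : Subring K
  sum_log_nonneg : ∀ l ∈ integers, l ≠ 0 → 0 ≤ ∑ i, weight i * Real.log (abv i l)

/-- An exceptional unit of a subring `O` of a field: both `x` and `1 - x` are units of `O`. -/
structure IsExceptionalUnit {K : Type*} [Field K] (O : Subring K) (x : K) : Prop where
  ne_zero : x ≠ 0
  one_sub_ne_zero : 1 - x ≠ 0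
  mem : x ∈ O
  inv_mem : x⁻¹ ∈ O
  one_sub_inv_mem : (1 - x)⁻¹ ∈ O

lemma IsExceptionalUnit.one_sub_mem {K : Type*} [Field K] {O : Subring K} {x : K}
    (hx : IsExceptionalUnit O x) : 1 - x ∈ O :=
  O.sub_mem O.one_mem hx.mem

namespace Places
variable {K ι : Type*} [Field K] [Fintype ι] (D : Places K ι)

/-- The logarithmic embedding of a pair of nonzero elements. -/
noncomputable def logVec (a b : K) : ι → ℝ × ℝ :=
  fun i => (D.weight i * Real.log (D.abv i a), D.weight i * Real.log (D.abv i b))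

/-- The total weight of the archimedean places; for a number field, its degree. -/
noncomputable def archDegree : ℝ := ∑ i, if D.IsArch i then D.weight i else 0

lemma heightGauge_logVec {a b : K} (ha : a ≠ 0) (hb : b ≠ 0) :
    heightGauge (D.logVec a b) = ∑ i, D.weight i * Real.log (localMax (D.abv i) a b) := by
  refine Finset.sum_congr rfl fun i _ => ?_
  rw [log_localMax _ ha hb, mul_max_of_nonneg _ _ (D.weight_nonneg i),
    mul_max_of_nonneg _ _ (D.weight_nonneg i), mul_zero]
  rfl

lemma logVec_one_one : D.logVec 1 1 = 0 := by
  ext i <;> simp [logVec]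

lemma logVec_div_pow {x₁ x₂ y₁ y₂ : K} (hx₁ : x₁ ≠ 0) (hx₂ : x₂ ≠ 0) (hy₁ : y₁ ≠ 0)
    (hy₂ : y₂ ≠ 0) (k : ℕ) :
    D.logVec (y₁ / x₁ ^ k) (y₂ / x₂ ^ k) = D.logVec y₁ y₂ - (k : ℝ) • D.logVec x₁ x₂ := by
  have hlog (i : ι) {x y : K} (hx : x ≠ 0) (hy : y ≠ 0) :
      D.weight i * Real.log (D.abv i (y / x ^ k)) =
        D.weight i * Real.log (D.abv i y) - k * (D.weight i * Real.log (D.abv i x)) := by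
    rw [map_div₀, map_pow, Real.log_div ((D.abv i).ne_zero hy)
      (pow_ne_zero _ ((D.abv i).ne_zero hx)), Real.log_pow]
    ring
  ext i
  · exact hlog i hx₁ hy₁
  · exact hlog i hx₂ hy₂

/-- Summing a local inequality over all places, the integral element `l` drops out because of the
product formula. -/
lemma mul_heightGauge_logVec_le {l z₁ z₂ x₁ x₂ : K} (hl : l ∈ D.integers) (hl0 : l ≠ 0)
    (hz₁ : z₁ ≠ 0) (hz₂ : z₂ ≠ 0) (hx₁ : x₁ ≠ 0) (hx₂ : x₂ ≠ 0) {k M : ℕ} {b : ℝ}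
    (h : ∀ i, D.abv i l * localMax (D.abv i) x₁ x₂ ^ k ≤
      (if D.IsArch i then Real.exp b else 1) *
        (localMax (D.abv i) x₁ x₂ ^ M * localMax (D.abv i) z₁ z₂)) :
    k * heightGauge (D.logVec x₁ x₂) ≤
      D.archDegree * b + M * heightGauge (D.logVec x₁ x₂) + heightGauge (D.logVec z₁ z₂) := by
  have hlocal (i : ι) : D.weight i * Real.log (D.abv i l) +
      k * (D.weight i * Real.log (localMax (D.abv i) x₁ x₂)) ≤
      (if D.IsArch i then D.weight i else 0) * b +
        M * (D.weight i * Real.log (localMax (D.abv i) x₁ x₂)) +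
        D.weight i * Real.log (localMax (D.abv i) z₁ z₂) := by
    have hlpos := (D.abv i).pos hl0
    have hxpos := localMax_pos (D.abv i) x₁ x₂
    have hzpos := localMax_pos (D.abv i) z₁ z₂
    have hlog := Real.log_le_log (by positivity) (h i)
    rw [Real.log_mul (by positivity) (by positivity),
      Real.log_mul (by split_ifs <;> positivity) (by positivity),
      Real.log_mul (by positivity) (by positivity), Real.log_pow, Real.log_pow,
      apply_ite Real.log, Real.log_exp, Real.log_one] at hlog
    have hweight := mul_le_mul_of_nonneg_left hlog (D.weight_nonneg i)
    split_ifs at hweight ⊢ <;> linarith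
  have hsum := Finset.sum_le_sum fun i (_ : i ∈ Finset.univ) => hlocal i
  simp only [Finset.sum_add_distrib, ← Finset.sum_mul, ← Finset.mul_sum,
    ← D.heightGauge_logVec hx₁ hx₂, ← D.heightGauge_logVec hz₁ hz₂] at hsum
  have := D.sum_log_nonneg l hl hl0
  unfold archDegree
  linarith

lemma sum_log_eq_zero {x : K} (hx : x ≠ 0) (hmem : x ∈ D.integers) (hinv : x⁻¹ ∈ D.integers) :
    ∑ i, D.weight i * Real.log (D.abv i x) = 0 := by
  refine le_antisymm ?_ (D.sum_log_nonneg x hmem hx)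
  have h := D.sum_log_nonneg x⁻¹ hinv (inv_ne_zero hx)
  simp only [map_inv₀, Real.log_inv, mul_neg, Finset.sum_neg_distrib] at h
  exact neg_nonneg.1 h

variable {D} {x y : K}

lemma sum_logVec_eq_zero (hx : IsExceptionalUnit D.integers x) :
    ∑ i, D.logVec x (1 - x) i = 0 := by
  ext
  · rw [Prod.fst_sum]; exact D.sum_log_eq_zero hx.ne_zero hx.mem hx.inv_mem
  · rw [Prod.snd_sum]
    exact D.sum_log_eq_zero hx.one_sub_ne_zero hx.one_sub_mem hx.one_sub_inv_mem

theorem le_heightGauge_logVec (hx : IsExceptionalUnit D.integers x) (hx6 : x ^ 2 - x + 1 ≠ 0) :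
    19 / 100 * D.archDegree ≤ heightGauge (D.logVec x (1 - x)) := by
  have hmem : anharmonicForm x ∈ D.integers :=
    D.integers.mul_mem (D.integers.mul_mem hx.mem hx.one_sub_mem) (D.integers.add_mem
      (D.integers.sub_mem (D.integers.pow_mem hx.mem 2) hx.mem) D.integers.one_mem)
  have h := D.mul_heightGauge_logVec_le hmem
    (mul_ne_zero (mul_ne_zero hx.ne_zero hx.one_sub_ne_zero) hx6) one_ne_zero one_ne_zero
    hx.ne_zero hx.one_sub_ne_zero (k := 0) (M := 5) (b := -(95 / 100)) fun i => by
      rw [show localMax (D.abv i) 1 1 = 1 by simp [localMax], pow_zero, mul_one, mul_one]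
      split_ifs with hi
      · have hx := norm_anharmonicForm_le (D.embedding i hi x)
        simpa [localMax, anharmonicForm, D.abv_eq_norm i hi] using hx
      · rw [one_mul]
        exact abv_anharmonicForm_le_of_isNonarchimedean (D.isNonarchimedean i hi) x
  rw [logVec_one_one, show heightGauge (0 : ι → ℝ × ℝ) = 0 by simp [heightGauge]] at h
  push_cast at h
  linarith

lemma abv_sub_mul_localMax_le (hx : x ≠ 0) (hx' : 1 - x ≠ 0) (i : ι)
    (hsector : ∀ hi : D.IsArch i, argSector (D.embedding i hi x) = argSector (D.embedding i hi y) ∧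
      argSector (D.embedding i hi (1 - x)) = argSector (D.embedding i hi (1 - y))) :
    D.abv i ((1 - y) / (1 - x) - y / x) * localMax (D.abv i) x (1 - x) ≤
      localMax (D.abv i) (y / x) ((1 - y) / (1 - x)) := by
  have h₁ : ((1 - y) / (1 - x) - y / x) * x = (1 - y) / (1 - x) - 1 := by field_simp; ring
  have h₂ : ((1 - y) / (1 - x) - y / x) * (1 - x) = 1 - y / x := by field_simp; ring
  by_cases hi : D.IsArch i
  · obtain ⟨hs, hs'⟩ := hsector hi
    have hdiff := norm_div_sub_div_le_of_argSector_eq hs hs'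
    have hone := norm_div_sub_one_le_of_argSector_eq hs
    have hone' := norm_div_sub_one_le_of_argSector_eq hs'
    rw [norm_sub_rev] at hone
    simp only [← map_div₀, ← map_sub, ← map_one (D.embedding i hi), ← D.abv_eq_norm i hi]
      at hdiff hone hone'
    refine mul_localMax_le_of_le (hdiff.trans (le_max_left _ _)) ?_ ?_
    · rw [h₁]
      exact hone'.trans (max_le (right_le_localMax _ _ _) (one_le_localMax _ _ _))
    · rw [h₂]
      exact hone.trans (max_le (left_le_localMax _ _ _) (one_le_localMax _ _ _))
  · have h := mul_localMax_le_of_linear_forms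
      (abv_sub_le_of_isNonarchimedean (D.isNonarchimedean i hi)) (A := 1) (B := 1) (C := 1)
      (D := 1) (z₁ := y / x) (z₂ := (1 - y) / (1 - x)) (map_one _).le (map_one _).le (map_one _).le
      (by rw [one_mul, one_mul]) (h₁.trans (by rw [one_mul])) (h₂.trans (by rw [one_mul]))
    rwa [one_mul, one_mul] at h

theorem heightGauge_logVec_le_sub (hx : IsExceptionalUnit D.integers x)
    (hy : IsExceptionalUnit D.integers y) (hne : x ≠ y)
    (hsector : ∀ i (hi : D.IsArch i),
      argSector (D.embedding i hi x) = argSector (D.embedding i hi y) ∧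
      argSector (D.embedding i hi (1 - x)) = argSector (D.embedding i hi (1 - y))) :
    heightGauge (D.logVec x (1 - x)) ≤
      heightGauge (D.logVec y (1 - y) - D.logVec x (1 - x)) := by
  obtain ⟨hx0, hx1, -, hxinv, hx1inv⟩ := id hx
  have hvec := D.logVec_div_pow hx0 hx1 hy.ne_zero hy.one_sub_ne_zero 1
  rw [pow_one, pow_one, Nat.cast_one, one_smul] at hvec
  have hmem : (1 - y) / (1 - x) - y / x ∈ D.integers := by
    rw [div_eq_mul_inv, div_eq_mul_inv]
    exact D.integers.sub_mem (D.integers.mul_mem hy.one_sub_mem hx1inv)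
      (D.integers.mul_mem hy.mem hxinv)
  have hne0 : (1 - y) / (1 - x) - y / x ≠ 0 := by
    rw [show (1 - y) / (1 - x) - y / x = (x - y) / ((1 - x) * x) by field_simp; ring]
    exact div_ne_zero (sub_ne_zero.2 hne) (mul_ne_zero hx1 hx0)
  have h := D.mul_heightGauge_logVec_le hmem hne0 (div_ne_zero hy.ne_zero hx0)
    (div_ne_zero hy.one_sub_ne_zero hx1) hx0 hx1 (k := 1) (M := 0) (b := 0) fun i => by
      rw [Real.exp_zero, ite_self, pow_zero, one_mul, one_mul, pow_one]
      exact abv_sub_mul_localMax_le hx0 hx1 i (hsector i)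
  rw [hvec] at h
  push_cast at h
  linarith

lemma mul_heightGauge_logVec_le_of_padeRemainder_ne_zero (hx : IsExceptionalUnit D.integers x)
    (hy : IsExceptionalUnit D.integers y) {M : ℕ}
    (hne : padeRemainder M x (y / x ^ (2 * M + 1)) ((1 - y) / (1 - x) ^ (2 * M + 1)) ≠ 0) :
    (M + 1) * heightGauge (D.logVec x (1 - x)) ≤
      heightGauge (D.logVec y (1 - y) - (2 * M + 1 : ℝ) • D.logVec x (1 - x)) +
        D.archDegree * (Real.log 4 + M * Real.log 32) := by
  obtain ⟨hx0, hx1, -, hxinv, hx1inv⟩ := id hx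
  have hxk : x ^ (2 * M + 1) ≠ 0 := pow_ne_zero _ hx0
  have hxk' : (1 - x) ^ (2 * M + 1) ≠ 0 := pow_ne_zero _ hx1
  have hvec := D.logVec_div_pow hx0 hx1 hy.ne_zero hy.one_sub_ne_zero (2 * M + 1)
  have hline : y / x ^ (2 * M + 1) * x ^ (2 * M + 1) +
      (1 - y) / (1 - x) ^ (2 * M + 1) * (1 - x) ^ (2 * M + 1) = 1 := by
    rw [div_mul_cancel₀ _ hxk, div_mul_cancel₀ _ hxk', add_sub_cancel]
  have hmem : padeRemainder M x (y / x ^ (2 * M + 1)) ((1 - y) / (1 - x) ^ (2 * M + 1)) ∈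
      D.integers := by
    rw [div_eq_mul_inv, div_eq_mul_inv, ← inv_pow, ← inv_pow]
    exact padeRemainder_mem M hx.mem
      (D.integers.mul_mem hy.mem (D.integers.pow_mem hxinv _))
      (D.integers.mul_mem hy.one_sub_mem (D.integers.pow_mem hx1inv _))
  have hexp : Real.exp (Real.log 4 + M * Real.log 32) = 2 * (2 * 32 ^ M) := by
    rw [Real.exp_add, Real.exp_log (by norm_num), Real.exp_nat_mul, Real.exp_log (by norm_num)]
    ring
  have h := D.mul_heightGauge_logVec_le hmem hne (div_ne_zero hy.ne_zero hxk)
    (div_ne_zero hy.one_sub_ne_zero hxk') hx0 hx1 (M := M)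
    (b := Real.log 4 + M * Real.log 32) fun i => by
      split_ifs with hi
      · rw [hexp]
        exact (padeRemainder_mul_localMax_le_abv (D.abv i) hline).trans_eq (by ring)
      · exact padeRemainder_mul_localMax_le_of_isNonarchimedean (D.isNonarchimedean i hi) hline
  rw [hvec] at h
  push_cast at h
  linarith

theorem exists_mul_heightGauge_logVec_le [CharZero K] (hx : IsExceptionalUnit D.integers x)
    (hx6 : x ^ 2 - x + 1 ≠ 0) (hy : IsExceptionalUnit D.integers y) (N : ℕ) :
    ∃ M : ℕ, (M = N ∨ M = N + 1) ∧ (M + 1) * heightGauge (D.logVec x (1 - x)) ≤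
      heightGauge (D.logVec y (1 - y) - (2 * M + 1 : ℝ) • D.logVec x (1 - x)) +
        D.archDegree * (Real.log 4 + M * Real.log 32) := by
  obtain ⟨M, hM, hne⟩ := padeRemainder_ne_zero_or N hx.ne_zero hx.one_sub_ne_zero hx6 hy.ne_zero
    hy.one_sub_ne_zero
  exact ⟨M, hM, mul_heightGauge_logVec_le_of_padeRemainder_ne_zero hx hy hne⟩

end Places

section SumZeroOn
variable {ι E : Type*} [Fintype ι] [AddCommGroup E] [Module ℝ E]

/-- The families with sum zero that are supported on `S`. -/
def sumZeroOn (E : Type*) [AddCommGroup E] [Module ℝ E] (S : Finset ι) : Submodule ℝ (ι → E) where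
  carrier := {w | ∑ i, w i = 0 ∧ ∀ i ∉ S, w i = 0}
  zero_mem' := by simp
  add_mem' := by
    rintro v w ⟨hv, hv'⟩ ⟨hw, hw'⟩
    exact ⟨by simp [Finset.sum_add_distrib, hv, hw], fun i hi => by simp [hv' i hi, hw' i hi]⟩
  smul_mem' := by
    rintro c w ⟨hw, hw'⟩
    exact ⟨by simp [← Finset.smul_sum, hw], fun i hi => by simp [hw' i hi]⟩

lemma mem_span_sup_sumZeroOn {S : Finset ι} {w₀ w : ι → E} (hw₀ : ∑ i, w₀ i = 0)
    (hw : ∑ i, w i = 0) (heq : ∀ i ∉ S, w i = w₀ i) :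
    w ∈ Submodule.span ℝ {w₀} ⊔ sumZeroOn E S := by
  refine Submodule.mem_sup.2 ⟨w₀, Submodule.mem_span_singleton_self w₀, w - w₀, ⟨?_, ?_⟩,
    add_sub_cancel _ _⟩
  · simp [hw, hw₀]
  · exact fun i hi => sub_eq_zero.2 (heq i hi)

variable [Module.Finite ℝ E]

lemma finrank_sumZeroOn_le {S : Finset ι} (hS : S.Nonempty) :
    Module.finrank ℝ (sumZeroOn E S) ≤ (S.card - 1) * Module.finrank ℝ E := by
  obtain ⟨i₀, hi₀⟩ := hS
  let restrict : sumZeroOn E S →ₗ[ℝ] (S.erase i₀ → E) :=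
    LinearMap.funLeft ℝ E (Subtype.val : S.erase i₀ → ι) ∘ₗ (sumZeroOn E S).subtype
  have hinj : Function.Injective restrict := by
    rw [injective_iff_map_eq_zero]
    rintro ⟨w, hsum, hsupp⟩ hw
    have hoff (i : ι) (hi : i ≠ i₀) : w i = 0 := by
      by_cases hiS : i ∈ S
      · exact congrFun hw ⟨i, Finset.mem_erase.2 ⟨hi, hiS⟩⟩
      · exact hsupp i hiS
    rw [Finset.sum_eq_single_of_mem i₀ (Finset.mem_univ _) fun i _ => hoff i] at hsum
    ext i
    rcases eq_or_ne i i₀ with rfl | hi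
    · exact hsum
    · exact hoff i hi
  have hle := LinearMap.finrank_le_finrank_of_injective hinj
  rwa [Module.finrank_pi_fintype, Finset.sum_const, Finset.card_univ, Fintype.card_coe,
    Finset.card_erase_of_mem hi₀, smul_eq_mul] at hle

lemma finrank_span_sup_sumZeroOn_le {S : Finset ι} (hS : S.Nonempty) (w₀ : ι → E) :
    Module.finrank ℝ ↑(Submodule.span ℝ {w₀} ⊔ sumZeroOn E S) ≤
      1 + (S.card - 1) * Module.finrank ℝ E :=
  (Submodule.finrank_add_le_finrank_add_finrank _ _).trans
    (add_le_add ((finrank_span_le_card _).trans (by simp)) (finrank_sumZeroOn_le hS))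

end SumZeroOn

theorem Places.card_exceptionalUnits_le {K ι : Type*} [Field K] [CharZero K] [Fintype ι]
    {D : Places K ι} (hD : 0 < D.archDegree) {S : Finset ι} (hS : S.Nonempty) {s : Finset K}
    (hs : ∀ x ∈ s, IsExceptionalUnit D.integers x) (hs6 : ∀ x ∈ s, x ^ 2 - x + 1 ≠ 0)
    (hconst : ∀ i ∉ S, ∀ x ∈ s, ∀ y ∈ s,
      D.abv i x = D.abv i y ∧ D.abv i (1 - x) = D.abv i (1 - y)) :
    s.card ≤ 17 ^ (2 * S.card - 1) * (20 * 169 ^ Fintype.card {i // D.IsArch i}) := by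
  rcases s.eq_empty_or_nonempty with rfl | ⟨x₀, hx₀⟩
  · simp
  have hrank : Module.finrank ℝ ↑(Submodule.span ℝ {D.logVec x₀ (1 - x₀)} ⊔
      sumZeroOn (ℝ × ℝ) S) ≤ 2 * S.card - 1 := by
    have := finrank_span_sup_sumZeroOn_le hS (D.logVec x₀ (1 - x₀))
    rw [Module.finrank_prod, Module.finrank_self] at this
    have := hS.card_pos
    omega
  have hcount := card_le_of_gap s (fun x => D.logVec x (1 - x)) _
    (fun x hx => mem_span_sup_sumZeroOn (sum_logVec_eq_zero (hs x₀ hx₀))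
      (sum_logVec_eq_zero (hs x hx)) fun i hi => by
        obtain ⟨h, h'⟩ := hconst i hi x hx x₀ hx₀
        simp only [logVec, h, h'])
    hrank (fun x hx => sum_logVec_eq_zero (hs x hx))
    (fun x (i : {i // D.IsArch i}) =>
      (argSector (D.embedding i i.2 x), argSector (D.embedding i i.2 (1 - x)))) hD
    (fun x hx => le_heightGauge_logVec (hs x hx) (hs6 x hx))
    (fun x hx y hy hne hsector => heightGauge_logVec_le_sub (hs x hx) (hs y hy) hne
      fun i hi => Prod.ext_iff.1 (congrFun hsector ⟨i, hi⟩))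
    (fun x hx y hy N => exists_mul_heightGauge_logVec_le (hs x hx) (hs6 x hx) (hs y hy) N)
  simpa using hcount

/-! ### Exceptional units of a number field -/

section NumberFieldPlaces

open NumberField.HeightOneSpectrum (adicAbv isNonarchimedean_adicAbv)

variable {K : Type*} [Field K] [NumberField K]

lemma finite_setOf_adicAbv_ne_one {x : K} (hx : x ≠ 0) :
    {v : HeightOneSpectrum (𝓞 K) | adicAbv K v x ≠ 1}.Finite := by
  refine ((FinitePlace.hasFiniteMulSupport hx).image
    FinitePlace.equivHeightOneSpectrum).subset fun v hv => ?_
  refine ⟨FinitePlace.equivHeightOneSpectrum.symm v, ?_, by simp⟩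
  rwa [Function.mem_mulSupport, FinitePlace.equivHeightOneSpectrum_symm_apply,
    FinitePlace.norm_embedding]

lemma prod_infinitePlace_mul_finprod_adicAbv {x : K} (hx : x ≠ 0) :
    (∏ w : InfinitePlace K, w x ^ w.mult) *
      ∏ᶠ v : HeightOneSpectrum (𝓞 K), adicAbv K v x = 1 := by
  rw [← prod_abs_eq_one hx, ← finprod_comp_equiv FinitePlace.equivHeightOneSpectrum.symm]
  congr 1
  refine finprod_congr fun v => ?_
  rw [FinitePlace.equivHeightOneSpectrum_symm_apply, FinitePlace.norm_embedding]

lemma sum_log_infinitePlace_add_sum_log_adicAbv {x : K} (hx : x ≠ 0)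
    {U : Finset (HeightOneSpectrum (𝓞 K))} (hU : ∀ v ∉ U, adicAbv K v x = 1) :
    ∑ w : InfinitePlace K, (w.mult : ℝ) * Real.log (w x) +
      ∑ v ∈ U, Real.log (adicAbv K v x) = 0 := by
  have hinf (w : InfinitePlace K) : w x ^ w.mult ≠ 0 := pow_ne_zero _ ((map_ne_zero w).2 hx)
  have hfin (v : HeightOneSpectrum (𝓞 K)) : adicAbv K v x ≠ 0 := (adicAbv K v).ne_zero hx
  have hprod := prod_infinitePlace_mul_finprod_adicAbv hx
  rw [finprod_eq_prod_of_mulSupport_subset (s := U) _ fun v hv =>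
    not_imp_comm.1 (hU v) hv] at hprod
  have hlog := congrArg Real.log hprod
  rw [Real.log_one, Real.log_mul (Finset.prod_ne_zero_iff.2 fun w _ => hinf w)
    (Finset.prod_ne_zero_iff.2 fun v _ => hfin v), Real.log_prod fun w _ => hinf w,
    Real.log_prod fun v _ => hfin v] at hlog
  simpa only [Real.log_pow] using hlog

lemma sum_log_infinitePlace_add_sum_log_adicAbv_nonneg {x : K} (hx : x ≠ 0)
    {U : Finset (HeightOneSpectrum (𝓞 K))} (hU : ∀ v ∉ U, adicAbv K v x ≤ 1) :
    0 ≤ ∑ w : InfinitePlace K, (w.mult : ℝ) * Real.log (w x) +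
      ∑ v ∈ U, Real.log (adicAbv K v x) := by
  set V := U ∪ (finite_setOf_adicAbv_ne_one hx).toFinset with hV
  have hV1 (v) (hv : v ∉ V) : adicAbv K v x = 1 := by
    by_contra h
    simp [hV, h] at hv
  have hle : ∑ v ∈ V, Real.log (adicAbv K v x) ≤ ∑ v ∈ U, Real.log (adicAbv K v x) :=
    Finset.sum_le_sum_of_subset_of_nonpos' Finset.subset_union_left fun v _ hv =>
      Real.log_nonpos ((adicAbv K v).nonneg x) (hU v hv)
  linarith [sum_log_infinitePlace_add_sum_log_adicAbv hx hV1]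

/-- The ring of elements of `K` that are integral at every finite place outside `U`. -/
noncomputable def integersOutside (U : Finset (HeightOneSpectrum (𝓞 K))) : Subring K where
  carrier := {x | ∀ v ∉ U, adicAbv K v x ≤ 1}
  mul_mem' {a b} ha hb v hv := by
    rw [map_mul]
    exact mul_le_one₀ (ha v hv) ((adicAbv K v).nonneg _) (hb v hv)
  one_mem' v _ := (map_one (adicAbv K v)).le
  add_mem' {a b} ha hb v hv :=
    (isNonarchimedean_adicAbv K v a b).trans (max_le (ha v hv) (hb v hv))
  zero_mem' v _ := by rw [map_zero]; exact zero_le_one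
  neg_mem' {a} ha v hv := by rw [(adicAbv K v).map_neg]; exact ha v hv

/-- The places of a number field that are infinite or belong to `U`, with the normalized
weights of the product formula and the ring of `U`-integers. -/
noncomputable def numberFieldPlaces (U : Finset (HeightOneSpectrum (𝓞 K))) :
    Places K (InfinitePlace K ⊕ {v // v ∈ U}) where
  abv := Sum.elim (fun w => w.1) (fun v => adicAbv K v.1)
  weight := Sum.elim (fun w => w.mult) (fun _ => 1)
  weight_nonneg := by rintro (_ | _) <;> simp
  IsArch i := i.isLeft
  isNonarchimedean := by
    rintro (w | v) hi
    · simp at hi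
    · exact isNonarchimedean_adicAbv K v.1
  embedding
    | .inl w, _ => w.embedding
  abv_eq_norm := by
    rintro (w | v) hi x
    · exact (InfinitePlace.norm_embedding_eq w x).symm
    · simp at hi
  integers := integersOutside U
  sum_log_nonneg l hl hl0 := by
    have h := sum_log_infinitePlace_add_sum_log_adicAbv_nonneg hl0 hl
    rw [← Finset.sum_coe_sort U] at h
    simp only [Fintype.sum_sum_type, Sum.elim_inl, Sum.elim_inr, one_mul]
    exact h

lemma archDegree_numberFieldPlaces_pos (U : Finset (HeightOneSpectrum (𝓞 K))) :
    0 < (numberFieldPlaces U).archDegree := by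
  have h : (0 : ℝ) < ∑ w : InfinitePlace K, (w.mult : ℝ) :=
    Finset.sum_pos (fun w _ => Nat.cast_pos.2 w.mult_pos) Finset.univ_nonempty
  simpa [Places.archDegree, numberFieldPlaces] using h

lemma card_isArch_numberFieldPlaces_le (U : Finset (HeightOneSpectrum (𝓞 K))) :
    Fintype.card {i // (numberFieldPlaces U).IsArch i} ≤ Fintype.card (InfinitePlace K) := by
  refine Fintype.card_le_of_surjective (fun w => ⟨Sum.inl w, rfl⟩) ?_
  rintro ⟨w | v, h⟩
  · exact ⟨w, rfl⟩
  · simp [numberFieldPlaces] at h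

lemma isExceptionalUnit_integersOutside {U : Finset (HeightOneSpectrum (𝓞 K))} {x : K}
    (hx : x ≠ 0) (hx' : 1 - x ≠ 0)
    (hU : ∀ v ∉ U, adicAbv K v x = 1 ∧ adicAbv K v (1 - x) = 1) :
    IsExceptionalUnit (integersOutside U) x where
  ne_zero := hx
  one_sub_ne_zero := hx'
  mem v hv := (hU v hv).1.le
  inv_mem v hv := by rw [map_inv₀, (hU v hv).1, inv_one]
  one_sub_inv_mem v hv := by rw [map_inv₀, (hU v hv).2, inv_one]

lemma exists_superset_forall_adicAbv_eq_one (T : Finset (HeightOneSpectrum (𝓞 K)))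
    {s : Finset K} (hs : ∀ x ∈ s, x ≠ 0) :
    ∃ U, T ⊆ U ∧ ∀ v ∉ U, ∀ x ∈ s, adicAbv K v x = 1 := by
  have hfin : (⋃ x ∈ s, {v : HeightOneSpectrum (𝓞 K) | adicAbv K v x ≠ 1}).Finite :=
    s.finite_toSet.biUnion fun x hx => finite_setOf_adicAbv_ne_one (hs x hx)
  refine ⟨T ∪ hfin.toFinset, Finset.subset_union_left, fun v hv x hx => ?_⟩
  by_contra h
  exact hv (Finset.mem_union_right _ (hfin.mem_toFinset.2 (Set.mem_biUnion hx h)))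

lemma card_filter_sq_sub_self_add_one_eq_zero_le {F : Type*} [Field F] (s : Finset F) :
    (s.filter fun x => x ^ 2 - x + 1 = 0).card ≤ 2 := by
  set p : Polynomial F := Polynomial.X ^ 2 - Polynomial.X + 1 with hp
  have hdeg : p.natDegree = 2 := by rw [hp]; compute_degree!
  have hp0 : p ≠ 0 := Polynomial.ne_zero_of_natDegree_gt (n := 1) (by omega)
  refine (Finset.card_le_card fun x hx => ?_).trans
    (p.roots.toFinset_card_le.trans (p.card_roots'.trans hdeg.le))
  rw [Multiset.mem_toFinset, Polynomial.mem_roots hp0]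
  simpa [hp] using (Finset.mem_filter.1 hx).2

theorem card_le_of_adicAbv_constant {T : Finset (HeightOneSpectrum (𝓞 K))} {s : Finset K}
    (hs0 : ∀ x ∈ s, x ≠ 0) (hs1 : ∀ x ∈ s, 1 - x ≠ 0) (hs6 : ∀ x ∈ s, x ^ 2 - x + 1 ≠ 0)
    (hT : ∀ v ∉ T, ∀ x ∈ s, ∀ y ∈ s,
      adicAbv K v x = adicAbv K v y ∧ adicAbv K v (1 - x) = adicAbv K v (1 - y)) :
    s.card ≤ 17 ^ (2 * sCard K T - 1) * (20 * 169 ^ sCard K T) := by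
  obtain ⟨U, hTU, hU⟩ := exists_superset_forall_adicAbv_eq_one T
    (s := s ∪ s.image (1 - ·)) (by
      simp only [Finset.mem_union, Finset.mem_image]
      rintro _ (hx | ⟨x, hx, rfl⟩)
      exacts [hs0 _ hx, hs1 x hx])
  let S : Finset (InfinitePlace K ⊕ {v // v ∈ U}) :=
    Finset.univ.disjSum (T.subtype (· ∈ U))
  have hS : S.card = sCard K T := by
    rw [Finset.card_disjSum, Finset.card_univ, Finset.card_subtype,
      Finset.filter_true_of_mem hTU, sCard, add_comm]
  have hexc (x) (hx : x ∈ s) : IsExceptionalUnit (numberFieldPlaces U).integers x :=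
    isExceptionalUnit_integersOutside (hs0 x hx) (hs1 x hx) fun v hv =>
      ⟨hU v hv x (Finset.mem_union_left _ hx),
        hU v hv (1 - x) (Finset.mem_union_right _ (Finset.mem_image_of_mem _ hx))⟩
  have hcount := Places.card_exceptionalUnits_le (archDegree_numberFieldPlaces_pos U)
    (S := S) ⟨Sum.inl (Classical.arbitrary _), by simp [S]⟩ hexc hs6 (by
      rintro (w | v) hi
      · simp [S] at hi
      · exact hT v.1 (by simpa [S] using hi))
  rw [hS] at hcount
  refine hcount.trans (Nat.mul_le_mul_left _ (Nat.mul_le_mul_left _ ?_))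
  exact Nat.pow_le_pow_right (by norm_num)
    ((card_isArch_numberFieldPlaces_le U).trans (Nat.le_add_left _ _))

lemma seventeen_pow_mul_add_two_le (s : ℕ) (hs : 1 ≤ s) :
    17 ^ (2 * s - 1) * (20 * 169 ^ s) + 2 ≤ 2 ^ (16 * s) := by
  induction s, hs using Nat.le_induction with
  | base => norm_num
  | succ t ht ih =>
    rw [show 2 * (t + 1) - 1 = 2 * t - 1 + 2 by omega, mul_add_one 16, pow_add, pow_add 2,
      pow_succ 169]
    generalize 17 ^ (2 * t - 1) = a at *
    generalize 169 ^ t = b at *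
    generalize 2 ^ (16 * t) = c at *
    nlinarith

theorem card_le_Bconst_of_adicAbv_constant {T : Finset (HeightOneSpectrum (𝓞 K))}
    {s : Finset K} (hs0 : ∀ x ∈ s, x ≠ 0) (hs1 : ∀ x ∈ s, 1 - x ≠ 0)
    (hT : ∀ v ∉ T, ∀ x ∈ s, ∀ y ∈ s,
      adicAbv K v x = adicAbv K v y ∧ adicAbv K v (1 - x) = adicAbv K v (1 - y)) :
    s.card ≤ Bconst (sCard K T) := by
  have hpos : 1 ≤ sCard K T := Nat.le_add_left_of_le Fintype.card_pos
  have hgeneric := card_le_of_adicAbv_constant (T := T)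
    (s := s.filter fun x => x ^ 2 - x + 1 ≠ 0)
    (fun x hx => hs0 x (Finset.mem_filter.1 hx).1) (fun x hx => hs1 x (Finset.mem_filter.1 hx).1)
    (fun x hx => (Finset.mem_filter.1 hx).2)
    fun v hv x hx y hy => hT v hv x (Finset.mem_filter.1 hx).1 y (Finset.mem_filter.1 hy).1
  calc s.card = (s.filter fun x => x ^ 2 - x + 1 = 0).card +
        (s.filter fun x => x ^ 2 - x + 1 ≠ 0).card :=
        (Finset.card_filter_add_card_filter_not _).symm
    _ ≤ 2 + 17 ^ (2 * sCard K T - 1) * (20 * 169 ^ sCard K T) :=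
        add_le_add (card_filter_sq_sub_self_add_one_eq_zero_le s) hgeneric
    _ ≤ Bconst (sCard K T) := by
        rw [add_comm]
        exact seventeen_pow_mul_add_two_le _ hpos

end NumberFieldPlaces

/-! ### The chordal distance on the projective line -/

section Wedge

/-- The determinant of two vectors of the plane; for coordinates of points of `ℙ¹` it is the
numerator of the chordal distance. -/
def wedge {R : Type*} [CommRing R] (p q : Fin 2 → R) : R := p 0 * q 1 - p 1 * q 0

lemma wedge_smul_left {R : Type*} [CommRing R] (a : R) (p q : Fin 2 → R) :
    wedge (a • p) q = a * wedge p q := by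
  simp only [wedge, Pi.smul_apply, smul_eq_mul]
  ring

lemma wedge_swap {R : Type*} [CommRing R] (p q : Fin 2 → R) : wedge p q = -wedge q p := by
  simp only [wedge]
  ring

lemma map_wedge {R S : Type*} [CommRing R] [CommRing S] (ι : R →+* S) (p q : Fin 2 → R) :
    ι (wedge p q) = wedge (ι ∘ p) (ι ∘ q) := by
  simp [wedge]

lemma wedge_mul_apply {R : Type*} [CommRing R] (p q r : Fin 2 → R) (i : Fin 2) :
    wedge p r * q i = wedge p q * r i + wedge q r * p i := by
  fin_cases i <;> simp only [wedge, Fin.zero_eta, Fin.mk_one] <;> ring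

lemma exists_wedge_ne_zero {K : Type*} [Field K] {p : Fin 2 → K} (hp : p ≠ 0) :
    ∃ q, wedge p q ≠ 0 := by
  contrapose! hp
  ext i
  fin_cases i
  · simpa [wedge] using hp ![0, 1]
  · simpa [wedge] using hp ![1, 0]

lemma exists_smul_eq_of_wedge_eq_zero {K : Type*} [Field K] {p q : Fin 2 → K} (hp : p ≠ 0)
    (h : wedge p q = 0) : ∃ a : K, q = a • p := by
  obtain ⟨r, hr⟩ := exists_wedge_ne_zero hp
  refine ⟨wedge q r / wedge p r, funext fun i => ?_⟩
  have := wedge_mul_apply p q r i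
  rw [h, zero_mul, zero_add] at this
  rw [Pi.smul_apply, smul_eq_mul, div_mul_eq_mul_div, eq_div_iff hr, mul_comm, this]

lemma wedge_rep_ne_zero {K : Type*} [Field K] {P Q : P1 K} (h : P ≠ Q) :
    wedge P.rep Q.rep ≠ 0 := by
  contrapose! h
  obtain ⟨a, ha⟩ := exists_smul_eq_of_wedge_eq_zero P.rep_nonzero h
  rw [← P.mk_rep, ← Q.mk_rep, eq_comm, Projectivization.mk_eq_mk_iff']
  exact ⟨a, ha.symm⟩

end Wedge

section Chordal

variable {K : Type*} [Field K] (f : AbsoluteValue K ℝ)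

/-- The maximum norm on `K²` for the absolute value `f`. -/
noncomputable def supNorm (p : Fin 2 → K) : ℝ := max (f (p 0)) (f (p 1))

/-- The chordal distance for the absolute value `f`, in terms of homogeneous coordinates. -/
noncomputable def chordalDist (p q : Fin 2 → K) : ℝ :=
  f (wedge p q) / (supNorm f p * supNorm f q)

lemma abv_le_supNorm (p : Fin 2 → K) (i : Fin 2) : f (p i) ≤ supNorm f p := by
  fin_cases i
  · exact le_max_left _ _
  · exact le_max_right _ _

lemma exists_abv_eq_supNorm (p : Fin 2 → K) : ∃ i, f (p i) = supNorm f p := by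
  rcases max_choice (f (p 0)) (f (p 1)) with h | h
  · exact ⟨0, h.symm⟩
  · exact ⟨1, h.symm⟩

variable {f} in
lemma supNorm_pos {p : Fin 2 → K} (hp : p ≠ 0) : 0 < supNorm f p := by
  obtain ⟨i, hi⟩ := Function.ne_iff.1 hp
  exact (f.pos hi).trans_le (abv_le_supNorm f p i)

lemma supNorm_smul (a : K) (p : Fin 2 → K) : supNorm f (a • p) = f a * supNorm f p := by
  simp [supNorm, mul_max_of_nonneg _ _ (f.nonneg a)]

lemma chordalDist_nonneg (p q : Fin 2 → K) : 0 ≤ chordalDist f p q :=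
  div_nonneg (f.nonneg _) (mul_nonneg (le_max_of_le_left (f.nonneg _))
    (le_max_of_le_left (f.nonneg _)))

lemma chordalDist_self (p : Fin 2 → K) : chordalDist f p p = 0 := by
  simp [chordalDist, wedge, mul_comm]

lemma chordalDist_comm (p q : Fin 2 → K) : chordalDist f p q = chordalDist f q p := by
  rw [chordalDist, chordalDist, wedge_swap, f.map_neg, mul_comm]

lemma chordalDist_smul_left {a : K} (ha : a ≠ 0) (p q : Fin 2 → K) :
    chordalDist f (a • p) q = chordalDist f p q := by
  rw [chordalDist, chordalDist, wedge_smul_left, supNorm_smul, map_mul, mul_assoc,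
    mul_div_mul_left _ _ (f.ne_zero ha)]

lemma chordalDist_smul_right {a : K} (ha : a ≠ 0) (p q : Fin 2 → K) :
    chordalDist f p (a • q) = chordalDist f p q := by
  rw [chordalDist_comm, chordalDist_smul_left f ha, chordalDist_comm]

variable {f}

lemma abv_wedge {p q : Fin 2 → K} (hp : p ≠ 0) (hq : q ≠ 0) :
    f (wedge p q) = chordalDist f p q * (supNorm f p * supNorm f q) :=
  (div_mul_cancel₀ _ (mul_pos (supNorm_pos hp) (supNorm_pos hq)).ne').symm

lemma chordalDist_le_max (hf : IsNonarchimedean f) {p q r : Fin 2 → K} (hp : p ≠ 0)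
    (hq : q ≠ 0) (hr : r ≠ 0) :
    chordalDist f p r ≤ max (chordalDist f p q) (chordalDist f q r) := by
  obtain ⟨i, hi⟩ := exists_abv_eq_supNorm f q
  have hp0 : 0 < supNorm f p := supNorm_pos hp
  have hq0 : 0 < supNorm f q := supNorm_pos hq
  have hr0 : 0 < supNorm f r := supNorm_pos hr
  have key : f (wedge p r) * supNorm f q ≤
      max (f (wedge p q) * supNorm f r) (f (wedge q r) * supNorm f p) := by
    rw [← hi, ← map_mul, wedge_mul_apply]
    refine (hf _ _).trans (max_le_max ?_ ?_) <;> rw [map_mul] <;>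
      exact mul_le_mul_of_nonneg_left (abv_le_supNorm f _ i) (f.nonneg _)
  rw [abv_wedge hp hr, abv_wedge hp hq, abv_wedge hq hr] at key
  refine le_of_mul_le_mul_right ?_ (mul_pos (mul_pos hp0 hq0) hr0)
  rw [max_mul_of_nonneg _ _ (by positivity)]
  calc chordalDist f p r * (supNorm f p * supNorm f q * supNorm f r)
    _ = chordalDist f p r * (supNorm f p * supNorm f r) * supNorm f q := by ring
    _ ≤ _ := key
    _ = _ := by congr 1 <;> ring

lemma exists_smul_eq_of_ne_zero {p : Fin 2 → K} (hp : p ≠ 0) :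
    ∃ a : K, a ≠ 0 ∧ ∃ q : Fin 2 → K, (∃ i, q i = 1) ∧ (∀ i, f (q i) ≤ 1) ∧ a • q = p := by
  obtain ⟨i, hi⟩ := exists_abv_eq_supNorm f p
  have hpos : 0 < f (p i) := hi ▸ supNorm_pos hp
  have hpi : p i ≠ 0 := f.pos_iff.1 hpos
  refine ⟨p i, hpi, (p i)⁻¹ • p, ⟨i, inv_mul_cancel₀ hpi⟩, fun j => ?_, smul_inv_smul₀ hpi p⟩
  rw [Pi.smul_apply, smul_eq_mul, map_mul, map_inv₀]
  exact inv_mul_le_one_of_le₀ (hi ▸ abv_le_supNorm f p j) hpos.le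

section Integral

variable {O : Type*} [CommRing O] {ι : O →+* K}

lemma abv_map_eq_one_of_isUnit (hι : ∀ x, f (ι x) ≤ 1) {x : O} (hx : IsUnit x) :
    f (ι x) = 1 := by
  obtain ⟨y, hxy⟩ := hx.exists_right_inv
  have h : f (ι x) * f (ι y) = 1 := by rw [← map_mul, ← map_mul, hxy, map_one, map_one]
  nlinarith [hι x, hι y, f.nonneg (ι x)]

lemma supNorm_comp_eq_one (hι : ∀ x, f (ι x) ≤ 1) {p : Fin 2 → O}
    (hp : ∃ i, IsUnit (p i)) : supNorm f (ι ∘ p) = 1 := by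
  obtain ⟨i, hi⟩ := hp
  refine le_antisymm (max_le (hι _) (hι _)) ?_
  rw [← abv_map_eq_one_of_isUnit hι hi]
  exact abv_le_supNorm f (ι ∘ p) i

lemma chordalDist_comp_le_of_wedge_dvd (hι : ∀ x, f (ι x) ≤ 1) {p q p' q' : Fin 2 → O}
    (hp : ∃ i, IsUnit (p i)) (hq : ∃ i, IsUnit (q i)) (hp' : ∃ i, IsUnit (p' i))
    (hq' : ∃ i, IsUnit (q' i)) (h : wedge p q ∣ wedge p' q') :
    chordalDist f (ι ∘ p') (ι ∘ q') ≤ chordalDist f (ι ∘ p) (ι ∘ q) := by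
  obtain ⟨c, hc⟩ := h
  simp only [chordalDist, supNorm_comp_eq_one hι, hp, hq, hp', hq', mul_one, div_one,
    ← map_wedge]
  rw [hc, map_mul, map_mul]
  exact mul_le_of_le_one_right (f.nonneg _) (hι c)

end Integral

variable (f) in
/-- The chordal distance between two points of `ℙ¹(K)` for the absolute value `f`. -/
noncomputable def projDist (P Q : P1 K) : ℝ := chordalDist f P.rep Q.rep

lemma projDist_ne_zero {P Q : P1 K} (h : P ≠ Q) : projDist f P Q ≠ 0 :=
  div_ne_zero (f.ne_zero (wedge_rep_ne_zero h))
    (mul_pos (supNorm_pos P.rep_nonzero) (supNorm_pos Q.rep_nonzero)).ne'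

lemma projDist_le_max (hf : IsNonarchimedean f) (P Q R : P1 K) :
    projDist f P R ≤ max (projDist f P Q) (projDist f Q R) :=
  chordalDist_le_max hf P.rep_nonzero Q.rep_nonzero R.rep_nonzero

/-- The projective line with the chordal distance of a nonarchimedean absolute value. -/
noncomputable abbrev chordalMetric (hf : IsNonarchimedean f) : PseudoMetricSpace (P1 K) where
  dist := projDist f
  dist_self _ := chordalDist_self f _
  dist_comm _ _ := chordalDist_comm f _ _
  dist_triangle P Q R := (projDist_le_max hf P Q R).trans
    (max_le_add_of_nonneg (chordalDist_nonneg f _ _) (chordalDist_nonneg f _ _))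

end Chordal

/-! ### Maps with good reduction do not increase the chordal distance -/

section EvalPair

lemma eval_smul_of_isHomogeneous {R σ : Type*} [CommRing R] {F : MvPolynomial σ R} {d : ℕ}
    (hF : F.IsHomogeneous d) (a : R) (p : σ → R) : eval (a • p) F = a ^ d * eval p F := by
  rw [MvPolynomial.eval_eq, MvPolynomial.eval_eq, Finset.mul_sum]
  refine Finset.sum_congr rfl fun m hm => ?_
  simp only [Pi.smul_apply, smul_eq_mul, mul_pow, Finset.prod_mul_distrib,
    Finset.prod_pow_eq_pow_sum,
    ← hF.degree_eq_sum_deg_support hm]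
  ring

lemma dvd_eval_sub_eval {R σ : Type*} [CommRing R] {w : R} {p q : σ → R}
    (h : ∀ i, w ∣ p i - q i) (F : MvPolynomial σ R) : w ∣ eval p F - eval q F := by
  rw [← Ideal.mem_span_singleton, ← Ideal.Quotient.eq, MvPolynomial.map_eval,
    MvPolynomial.map_eval]
  congr 2
  exact funext fun i => Ideal.Quotient.eq.2 (Ideal.mem_span_singleton.2 (h i))

/-- The map of the plane given by a pair of forms; for the two forms defining an endomorphism
of `ℙ¹` it is the lift to homogeneous coordinates. -/
noncomputable def evalPair {R : Type*} [CommRing R] (F G : MvPolynomial (Fin 2) R)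
    (p : Fin 2 → R) : Fin 2 → R :=
  ![eval p F, eval p G]

lemma evalPair_smul {R : Type*} [CommRing R] {F G : MvPolynomial (Fin 2) R} {d : ℕ}
    (hF : F.IsHomogeneous d) (hG : G.IsHomogeneous d) (a : R) (p : Fin 2 → R) :
    evalPair F G (a • p) = a ^ d • evalPair F G p := by
  simp [evalPair, eval_smul_of_isHomogeneous hF, eval_smul_of_isHomogeneous hG]

lemma evalPair_C_mul {R : Type*} [CommRing R] (F G : MvPolynomial (Fin 2) R) (c : R)
    (p : Fin 2 → R) : evalPair (C c * F) (C c * G) p = c • evalPair F G p := by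
  simp [evalPair]

lemma comp_evalPair {R S : Type*} [CommRing R] [CommRing S] (ι : R →+* S)
    (F G : MvPolynomial (Fin 2) R) (p : Fin 2 → R) :
    ι ∘ evalPair F G p = evalPair (map ι F) (map ι G) (ι ∘ p) := by
  ext i
  fin_cases i <;> exact MvPolynomial.map_eval ι p _

lemma exists_isUnit_evalPair {R k : Type*} [CommRing R] [Field k] (ρ : R →+* k) [IsLocalHom ρ]
    {F G : MvPolynomial (Fin 2) R}
    (h : ∀ x y : k, eval ![x, y] (map ρ F) = 0 → eval ![x, y] (map ρ G) = 0 → x = 0 ∧ y = 0)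
    {p : Fin 2 → R} (hp : ∃ i, p i = 1) : ∃ i, IsUnit (evalPair F G p i) := by
  contrapose! hp
  have hzero (i : Fin 2) : ρ (evalPair F G p i) = 0 := by
    by_contra hne
    exact hp i (isUnit_of_map_unit ρ _ (isUnit_iff_ne_zero.2 hne))
  have hρ : ρ ∘ p = ![ρ (p 0), ρ (p 1)] := by ext i; fin_cases i <;> rfl
  obtain ⟨h0, h1⟩ := h (ρ (p 0)) (ρ (p 1))
    (by rw [← hρ, ← MvPolynomial.map_eval]; exact hzero 0)
    (by rw [← hρ, ← MvPolynomial.map_eval]; exact hzero 1)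
  intro i hi
  have : ρ (p i) = 0 := by fin_cases i <;> assumption
  simp [hi] at this

lemma wedge_dvd_sub {R : Type*} [CommRing R] {p : Fin 2 → R} {i : Fin 2} (hi : p i = 1)
    (q : Fin 2 → R) (j : Fin 2) : wedge p q ∣ q j - q i * p j := by
  fin_cases i <;> fin_cases j <;> simp only [Fin.zero_eta, Fin.mk_one, wedge] at hi ⊢
  · exact ⟨0, by linear_combination -q 0 * hi⟩
  · exact ⟨1, by linear_combination -q 1 * hi⟩
  · exact ⟨-1, by linear_combination -q 0 * hi⟩
  · exact ⟨0, by linear_combination -q 1 * hi⟩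

lemma wedge_dvd_wedge_evalPair {R : Type*} [CommRing R] {F G : MvPolynomial (Fin 2) R} {d : ℕ}
    (hF : F.IsHomogeneous d) (hG : G.IsHomogeneous d) {p : Fin 2 → R} (hp : ∃ i, p i = 1)
    (q : Fin 2 → R) : wedge p q ∣ wedge (evalPair F G p) (evalPair F G q) := by
  obtain ⟨i, hi⟩ := hp
  obtain ⟨u, hu⟩ := dvd_eval_sub_eval (q := q i • p) (wedge_dvd_sub hi q) F
  obtain ⟨w, hw⟩ := dvd_eval_sub_eval (q := q i • p) (wedge_dvd_sub hi q) G
  rw [eval_smul_of_isHomogeneous hF] at hu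
  rw [eval_smul_of_isHomogeneous hG] at hw
  refine ⟨eval p F * w - eval p G * u, ?_⟩
  simp only [wedge, evalPair, Matrix.cons_val_zero, Matrix.cons_val_one] at hu hw ⊢
  linear_combination eval p F * hw - eval p G * hu

end EvalPair

section GoodReduction

lemma P1Map.evalPair_ne_zero {K : Type*} [Field K] {d : ℕ} (φ : P1Map K d) {p : Fin 2 → K}
    (hp : p ≠ 0) : evalPair φ.F φ.G p ≠ 0 := by
  contrapose! hp
  let ι := algebraMap K (AlgebraicClosure K)
  have hι : ι ∘ p = ![ι (p 0), ι (p 1)] := by ext i; fin_cases i <;> rfl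
  have hzero {H : MvPolynomial (Fin 2) K} (h : eval p H = 0) :
      aeval ![ι (p 0), ι (p 1)] H = 0 := by
    rw [← hι, aeval_def, ← eval_map, ← map_eval, h, map_zero]
  obtain ⟨h0, h1⟩ := φ.coprime _ _ (hzero (congrFun hp 0)) (hzero (congrFun hp 1))
  ext i
  fin_cases i
  exacts [(map_eq_zero ι).1 h0, (map_eq_zero ι).1 h1]

lemma P1Map.toFun_mk {K : Type*} [Field K] {d : ℕ} (φ : P1Map K d) {p : Fin 2 → K}
    (hp : p ≠ 0) : φ.toFun (Projectivization.mk K p hp) =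
      Projectivization.mk K (evalPair φ.F φ.G p) (φ.evalPair_ne_zero hp) := by
  have hcoords : ![p 0, p 1] = p := by ext i; fin_cases i <;> rfl
  have h := φ.compat (p 0) (p 1) (by rwa [hcoords])
    (by rw [hcoords]; exact φ.evalPair_ne_zero hp)
  simp only [hcoords] at h
  exact h

lemma P1Map.exists_smul_evalPair_rep {K : Type*} [Field K] {d : ℕ} (φ : P1Map K d) (P : P1 K) :
    ∃ a : K, a ≠ 0 ∧ a • evalPair φ.F φ.G P.rep = (φ.toFun P).rep := by
  obtain ⟨a, ha⟩ := Projectivization.exists_smul_eq_mk_rep K (evalPair φ.F φ.G P.rep)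
    (φ.evalPair_ne_zero P.rep_nonzero)
  refine ⟨a, a.ne_zero, ?_⟩
  rw [← Units.smul_def, ha, ← φ.toFun_mk P.rep_nonzero, P.mk_rep]

open NumberField.HeightOneSpectrum (adicAbv)

variable {K : Type*} [Field K] [NumberField K] {v : HeightOneSpectrum (𝓞 K)}

lemma adicAbv_le_one_iff {x : K} :
    adicAbv K v x ≤ 1 ↔ x ∈ (v.valuation K).valuationSubring := by
  rw [Valuation.mem_valuationSubring_iff, ← WithZeroMulInt.toNNReal_le_one_iff
    (NumberField.HeightOneSpectrum.one_lt_absNorm_nnreal v)]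
  exact Iff.rfl

lemma exists_smul_subtype_comp_eq {p : Fin 2 → K} (hp : p ≠ 0) :
    ∃ a : K, a ≠ 0 ∧ ∃ q : Fin 2 → (v.valuation K).valuationSubring, (∃ i, q i = 1) ∧
      a • ((v.valuation K).valuationSubring.subtype ∘ q) = p := by
  obtain ⟨a, ha, q, ⟨i, hi⟩, hq, rfl⟩ := exists_smul_eq_of_ne_zero (f := adicAbv K v) hp
  exact ⟨a, ha, fun j => ⟨q j, adicAbv_le_one_iff.1 (hq j)⟩, ⟨i, Subtype.ext hi⟩, rfl⟩

variable {d : ℕ} {φ : P1Map K d}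

lemma GoodReductionAt.exists_integral_forms (h : GoodReductionAt φ v) :
    ∃ c : K, c ≠ 0 ∧ ∃ F₀ G₀ : MvPolynomial (Fin 2) (v.valuation K).valuationSubring,
      F₀.IsHomogeneous d ∧ G₀.IsHomogeneous d ∧
      map (v.valuation K).valuationSubring.subtype F₀ = C c * φ.F ∧
      map (v.valuation K).valuationSubring.subtype G₀ = C c * φ.G ∧
      ∀ p, (∃ i, p i = 1) → ∃ i, IsUnit (evalPair F₀ G₀ p i) := by
  obtain ⟨c, hc, F₀, G₀, hF, hG, -, hred⟩ := h
  have hom {H : MvPolynomial (Fin 2) K} {H₀} (hH : H.IsHomogeneous d)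
      (hH₀ : map (v.valuation K).valuationSubring.subtype H₀ = C c * H) :
      H₀.IsHomogeneous d := by
    refine IsHomogeneous.of_map (f := (v.valuation K).valuationSubring.subtype)
      Subtype.val_injective ?_
    rw [hH₀]
    simpa only [zero_add] using (isHomogeneous_C (Fin 2) c).mul hH
  exact ⟨c, hc, F₀, G₀, hom φ.homF hF, hom φ.homG hG, hF, hG,
    fun _ hp => exists_isUnit_evalPair _ hred hp⟩

theorem GoodReductionAt.projDist_toFun_le (h : GoodReductionAt φ v) (P Q : P1 K) :
    projDist (adicAbv K v) (φ.toFun P) (φ.toFun Q) ≤ projDist (adicAbv K v) P Q := by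
  set ι := (v.valuation K).valuationSubring.subtype
  obtain ⟨c, hc, F₀, G₀, hF₀, hG₀, hF, hG, hunit⟩ := h.exists_integral_forms
  have hlift (p) : c • evalPair φ.F φ.G (ι ∘ p) = ι ∘ evalPair F₀ G₀ p := by
    rw [comp_evalPair, hF, hG, evalPair_C_mul]
  have hone {p : Fin 2 → (v.valuation K).valuationSubring} (hp : ∃ i, p i = 1) :
      ∃ i, IsUnit (p i) := hp.imp fun i (hi : p i = 1) => hi ▸ isUnit_one
  obtain ⟨s, hs, p, hp, hPrep⟩ := exists_smul_subtype_comp_eq (v := v) P.rep_nonzero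
  obtain ⟨t, ht, q, hq, hQrep⟩ := exists_smul_subtype_comp_eq (v := v) Q.rep_nonzero
  obtain ⟨a, ha, hPimage⟩ := φ.exists_smul_evalPair_rep P
  obtain ⟨b, hb, hQimage⟩ := φ.exists_smul_evalPair_rep Q
  calc projDist (adicAbv K v) (φ.toFun P) (φ.toFun Q)
    _ = chordalDist (adicAbv K v) (evalPair φ.F φ.G (ι ∘ p)) (evalPair φ.F φ.G (ι ∘ q)) := by
      rw [projDist, ← hPimage, ← hQimage, ← hPrep, ← hQrep, chordalDist_smul_left _ ha,
        chordalDist_smul_right _ hb, evalPair_smul φ.homF φ.homG, evalPair_smul φ.homF φ.homG,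
        chordalDist_smul_left _ (pow_ne_zero d hs), chordalDist_smul_right _ (pow_ne_zero d ht)]
    _ = chordalDist (adicAbv K v) (ι ∘ evalPair F₀ G₀ p) (ι ∘ evalPair F₀ G₀ q) := by
      rw [← hlift, ← hlift, chordalDist_smul_left _ hc, chordalDist_smul_right _ hc]
    _ ≤ chordalDist (adicAbv K v) (ι ∘ p) (ι ∘ q) :=
      chordalDist_comp_le_of_wedge_dvd (fun x => adicAbv_le_one_iff.2 x.2) (hone hp) (hone hq)
        (hunit p hp) (hunit q hq) (wedge_dvd_wedge_evalPair hF₀ hG₀ hp q)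
    _ = projDist (adicAbv K v) P Q := by
      rw [projDist, ← hPrep, ← hQrep, chordalDist_smul_left _ hs, chordalDist_smul_right _ ht]

end GoodReduction

/-! ### Backward orbits of a fixed point -/

section FixedPoint

variable {X : Type*} {g : X → X} {P Q : X} {m n : ℕ}

lemma iterate_eq_of_le (hP : g P = P) (hQ : g^[n] Q = P) (h : n ≤ m) : g^[m] Q = P := by
  rw [← Nat.sub_add_cancel h, Function.iterate_add_apply, hQ, Function.iterate_fixed hP]

lemma eq_of_iterate_eq_self (hP : g P = P) (hQ : g^[n] Q = P) (hm : m ≠ 0)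
    (h : g^[m] Q = Q) : Q = P := by
  rw [← iterate_eq_of_le hP hQ (Nat.le_mul_of_pos_left n (Nat.pos_of_ne_zero hm)),
    Function.iterate_mul, Function.iterate_fixed h]

end FixedPoint

section Ultrametric

variable {X : Type*} [PseudoMetricSpace X] [IsUltrametricDist X] {g : X → X} {P : X}

lemma dist_eq_dist_of_dist_le {Q R : X} (h₁ : dist Q P ≤ dist R Q) (h₂ : dist Q P ≤ dist R P) :
    dist R Q = dist R P := by
  refine le_antisymm ?_ ?_
  · exact (dist_triangle_max R P Q).trans (max_le le_rfl (dist_comm P Q ▸ h₂))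
  · exact (dist_triangle_max R Q P).trans (max_le le_rfl h₁)

lemma dist_le_dist_apply_of_iterate_eq (hg : LipschitzWith 1 g) {n : ℕ} {Q : X}
    (hQ : g^[n] Q = P) : dist Q P ≤ dist Q (g Q) := by
  induction n generalizing Q with
  | zero =>
    rw [← hQ, Function.iterate_zero_apply, dist_self]
    exact dist_nonneg
  | succ n ih =>
    calc dist Q P ≤ max (dist Q (g Q)) (dist (g Q) P) := dist_triangle_max _ _ _
      _ ≤ max (dist Q (g Q)) (dist (g Q) (g (g Q))) := max_le_max le_rfl (ih hQ)
      _ ≤ dist Q (g Q) := max_le le_rfl (hg.dist_le_mul _ _ |>.trans_eq (one_mul _))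

lemma dist_eq_dist_of_iterate_eq (hg : LipschitzWith 1 g) (hP : g P = P) {m n : ℕ} (hm : m ≠ 0)
    {Q R : X} (hR : g^[m] R = Q) (hQ : g^[n] Q = P) : dist R Q = dist R P := by
  have hgm : LipschitzWith 1 g^[m] := by simpa using hg.iterate m
  have hQm : (g^[m])^[n] Q = P := by
    rw [← Function.iterate_mul]
    exact iterate_eq_of_le hP hQ (Nat.le_mul_of_pos_left n (Nat.pos_of_ne_zero hm))
  refine dist_eq_dist_of_dist_le ?_ ?_
  · calc dist Q P ≤ dist Q (g^[m] Q) := dist_le_dist_apply_of_iterate_eq hgm hQm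
      _ = dist (g^[m] R) (g^[m] Q) := by rw [hR]
      _ ≤ dist R Q := by simpa using hgm.dist_le_mul R Q
  · calc dist Q P = dist (g^[m] R) (g^[m] P) := by rw [hR, Function.iterate_fixed hP]
      _ ≤ dist R P := by simpa using hgm.dist_le_mul R P

end Ultrametric

lemma isUltrametricDist_chordalMetric {K : Type*} [Field K] {f : AbsoluteValue K ℝ}
    (hf : IsNonarchimedean f) : @IsUltrametricDist (P1 K) (chordalMetric hf).toDist :=
  @IsUltrametricDist.mk _ (chordalMetric hf).toDist (projDist_le_max hf)

open NumberField.HeightOneSpectrum (adicAbv isNonarchimedean_adicAbv) in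
theorem GoodReductionAt.projDist_eq_of_iterate_eq {K : Type*} [Field K] [NumberField K]
    {v : HeightOneSpectrum (𝓞 K)} {d : ℕ} {φ : P1Map K d} (h : GoodReductionAt φ v)
    {P Q R : P1 K} (hP : φ.toFun P = P) {m n : ℕ} (hm : m ≠ 0) (hR : φ.toFun^[m] R = Q)
    (hQ : φ.toFun^[n] Q = P) : projDist (adicAbv K v) R Q = projDist (adicAbv K v) R P := by
  let := chordalMetric (isNonarchimedean_adicAbv K v)
  have := isUltrametricDist_chordalMetric (isNonarchimedean_adicAbv K v)
  exact dist_eq_dist_of_iterate_eq (LipschitzWith.mk_one h.projDist_toFun_le) hP hm hR hQ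

/-! ### Points equidistant from three given points -/

section CrossRatio

variable {K : Type*} [Field K]

/-- The cross-ratio of four points of the projective line, as a function of the last one. -/
noncomputable def crossRatio (P Q₁ Q₂ R : P1 K) : K :=
  wedge R.rep P.rep * wedge Q₁.rep Q₂.rep / (wedge R.rep Q₁.rep * wedge P.rep Q₂.rep)

lemma crossRatio_ne_zero {P Q₁ Q₂ R : P1 K} (hRP : R ≠ P) (h₁₂ : Q₁ ≠ Q₂) (hR₁ : R ≠ Q₁)
    (hP₂ : P ≠ Q₂) : crossRatio P Q₁ Q₂ R ≠ 0 :=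
  div_ne_zero (mul_ne_zero (wedge_rep_ne_zero hRP) (wedge_rep_ne_zero h₁₂))
    (mul_ne_zero (wedge_rep_ne_zero hR₁) (wedge_rep_ne_zero hP₂))

lemma one_sub_crossRatio {P Q₁ Q₂ R : P1 K} (hR₁ : R ≠ Q₁) (hP₂ : P ≠ Q₂) :
    1 - crossRatio P Q₁ Q₂ R = crossRatio Q₂ Q₁ P R := by
  have hR₁' := wedge_rep_ne_zero hR₁
  have hP₂' := wedge_rep_ne_zero hP₂
  rw [crossRatio, crossRatio, wedge_swap Q₂.rep P.rep]
  field_simp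
  simp only [wedge]
  ring

lemma injOn_crossRatio {P Q₁ Q₂ : P1 K} (hP₁ : P ≠ Q₁) (hP₂ : P ≠ Q₂) (h₁₂ : Q₁ ≠ Q₂) :
    Set.InjOn (crossRatio P Q₁ Q₂) {R | R ≠ Q₁} := by
  intro R hR R' hR' heq
  have hR₁ := wedge_rep_ne_zero hR
  have hR₁' := wedge_rep_ne_zero hR'
  have hP₂' := wedge_rep_ne_zero hP₂
  by_contra hne
  refine mul_ne_zero (mul_ne_zero (wedge_rep_ne_zero hne) (wedge_rep_ne_zero hP₁))
    (wedge_rep_ne_zero h₁₂) ?_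
  rw [crossRatio, crossRatio] at heq
  field_simp at heq
  simp only [wedge] at heq ⊢
  linear_combination heq

lemma abv_crossRatio (f : AbsoluteValue K ℝ) (P Q₁ Q₂ R : P1 K) :
    f (crossRatio P Q₁ Q₂ R) =
      projDist f R P * projDist f Q₁ Q₂ / (projDist f R Q₁ * projDist f P Q₂) := by
  have hpos (P : P1 K) : supNorm f P.rep ≠ 0 := (supNorm_pos P.rep_nonzero).ne'
  have hP := hpos P
  have hQ₁ := hpos Q₁
  have hQ₂ := hpos Q₂
  have hR := hpos R
  simp only [crossRatio, projDist, chordalDist, map_div₀, map_mul]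
  field_simp

lemma abv_crossRatio_of_projDist_eq {f : AbsoluteValue K ℝ} {P Q₁ Q₂ R : P1 K} (hR₁ : R ≠ Q₁)
    (h : projDist f R P = projDist f R Q₁) :
    f (crossRatio P Q₁ Q₂ R) = projDist f Q₁ Q₂ / projDist f P Q₂ := by
  rw [abv_crossRatio, h, mul_div_mul_left _ _ (projDist_ne_zero hR₁)]

open NumberField.HeightOneSpectrum (adicAbv) in
theorem card_le_Bconst_of_projDist_eq [NumberField K] {T : Finset (HeightOneSpectrum (𝓞 K))}
    {P Q₁ Q₂ : P1 K} (hP₁ : P ≠ Q₁) (hP₂ : P ≠ Q₂) (h₁₂ : Q₁ ≠ Q₂) {S : Finset (P1 K)}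
    (hSP : ∀ R ∈ S, R ≠ P) (hS₁ : ∀ R ∈ S, R ≠ Q₁) (hS₂ : ∀ R ∈ S, R ≠ Q₂)
    (hT₁ : ∀ v ∉ T, ∀ R ∈ S, projDist (adicAbv K v) R Q₁ = projDist (adicAbv K v) R P)
    (hT₂ : ∀ v ∉ T, ∀ R ∈ S, projDist (adicAbv K v) R Q₂ = projDist (adicAbv K v) R P) :
    S.card ≤ Bconst (sCard K T) := by
  have hone_sub (R) (hR : R ∈ S) : 1 - crossRatio P Q₁ Q₂ R = crossRatio Q₂ Q₁ P R :=
    one_sub_crossRatio (hS₁ R hR) hP₂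
  rw [← Finset.card_image_of_injOn ((injOn_crossRatio hP₁ hP₂ h₁₂).mono hS₁)]
  refine card_le_Bconst_of_adicAbv_constant ?_ ?_ ?_
  · simp only [Finset.forall_mem_image]
    exact fun R hR => crossRatio_ne_zero (hSP R hR) h₁₂ (hS₁ R hR) hP₂
  · simp only [Finset.forall_mem_image]
    intro R hR
    rw [hone_sub R hR]
    exact crossRatio_ne_zero (hS₂ R hR) hP₁.symm (hS₁ R hR) hP₂.symm
  · simp only [Finset.forall_mem_image]
    intro v hv R hR R' hR'
    have habv (R) (hR : R ∈ S) :=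
      abv_crossRatio_of_projDist_eq (Q₂ := Q₂) (hS₁ R hR) (hT₁ v hv R hR).symm
    have habv' (R) (hR : R ∈ S) := abv_crossRatio_of_projDist_eq (Q₂ := P) (hS₁ R hR)
      ((hT₂ v hv R hR).trans (hT₁ v hv R hR).symm)
    rw [hone_sub R hR, hone_sub R' hR', habv R hR, habv R' hR', habv' R hR, habv' R' hR']
    exact ⟨rfl, rfl⟩

end CrossRatio

/-! ### Zeros of binary forms and fibres -/

section BinaryForm

variable {K : Type*} [Field K] {H : MvPolynomial (Fin 2) K} {d : ℕ}

/-- The restriction of `H` to the parametrized line `t ↦ e + t • a`. -/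
noncomputable def linePoly (e a : Fin 2 → K) (H : MvPolynomial (Fin 2) K) : K[X] :=
  aeval (fun i => Polynomial.C (a i) * Polynomial.X + Polynomial.C (e i)) H

lemma eval_linePoly (e a : Fin 2 → K) (H : MvPolynomial (Fin 2) K) (t : K) :
    (linePoly e a H).eval t = eval (e + t • a) H := by
  have hline : (fun i => (Polynomial.C (a i) * Polynomial.X + Polynomial.C (e i)).eval t) =
      e + t • a := by
    ext i
    simp
    ring
  rw [linePoly, aeval_def, polynomial_eval_eval₂, hline, eval₂_eq', eval_eq']
  simp

lemma natDegree_linePoly_le (e a : Fin 2 → K) (hH : H.IsHomogeneous d) :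
    (linePoly e a H).natDegree ≤ d := by
  simpa only [linePoly, mul_one] using
    aeval_natDegree_le H hH.totalDegree_le _ fun _ => Polynomial.natDegree_linear_le

lemma coeff_linePoly (e a : Fin 2 → K) (hH : H.IsHomogeneous d) :
    (linePoly e a H).coeff d = eval a H := by
  have hlin (i : Fin 2) (n : ℕ) :
      ((Polynomial.C (a i) * Polynomial.X + Polynomial.C (e i)) ^ n).natDegree ≤ n := by
    simpa only [mul_one] using
      Polynomial.natDegree_pow_le_of_le n (Polynomial.natDegree_linear_le (a := a i))
  have hcoeff (i : Fin 2) (n : ℕ) :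
      ((Polynomial.C (a i) * Polynomial.X + Polynomial.C (e i)) ^ n).coeff n = a i ^ n := by
    simpa using Polynomial.coeff_pow_of_natDegree_le (m := n)
      (Polynomial.natDegree_linear_le (a := a i) (b := e i))
  rw [linePoly, aeval_def, eval₂_eq', eval_eq', Polynomial.finsetSum_coeff]
  refine Finset.sum_congr rfl fun m hm => ?_
  have hdeg : m 0 + m 1 = d := by
    rw [hH.degree_eq_sum_deg_support hm, ← Finsupp.degree_apply, Finsupp.degree_eq_sum,
      Fin.sum_univ_two]
  rw [Polynomial.algebraMap_eq, Polynomial.coeff_C_mul, Fin.prod_univ_two, Fin.prod_univ_two,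
    ← hdeg, Polynomial.coeff_mul_add_eq_of_natDegree_le (hlin _ _) (hlin _ _), hcoeff, hcoeff]

lemma exists_ne_zero_eval_eq_zero [IsAlgClosed K] (hd : d ≠ 0) (hH : H.IsHomogeneous d) :
    ∃ p ≠ 0, eval p H = 0 := by
  by_cases h : eval ![1, 0] H = 0
  · exact ⟨![1, 0], by simp, h⟩
  · rw [← coeff_linePoly ![0, 1] _ hH] at h
    obtain ⟨t, ht⟩ := IsAlgClosed.exists_root (linePoly ![0, 1] ![1, 0] H) fun h0 =>
      h (Polynomial.coeff_eq_zero_of_degree_lt (h0.trans_lt (by exact_mod_cast hd.bot_lt)))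
    refine ⟨![0, 1] + t • ![1, 0], by simp, ?_⟩
    rw [← eval_linePoly]
    exact ht

lemma wedge_ne_zero_of_eval_eq_zero (hH : H.IsHomogeneous d) {p r : Fin 2 → K} (hp : p ≠ 0)
    (hr : r ≠ 0) (hHp : eval p H ≠ 0) (hHr : eval r H = 0) : wedge p r ≠ 0 := by
  intro h
  obtain ⟨a, rfl⟩ := exists_smul_eq_of_wedge_eq_zero hp h
  rw [eval_smul_of_isHomogeneous hH] at hHr
  exact mul_ne_zero (pow_ne_zero d (left_ne_zero_of_smul hr)) hHp hHr

lemma eval_linePoly_div_eq_zero (hH : H.IsHomogeneous d) {p e r : Fin 2 → K}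
    (hpr : wedge p r ≠ 0) (hHr : eval r H = 0) :
    (linePoly e p H).eval (wedge r e / wedge p r) = 0 := by
  have hr : wedge p e • r = wedge p r • (e + (wedge r e / wedge p r) • p) := by
    rw [smul_add, smul_smul, mul_div_cancel₀ _ hpr]
    exact funext fun i => wedge_mul_apply p r e i
  have h := congrArg (eval · H) hr
  simp only [eval_smul_of_isHomogeneous hH, hHr, mul_zero] at h
  rw [eval_linePoly]
  exact (mul_eq_zero.1 h.symm).resolve_left (pow_ne_zero d hpr)

theorem encard_setOf_eval_rep_eq_zero_le (hH : H.IsHomogeneous d) {p : Fin 2 → K} (hp : p ≠ 0)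
    (hHp : eval p H ≠ 0) : {R : P1 K | eval R.rep H = 0}.encard ≤ d := by
  obtain ⟨e, he⟩ := exists_wedge_ne_zero hp
  have hne : linePoly e p H ≠ 0 := fun h => hHp (by rw [← coeff_linePoly e p hH, h]; simp)
  have hwedge (R : P1 K) (hR : eval R.rep H = 0) : wedge p R.rep ≠ 0 :=
    wedge_ne_zero_of_eval_eq_zero hH hp R.rep_nonzero hHp hR
  have hmaps : Set.MapsTo (fun R : P1 K => wedge R.rep e / wedge p R.rep)
      {R | eval R.rep H = 0} (linePoly e p H).roots.toFinset := fun R hR =>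
    Multiset.mem_toFinset.2 ((Polynomial.mem_roots hne).2
      (eval_linePoly_div_eq_zero hH (hwedge R hR) hR))
  have hinj : Set.InjOn (fun R : P1 K => wedge R.rep e / wedge p R.rep)
      {R | eval R.rep H = 0} := by
    intro R hR R' hR' heq
    by_contra hRR'
    refine mul_ne_zero (wedge_rep_ne_zero hRR') he ?_
    rw [div_eq_div_iff (hwedge R hR) (hwedge R' hR')] at heq
    simp only [wedge] at heq ⊢
    linear_combination heq
  refine (Set.encard_le_encard_of_injOn hmaps hinj).trans ?_
  rw [Set.encard_coe_eq_coe_finsetCard, Nat.cast_le]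
  exact (Multiset.toFinset_card_le _).trans ((Polynomial.card_roots' _).trans
    (natDegree_linePoly_le e p hH))

end BinaryForm

section Fiber

variable {K : Type*} [Field K] {d : ℕ}

/-- The binary form `q₁ F - q₀ G`, which cuts out the fibre of `φ = [F : G]` over `[q₀ : q₁]`. -/
noncomputable def fiberForm (φ : P1Map K d) (q : Fin 2 → K) : MvPolynomial (Fin 2) K :=
  C (q 1) * φ.F - C (q 0) * φ.G

lemma isHomogeneous_fiberForm (φ : P1Map K d) (q : Fin 2 → K) :
    (fiberForm φ q).IsHomogeneous d := by
  have hF := (isHomogeneous_C (Fin 2) (q 1)).mul φ.homF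
  have hG := (isHomogeneous_C (Fin 2) (q 0)).mul φ.homG
  rw [zero_add] at hF hG
  exact hF.sub hG

lemma exists_aeval_algebraicClosure_eq_zero (hd : d ≠ 0) {H : MvPolynomial (Fin 2) K}
    (hH : H.IsHomogeneous d) :
    ∃ x y : AlgebraicClosure K, ¬(x = 0 ∧ y = 0) ∧ aeval ![x, y] H = 0 := by
  obtain ⟨p, hp, h⟩ :=
    exists_ne_zero_eval_eq_zero hd (hH.map (algebraMap K (AlgebraicClosure K)))
  have hcoords : ![p 0, p 1] = p := by ext i; fin_cases i <;> rfl
  refine ⟨p 0, p 1, fun h0 => hp ?_, ?_⟩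
  · ext i
    fin_cases i
    exacts [h0.1, h0.2]
  · rwa [hcoords, aeval_def, ← eval_map]

lemma fiberForm_ne_zero (φ : P1Map K d) (hd : d ≠ 0) {q : Fin 2 → K} (hq : q ≠ 0) :
    fiberForm φ q ≠ 0 := by
  intro h0
  let ι := algebraMap K (AlgebraicClosure K)
  have hprop (x y) : ι (q 1) * aeval ![x, y] φ.F = ι (q 0) * aeval ![x, y] φ.G := by
    have h := congrArg (aeval ![x, y]) h0
    simp only [fiberForm, map_sub, map_mul, aeval_C, map_zero] at h
    exact sub_eq_zero.1 h
  by_cases h1 : q 1 = 0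
  · have h2 : q 0 ≠ 0 := fun h2 => hq (by ext i; fin_cases i; exacts [h2, h1])
    obtain ⟨x, y, hxy, hF⟩ := exists_aeval_algebraicClosure_eq_zero hd φ.homF
    have hG := hprop x y
    rw [hF, mul_zero, zero_eq_mul, map_eq_zero] at hG
    exact hxy (φ.coprime x y hF (hG.resolve_left h2))
  · obtain ⟨x, y, hxy, hG⟩ := exists_aeval_algebraicClosure_eq_zero hd φ.homG
    have hF := hprop x y
    rw [hG, mul_zero, mul_eq_zero, map_eq_zero] at hF
    exact hxy (φ.coprime x y (hF.resolve_left h1) hG)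

lemma eval_rep_fiberForm_eq_zero (φ : P1Map K d) (R : P1 K) :
    eval R.rep (fiberForm φ (φ.toFun R).rep) = 0 := by
  obtain ⟨a, -, ha⟩ := φ.exists_smul_evalPair_rep R
  rw [← ha, fiberForm, map_sub, map_mul, map_mul, eval_C, eval_C]
  change a * eval R.rep φ.G * eval R.rep φ.F - a * eval R.rep φ.F * eval R.rep φ.G = 0
  ring

theorem P1Map.encard_fiber_le [Infinite K] (φ : P1Map K d) (hd : d ≠ 0) (Q : P1 K) :
    {R | φ.toFun R = Q}.encard ≤ d := by
  have hH := isHomogeneous_fiberForm φ Q.rep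
  obtain ⟨p, hp⟩ : ∃ p, eval p (fiberForm φ Q.rep) ≠ 0 := by
    by_contra! h
    exact fiberForm_ne_zero φ hd Q.rep_nonzero (hH.eq_zero_of_forall_eval_eq_zero h)
  have hp0 : p ≠ 0 := by
    rintro rfl
    have h := eval_smul_of_isHomogeneous hH 0 0
    rw [smul_zero, zero_pow hd, zero_mul] at h
    exact hp h
  refine (Set.encard_le_encard ?_).trans (encard_setOf_eval_rep_eq_zero_le hH hp0 hp)
  rintro R rfl
  exact eval_rep_fiberForm_eq_zero φ R

lemma P1Map.encard_fiber_sdiff_le [Infinite K] (φ : P1Map K d) (hd : d ≠ 0) {P : P1 K}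
    (hP : φ.toFun P = P) : ({R | φ.toFun R = P} \ {P}).encard ≤ (d - 1 : ℕ) := by
  have hmem : P ∈ {R | φ.toFun R = P} := hP
  rw [Set.encard_sdiff_singleton_of_mem hmem, ENat.natCast_sub, Nat.cast_one]
  exact tsub_le_tsub_right (φ.encard_fiber_le hd P) 1

end Fiber

/-! ### Counting the tail -/

section Encard

variable {X Y : Type*}

lemma encard_le_of_forall_finset_card_le {U : Set X} {N : ℕ}
    (h : ∀ S : Finset X, (S : Set X) ⊆ U → S.card ≤ N) : U.encard ≤ N := by
  by_contra! hU
  obtain ⟨t, htU, ht⟩ := Set.exists_subset_encard_eq (Order.add_one_le_of_lt hU)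
  have htfin : t.Finite := Set.finite_of_encard_eq_coe (k := N + 1) ht
  have hcard := h htfin.toFinset (by rwa [htfin.coe_toFinset])
  rw [htfin.encard_eq_coe_toFinset_card] at ht
  exact hcard.not_gt (by exact_mod_cast ht.ge)

lemma encard_biUnion_le_mul {s : Set X} {t : X → Set Y} {a b : ℕ} (hs : s.encard ≤ a)
    (ht : ∀ x ∈ s, (t x).encard ≤ b) : (⋃ x ∈ s, t x).encard ≤ a * b := by
  have hfin := Set.finite_of_encard_le_coe hs
  have hcard : (hfin.toFinset.card : ℕ∞) ≤ a := by
    rwa [← hfin.encard_eq_coe_toFinset_card]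
  calc (⋃ x ∈ s, t x).encard
    _ = (⋃ x ∈ hfin.toFinset, t x).encard := by simp only [Set.Finite.mem_toFinset]
    _ ≤ ∑ x ∈ hfin.toFinset, (t x).encard := Finset.set_encard_biUnion_le _ _
    _ ≤ hfin.toFinset.card • (b : ℕ∞) :=
      Finset.sum_le_card_nsmul _ _ _ fun x hx => ht x (hfin.mem_toFinset.1 hx)
    _ ≤ a * b := by
      rw [nsmul_eq_mul]
      gcongr

end Encard

section BackwardOrbit

variable {X : Type*}

/-- The backward orbit of `Q` under `g`: the points whose forward orbit, starting with the point
itself, meets `Q`. -/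
def backwardOrbit (g : X → X) (Q : X) : Set X :=
  {R | ∃ m, g^[m] R = Q}

lemma backwardOrbit_subset_insert_iUnion (g : X → X) (Q : X) :
    backwardOrbit g Q ⊆ insert Q (⋃ R ∈ {R | g R = Q}, backwardOrbit g R) := by
  rintro R ⟨m | m, hm⟩
  · exact Or.inl hm
  · rw [Function.iterate_succ_apply'] at hm
    exact Or.inr (Set.mem_biUnion hm ⟨m, rfl⟩)

lemma backwardOrbit_sdiff_subset_iUnion (g : X → X) (P : X) :
    backwardOrbit g P \ {P} ⊆ ⋃ R ∈ {R | g R = P} \ {P}, backwardOrbit g R := by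
  rintro R ⟨⟨m, hm⟩, hRP⟩
  induction m with
  | zero => exact absurd hm hRP
  | succ m ih =>
    by_cases hR : g^[m] R = P
    · exact ih hR
    · rw [Function.iterate_succ_apply'] at hm
      exact Set.mem_biUnion (show g^[m] R ∈ _ from ⟨hm, hR⟩) ⟨m, rfl⟩

end BackwardOrbit

section Tail

lemma tailOf_subset_backwardOrbit_sdiff {K : Type*} [Field K] {d : ℕ} {φ : P1Map K d}
    {P : P1 K} (hP : φ.toFun P = P) : TailOf φ P ⊆ backwardOrbit φ.toFun P \ {P} := by
  rintro Q ⟨hper, horbit⟩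
  refine ⟨horbit, ?_⟩
  rintro rfl
  exact hper ⟨1, one_pos, hP⟩

variable {K : Type*} [Field K] [NumberField K] {T : Finset (HeightOneSpectrum (𝓞 K))} {d : ℕ}
  {φ : P1Map K d} {P Q Q₁ Q₂ : P1 K}

theorem encard_backwardOrbit_sdiff_le_Bconst (hφ : GoodReductionOutside φ T)
    (hP : φ.toFun P = P) (hQ₁ : φ.toFun Q₁ = P) (hne : Q₁ ≠ P) (hQ₂ : φ.toFun Q₂ = Q₁) :
    (backwardOrbit φ.toFun Q₂ \ {Q₂}).encard ≤ Bconst (sCard K T) := by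
  have h₁₂ : Q₁ ≠ Q₂ := by
    rintro rfl
    exact hne (hQ₂.symm.trans hQ₁)
  have hP₂ : P ≠ Q₂ := by
    rintro rfl
    exact hne (hQ₂.symm.trans hP)
  have hreach {R m} (hm : φ.toFun^[m] R = Q₂) : φ.toFun^[m + 1] R = Q₁ := by
    rw [Function.iterate_succ_apply', hm, hQ₂]
  refine encard_le_of_forall_finset_card_le fun S hS =>
    card_le_Bconst_of_projDist_eq hne.symm hP₂ h₁₂ ?_ ?_ (fun R hR => (hS hR).2) ?_ ?_
  · rintro R hR rfl
    obtain ⟨⟨m, hm⟩, -⟩ := hS hR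
    exact hP₂ ((Function.iterate_fixed hP m).symm.trans hm)
  · rintro R hR rfl
    obtain ⟨⟨m, hm⟩, -⟩ := hS hR
    exact hne (eq_of_iterate_eq_self (n := 1) hP hQ₁ m.succ_ne_zero (hreach hm))
  · intro v hv R hR
    obtain ⟨⟨m, hm⟩, -⟩ := hS hR
    exact (hφ v hv).projDist_eq_of_iterate_eq (n := 1) hP m.succ_ne_zero (hreach hm) hQ₁
  · intro v hv R hR
    obtain ⟨⟨m, hm⟩, hR₂⟩ := hS hR
    have hm0 : m ≠ 0 := by
      rintro rfl
      exact hR₂ hm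
    exact (hφ v hv).projDist_eq_of_iterate_eq (n := 2) hP hm0 hm
      ((congrArg φ.toFun hQ₂).trans hQ₁)

theorem encard_backwardOrbit_le (hd : d ≠ 0) (hφ : GoodReductionOutside φ T)
    (hP : φ.toFun P = P) (hQ : φ.toFun Q = P) (hne : Q ≠ P) :
    (backwardOrbit φ.toFun Q).encard ≤ (1 + d * (1 + Bconst (sCard K T)) : ℕ) := by
  have hsecond (R) (hR : φ.toFun R = Q) :
      (backwardOrbit φ.toFun R).encard ≤ (1 + Bconst (sCard K T) : ℕ) := by
    rw [Nat.cast_add, add_comm, Nat.cast_one, ← Set.encard_singleton R]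
    exact (Set.encard_le_encard_sdiff_add_encard _ _).trans
      (add_le_add_left (encard_backwardOrbit_sdiff_le_Bconst hφ hP hQ hne hR) _)
  calc (backwardOrbit φ.toFun Q).encard
    _ ≤ (⋃ R ∈ {R | φ.toFun R = Q}, backwardOrbit φ.toFun R).encard + 1 :=
      (Set.encard_le_encard (backwardOrbit_subset_insert_iUnion _ _)).trans
        (Set.encard_insert_le _ _)
    _ ≤ d * (1 + Bconst (sCard K T) : ℕ) + 1 := by
      gcongr
      exact encard_biUnion_le_mul (φ.encard_fiber_le hd Q) hsecond
    _ = (1 + d * (1 + Bconst (sCard K T)) : ℕ) := by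
      push_cast
      rw [add_comm]

end Tail

/-- **Lemma (tail of a fixed point).** If `P ∈ ℙ¹(K)` is a fixed point of `φ`, then
`|Tail(φ,K,P)| ≤ L₁(d,|S|) = (d-1)(1 + d(1 + B(|S|)))`. -/
theorem tailOf_fixed_point_bound
    {K : Type*} [Field K] [NumberField K]
    (T : Finset (HeightOneSpectrum (𝓞 K))) {d : ℕ} (hd : 2 ≤ d)
    (φ : P1Map K d) (hgr : GoodReductionOutside φ T)
    (P : P1 K) (hfix : φ.toFun P = P) :
    (TailOf φ P).Finite ∧ (TailOf φ P).ncard ≤ L1const d (sCard K T) := by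
  have hd0 : d ≠ 0 := by lia
  rw [← Set.encard_le_coe_iff_finite_ncard_le, L1const, Nat.cast_mul]
  calc (TailOf φ P).encard
    _ ≤ (⋃ Q ∈ {R | φ.toFun R = P} \ {P}, backwardOrbit φ.toFun Q).encard :=
      Set.encard_le_encard ((tailOf_subset_backwardOrbit_sdiff hfix).trans
        (backwardOrbit_sdiff_subset_iUnion _ P))
    _ ≤ (d - 1 : ℕ) * (1 + d * (1 + Bconst (sCard K T)) : ℕ) :=
      encard_biUnion_le_mul (φ.encard_fiber_sdiff_le hd0 hfix) fun Q hQ =>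
        encard_backwardOrbit_le hd0 hgr hfix hQ.1 hQ.2
end
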